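/- Suppose σ_n → ∞. Then for every 1 ≤ s < ∞ there is a constant C_s such that for all n, sup_{t∈ℝ} (1 + |t|^s) |F_n(t) − Φ(t)| ≤ C_s σ_n^{−1}. -/

import Mathlib

open MeasureTheory ProbabilityTheory Filter
open scoped ENNReal NNReal

noncomputable section

variable {Ω : Type*} [MeasurableSpace Ω] {𝒳 : ℕ → Type*} [∀ j, MeasurableSpace (𝒳 j)]

/-- The σ-algebra generated by `X_0, …, X_j`. -/
def pastSigma (X : ∀ j, Ω → 𝒳 j) (j : ℕ) : MeasurableSpace Ω :=
  ⨆ i ∈ Finset.range (j + 1), MeasurableSpace.comap (X i) inferInstance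

/-- `X` is an inhomogeneous Markov chain (on the probability space `(Ω, μ)`) whose `n`-step
transition probabilities from time `j` are given by the Markov kernels `κ j n`: for every
measurable `Γ`, `ℙ(X_{j+n} ∈ Γ | X_0, …, X_j) = (κ j n) (X j) Γ` a.s. -/
structure IsInhomMarkov (μ : Measure Ω) (X : ∀ j, Ω → 𝒳 j)
    (κ : ∀ j n, Kernel (𝒳 j) (𝒳 (j + n))) : Prop where
  meas : ∀ j, Measurable (X j)
  isMarkovKernel : ∀ j n, IsMarkovKernel (κ j n)
  cond : ∀ j n (Γ : Set (𝒳 (j + n))), MeasurableSet Γ →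
    (μ[(fun ω => Γ.indicator (fun _ => (1 : ℝ)) (X (j + n) ω)) | pastSigma X j])
      =ᵐ[μ] fun ω => (κ j n (X j ω) Γ).toReal

/-- The standard normal distribution function `Φ`. -/
def stdNormalCDF (t : ℝ) : ℝ := (gaussianReal 0 1 (Set.Iic t)).toReal

/-!
Under the Doeblin condition the complex moment generating function of a block sum is, for small
`|z|`, multiplicative over consecutive blocks up to a bounded relative error: the weighted transfer
operators are close to Markov operators, which contract to rank one. Cutting a long sum into blocks
of bounded variance therefore gives, on a disc whose radius does not depend on `n`, a holomorphic
logarithm `Λ` of the moment generating function of `S_n - E S_n` with `|Λ| ≲ 1 + σ_n ^ 2`. The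
Schwarz lemma turns this into `|Λ (w / σ_n) - w ^ 2 / 2| ≲ |w| ^ 3 / σ_n` on a disc of radius
comparable to `σ_n`. This disc contains shifted segments `θ + i u`, so Esseen's smoothing inequality
applies to the exponentially tilted laws as well; undoing the tilt yields
`|F_n t - Φ t| ≲ exp (-a |t|) / σ_n` for every `a`, which beats all polynomial weights.
-/

namespace BerryEsseen

open Set Topology

section FejerKernel

/-- The Fejér kernel `2 (1 - cos y) / y ^ 2`, written with `sinc` so that its value at `0` is
`1`. -/
def fejerKernel (y : ℝ) : ℝ := Real.sinc (y / 2) ^ 2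

lemma continuous_fejerKernel : Continuous fejerKernel :=
  (Real.continuous_sinc.comp (by fun_prop)).pow 2

lemma fejerKernel_nonneg (y : ℝ) : 0 ≤ fejerKernel y := sq_nonneg _

lemma fejerKernel_of_ne_zero {y : ℝ} (hy : y ≠ 0) :
    fejerKernel y = 2 * (1 - Real.cos y) / y ^ 2 := by
  have hcos : Real.cos y = 1 - 2 * Real.sin (y / 2) ^ 2 := by
    rw [Real.sin_sq_eq_half_sub, mul_div_cancel₀ _ two_ne_zero]
    ring
  rw [fejerKernel, Real.sinc_of_ne_zero (by simpa using hy), hcos]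
  field_simp
  ring

lemma fejerKernel_le (y : ℝ) : fejerKernel y ≤ 5 * (1 + y ^ 2)⁻¹ := by
  rw [← div_eq_mul_inv, le_div_iff₀ (by positivity)]
  rcases eq_or_ne y 0 with rfl | hy
  · simp [fejerKernel]
  · have hy2 : 0 < y ^ 2 := by positivity
    rw [fejerKernel_of_ne_zero hy, div_mul_eq_mul_div, div_le_iff₀ hy2]
    nlinarith [Real.one_sub_sq_div_two_le_cos (x := y), Real.neg_one_le_cos y]

lemma integrable_fejerKernel : Integrable fejerKernel :=
  (integrable_inv_one_add_sq.const_mul 5).mono' continuous_fejerKernel.aestronglyMeasurable <|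
    .of_forall fun y ↦ by
      rw [Real.norm_of_nonneg (fejerKernel_nonneg y)]
      exact fejerKernel_le y

lemma integral_fejerKernel_pos : 0 < ∫ y, fejerKernel y :=
  integral_pos_of_integrable_nonneg_nonzero (x := 0) continuous_fejerKernel integrable_fejerKernel
    fejerKernel_nonneg (by simp [fejerKernel])

lemma integral_one_sub_mul_cos {y : ℝ} (hy : y ≠ 0) :
    ∫ u in (0 : ℝ)..1, (1 - u) * Real.cos (u * y) = (1 - Real.cos y) / y ^ 2 := by
  rw [intervalIntegral.integral_eq_sub_of_hasDerivAt
    (f := fun u ↦ (1 - u) * (Real.sin (u * y) / y) - Real.cos (u * y) / y ^ 2) _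
    (Continuous.intervalIntegrable (by fun_prop) _ _)]
  · simp
    field_simp
    ring
  · intro u _
    have hmul : HasDerivAt (fun u : ℝ ↦ u * y) y u := by
      simpa using (hasDerivAt_id u).mul_const y
    have hsin := ((hasDerivAt_const u (1 : ℝ)).sub (hasDerivAt_id u)).mul (hmul.sin.div_const y)
    refine (hsin.sub (hmul.cos.div_const (y ^ 2))).congr_deriv ?_
    simp
    field_simp
    ring

/-- The Fejér kernel has the compactly supported Fourier transform `(1 - |u|)⁺`. -/
lemma fejerKernel_eq_integral (y : ℝ) :
    fejerKernel y = ∫ u in (-1 : ℝ)..1, (1 - |u|) * Real.cos (u * y) := by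
  have hint (a b : ℝ) :
      IntervalIntegrable (fun u : ℝ ↦ (1 - |u|) * Real.cos (u * y)) volume a b :=
    Continuous.intervalIntegrable (by fun_prop) _ _
  have hneg : ∫ u in (-1 : ℝ)..0, (1 - |u|) * Real.cos (u * y)
      = ∫ u in (0 : ℝ)..1, (1 - |u|) * Real.cos (u * y) := by
    rw [← neg_zero, ← intervalIntegral.integral_comp_neg]
    simp
  have hpos : ∫ u in (0 : ℝ)..1, (1 - |u|) * Real.cos (u * y)
      = ∫ u in (0 : ℝ)..1, (1 - u) * Real.cos (u * y) := by
    refine intervalIntegral.integral_congr fun u hu ↦ ?_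
    rw [uIcc_of_le zero_le_one] at hu
    simp [abs_of_nonneg hu.1]
  rw [← intervalIntegral.integral_add_adjacent_intervals (hint (-1) 0) (hint 0 1), hneg, hpos]
  rcases eq_or_ne y 0 with rfl | hy
  · simp only [mul_zero, Real.cos_zero, mul_one]
    rw [intervalIntegral.integral_sub (by simp) (by simp)]
    norm_num [fejerKernel]
  · rw [integral_one_sub_mul_cos hy, fejerKernel_of_ne_zero hy]
    ring

lemma re_charFun (ρ : Measure ℝ) [IsFiniteMeasure ρ] (u : ℝ) :
    (charFun ρ u).re = ∫ y, Real.cos (u * y) ∂ρ := by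
  have hre (y : ℝ) : (Complex.exp (u * y * Complex.I)).re = Real.cos (u * y) := by
    rw [← Complex.ofReal_mul, Complex.exp_ofReal_mul_I_re]
  have hnorm (y : ℝ) : ‖Complex.exp (u * y * Complex.I)‖ ≤ 1 := by
    rw [← Complex.ofReal_mul, Complex.norm_exp_ofReal_mul_I]
  have hint : Integrable (fun y : ℝ ↦ Complex.exp (u * y * Complex.I)) ρ :=
    .of_bound (Continuous.aestronglyMeasurable (by fun_prop)) 1 (.of_forall hnorm)
  have := integral_re hint
  simp only [RCLike.re_to_complex, hre] at this
  rw [charFun_apply_real, this]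

lemma integral_fejerKernel_eq_charFun (ρ : Measure ℝ) [IsFiniteMeasure ρ] :
    ∫ y, fejerKernel y ∂ρ = ∫ u in Ioc (-1 : ℝ) 1, (1 - |u|) * (charFun ρ u).re := by
  simp only [fejerKernel_eq_integral, re_charFun, ← integral_const_mul,
    intervalIntegral.integral_of_le (show (-1 : ℝ) ≤ 1 by norm_num)]
  refine integral_integral_swap ?_
  have hbound : Integrable (fun p : ℝ × ℝ ↦ ‖1 - |p.2|‖)
      (ρ.prod (volume.restrict (Ioc (-1 : ℝ) 1))) :=
    Integrable.comp_snd (f := fun u : ℝ ↦ ‖1 - |u|‖)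
      ((Continuous.integrableOn_Icc (by fun_prop)).mono_set Ioc_subset_Icc_self) ρ
  refine hbound.mono' (Continuous.aestronglyMeasurable (by unfold Function.uncurry; fun_prop))
    (.of_forall fun p ↦ ?_)
  rw [Function.uncurry, norm_mul]
  exact mul_le_of_le_one_right (norm_nonneg _) (Real.abs_cos_le_one _)

lemma abs_mul_norm_charFun_restrict_Ioc_le (a x u : ℝ) :
    |u| * ‖charFun (volume.restrict (Ioc a x)) u‖ ≤ 2 := by
  rcases eq_or_ne u 0 with rfl | hu
  · simp
  rcases lt_or_ge x a with hxa | hax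
  · simp [Ioc_eq_empty hxa.not_gt, charFun_apply]
  have hc : (u * Complex.I : ℂ) ≠ 0 := by simp [hu]
  have hcomm (y : ℝ) : (u * y * Complex.I : ℂ) = u * Complex.I * y := by ring
  have hnorm (y : ℝ) : ‖Complex.exp (u * Complex.I * y)‖ = 1 := by
    rw [← hcomm, ← Complex.ofReal_mul, Complex.norm_exp_ofReal_mul_I]
  simp_rw [charFun_apply_real, hcomm]
  rw [← intervalIntegral.integral_of_le hax, integral_exp_mul_complex hc, norm_div,
    show ‖(u * Complex.I : ℂ)‖ = |u| by simp, mul_div_cancel₀ _ (abs_ne_zero.2 hu)]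
  refine (norm_sub_le _ _).trans ?_
  rw [hnorm, hnorm]
  norm_num

/-- The law of `Y - W`, for `W` with law `P` and an independent `Y` uniform on the window
`(a, x]` (unnormalised). Testing it against the Fejér kernel smooths the distribution function
of `P`. -/
def windowLaw (P : Measure ℝ) (a x : ℝ) : Measure ℝ :=
  P.map Neg.neg ∗ volume.restrict (Ioc a x)

instance (P : Measure ℝ) [IsFiniteMeasure P] (a x : ℝ) : IsFiniteMeasure (windowLaw P a x) := by
  unfold windowLaw
  infer_instance

lemma charFun_windowLaw (P : Measure ℝ) [IsFiniteMeasure P] (a x u : ℝ) :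
    charFun (windowLaw P a x) u
      = (starRingEnd ℂ) (charFun P u) * charFun (volume.restrict (Ioc a x)) u := by
  have hneg : charFun (P.map Neg.neg) u = charFun P (-u) := by
    simpa using charFun_map_mul (μ := P) (-1) u
  rw [windowLaw, charFun_conv, hneg, charFun_neg]

lemma integrable_fejerKernel_mul {g : ℝ → ℝ} (hg : Measurable g) {M : ℝ} (hb : ∀ v, |g v| ≤ M) :
    Integrable fun v ↦ fejerKernel v * g v :=
  integrable_fejerKernel.mul_bdd (c := M) hg.aestronglyMeasurable (.of_forall hb)

lemma integral_fejerKernel_windowLaw (P : Measure ℝ) [IsFiniteMeasure P] (a x : ℝ) :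
    ∫ y, fejerKernel y ∂(windowLaw P a x) = ∫ v, fejerKernel v * P.real (Ioc (a - v) (x - v)) := by
  have hswap (w : ℝ) : ∫ y in Ioc a x, fejerKernel (-w + y)
      = ∫ v, fejerKernel v * (Ioc (a - v) (x - v)).indicator (fun _ ↦ (1 : ℝ)) w := by
    rw [← integral_indicator measurableSet_Ioc, ← integral_add_right_eq_self _ w]
    refine integral_congr_ae (.of_forall fun v ↦ ?_)
    simp [indicator, sub_lt_iff_lt_add', le_sub_iff_add_le']
  have hint : Integrable
      (Function.uncurry fun w v ↦
        fejerKernel v * (Ioc (a - v) (x - v)).indicator (fun _ ↦ (1 : ℝ)) w) (P.prod volume) := by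
    have hind : Measurable fun p : ℝ × ℝ ↦
        (Ioc (a - p.2) (x - p.2)).indicator (fun _ ↦ (1 : ℝ)) p.1 :=
      measurable_const.indicator
        (s := {p : ℝ × ℝ | a - p.2 < p.1} ∩ {p : ℝ × ℝ | p.1 ≤ x - p.2}) <|
        (measurableSet_lt (by fun_prop) (by fun_prop)).inter
          (measurableSet_le (by fun_prop) (by fun_prop))
    refine (integrable_fejerKernel.comp_snd P).mul_bdd (c := 1) hind.aestronglyMeasurable
      (.of_forall fun p ↦ ?_)
    simp only [indicator]
    split_ifs <;> simp
  have hfin : Integrable fejerKernel (windowLaw P a x) := by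
    refine .of_bound continuous_fejerKernel.aestronglyMeasurable 1 (.of_forall fun y ↦ ?_)
    rw [Real.norm_of_nonneg (fejerKernel_nonneg y), fejerKernel, sq_le_one_iff_abs_le_one]
    exact Real.abs_sinc_le_one _
  have hneg : P.map Neg.neg = P.map (MeasurableEquiv.neg ℝ) := rfl
  rw [windowLaw, integral_conv hfin, hneg, integral_map_equiv]
  simp only [MeasurableEquiv.neg_apply, hswap]
  rw [integral_integral_swap hint]
  refine integral_congr_ae (.of_forall fun v ↦ ?_)
  simp [integral_const_mul, integral_indicator_const _ measurableSet_Ioc]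

end FejerKernel

section Smoothing

/-- The convolution of the distribution function of `P` with the (unnormalised) Fejér kernel. -/
def smoothedCDF (P : Measure ℝ) (x : ℝ) : ℝ := ∫ v, fejerKernel v * cdf P (x - v)

lemma abs_cdf_le_one (P : Measure ℝ) (x : ℝ) : |cdf P x| ≤ 1 := by
  rw [abs_of_nonneg (cdf_nonneg P x)]
  exact cdf_le_one P x

lemma measurable_cdf_const_sub (P : Measure ℝ) (x : ℝ) : Measurable fun v ↦ cdf P (x - v) :=
  (monotone_cdf P).measurable.comp (measurable_const.sub measurable_id)

lemma integrable_fejerKernel_mul_cdf (P : Measure ℝ) (x : ℝ) :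
    Integrable fun v ↦ fejerKernel v * cdf P (x - v) :=
  integrable_fejerKernel_mul (measurable_cdf_const_sub P x) fun _ ↦ abs_cdf_le_one P _

lemma smoothedCDF_sub_smoothedCDF (P : Measure ℝ) [IsProbabilityMeasure P] {a x : ℝ}
    (hax : a ≤ x) :
    smoothedCDF P x - smoothedCDF P a = ∫ y, fejerKernel y ∂(windowLaw P a x) := by
  rw [integral_fejerKernel_windowLaw, smoothedCDF, smoothedCDF,
    ← integral_sub (integrable_fejerKernel_mul_cdf P x) (integrable_fejerKernel_mul_cdf P a)]
  refine integral_congr_ae (.of_forall fun v ↦ ?_)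
  have hle : Iic (a - v) ⊆ Iic (x - v) := Iic_subset_Iic.2 (by linarith)
  simp only
  rw [← mul_sub, cdf_eq_real, cdf_eq_real, ← measureReal_sdiff hle measurableSet_Iic, Iic_sdiff_Iic]

lemma tendsto_smoothedCDF_atBot (P : Measure ℝ) : Tendsto (smoothedCDF P) atBot (𝓝 0) := by
  rw [show (0 : ℝ) = ∫ v : ℝ, fejerKernel v * 0 by simp]
  refine tendsto_integral_filter_of_dominated_convergence fejerKernel
    (.of_forall fun a ↦ (integrable_fejerKernel_mul_cdf P a).aestronglyMeasurable)
    (.of_forall fun a ↦ .of_forall fun v ↦ ?_) integrable_fejerKernel (.of_forall fun v ↦ ?_)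
  · rw [norm_mul, Real.norm_of_nonneg (fejerKernel_nonneg v)]
    exact mul_le_of_le_one_right (fejerKernel_nonneg v) (abs_cdf_le_one P _)
  · exact ((tendsto_cdf_atBot P).comp
      (tendsto_atBot_add_const_right atBot (-v) tendsto_id)).const_mul _

section

variable {P Q : Measure ℝ} [IsProbabilityMeasure P] [IsProbabilityMeasure Q]

/-- Only `charFun` on `[-1, 1]` enters because the Fejér kernel is band-limited; the factor `|u|`
is what integrating over the window `(a, x]` gains. -/
lemma abs_integral_fejerKernel_windowLaw_sub_le {B : ℝ → ℝ} (hB : Integrable B)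
    (hB₀ : ∀ u, 0 ≤ B u) (h : ∀ u, |u| ≤ 1 → ‖charFun P u - charFun Q u‖ ≤ |u| * B u)
    (a x : ℝ) :
    |(∫ y, fejerKernel y ∂(windowLaw P a x)) - ∫ y, fejerKernel y ∂(windowLaw Q a x)|
      ≤ 2 * ∫ u, B u := by
  have hint (R : Measure ℝ) [IsProbabilityMeasure R] :
      IntegrableOn (fun u : ℝ ↦ (1 - |u|) * (charFun (windowLaw R a x) u).re) (Ioc (-1) 1) := by
    refine (Continuous.integrableOn_Icc ?_).mono_set Ioc_subset_Icc_self
    exact (by fun_prop : Continuous fun u : ℝ ↦ 1 - |u|).mul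
      (Complex.continuous_re.comp continuous_charFun)
  rw [integral_fejerKernel_eq_charFun, integral_fejerKernel_eq_charFun,
    ← integral_sub (hint P) (hint Q), ← Real.norm_eq_abs, ← integral_const_mul]
  refine (norm_integral_le_of_norm_le (hB.const_mul 2).integrableOn ?_).trans
    (setIntegral_le_integral (hB.const_mul 2) (.of_forall fun u ↦ by have := hB₀ u; positivity))
  filter_upwards [ae_restrict_mem measurableSet_Ioc] with u hu
  have hu1 : |u| ≤ 1 := abs_le.2 ⟨hu.1.le, hu.2⟩
  have hweight : ‖1 - |u|‖ ≤ 1 := by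
    rw [Real.norm_eq_abs, abs_le]
    constructor <;> linarith [abs_nonneg u]
  rw [← mul_sub, ← Complex.sub_re, norm_mul, charFun_windowLaw, charFun_windowLaw, ← sub_mul,
    ← map_sub]
  set E := charFun (volume.restrict (Ioc a x)) u
  calc ‖1 - |u|‖ * ‖((starRingEnd ℂ) (charFun P u - charFun Q u) * E).re‖
      ≤ 1 * (‖charFun P u - charFun Q u‖ * ‖E‖) := by
        gcongr
        refine (Complex.abs_re_le_norm _).trans ?_
        rw [norm_mul, RCLike.norm_conj]
    _ ≤ |u| * B u * ‖E‖ := by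
        rw [one_mul]
        gcongr
        exact h u hu1
    _ = |u| * ‖E‖ * B u := by ring
    _ ≤ 2 * B u :=
        mul_le_mul_of_nonneg_right (abs_mul_norm_charFun_restrict_Ioc_le a x u) (hB₀ u)

lemma abs_smoothedCDF_sub_le {B : ℝ → ℝ} (hB : Integrable B) (hB₀ : ∀ u, 0 ≤ B u)
    (h : ∀ u, |u| ≤ 1 → ‖charFun P u - charFun Q u‖ ≤ |u| * B u) (x : ℝ) :
    |smoothedCDF P x - smoothedCDF Q x| ≤ 2 * ∫ u, B u := by
  have hlim : Tendsto (fun a ↦ |smoothedCDF P x - smoothedCDF P a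
      - (smoothedCDF Q x - smoothedCDF Q a)|) atBot (𝓝 |smoothedCDF P x - smoothedCDF Q x|) := by
    simpa using (((tendsto_smoothedCDF_atBot P).const_sub (smoothedCDF P x)).sub
      ((tendsto_smoothedCDF_atBot Q).const_sub (smoothedCDF Q x))).abs
  refine le_of_tendsto hlim ?_
  filter_upwards [eventually_le_atBot x] with a hax
  rw [smoothedCDF_sub_smoothedCDF P hax, smoothedCDF_sub_smoothedCDF Q hax]
  exact abs_integral_fejerKernel_windowLaw_sub_le hB hB₀ h a x

end

lemma exists_setIntegral_fejerKernel_compl_le {ε : ℝ} (hε : 0 < ε) :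
    ∃ A > 0, ∫ v in (Icc (-A) A)ᶜ, fejerKernel v ≤ ε := by
  have hlim : Tendsto (fun A : ℝ ↦ ∫ v in Icc (-A) A, fejerKernel v) atTop
      (𝓝 (∫ v, fejerKernel v)) :=
    (aecover_Icc tendsto_neg_atTop_atBot tendsto_id).integral_tendsto_of_countably_generated
      integrable_fejerKernel
  obtain ⟨A, hA, hA₀⟩ := ((hlim.eventually (eventually_gt_nhds (sub_lt_self _ hε))).and
    (eventually_gt_atTop 0)).exists
  refine ⟨A, hA₀, ?_⟩
  linarith [integral_add_compl (measurableSet_Icc (a := -A) (b := A)) integrable_fejerKernel]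

lemma le_integral_fejerKernel_mul {D : ℝ → ℝ} (hD : Measurable D) {A c M : ℝ}
    (hM : ∀ v, |D v| ≤ M) (hc : ∀ v ∈ Icc (-A) A, c ≤ D v) (hcM : c ≤ M) :
    (∫ v, fejerKernel v) * c - 2 * M * ∫ v in (Icc (-A) A)ᶜ, fejerKernel v
      ≤ ∫ v, fejerKernel v * D v := by
  have hcompl : MeasurableSet (Icc (-A) A)ᶜ := measurableSet_Icc.compl
  have hind := integrable_fejerKernel.indicator hcompl
  rw [← integral_indicator hcompl, ← integral_mul_const, ← integral_const_mul,
    ← integral_sub (integrable_fejerKernel.mul_const c) (hind.const_mul _)]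
  refine integral_mono ((integrable_fejerKernel.mul_const c).sub (hind.const_mul _))
    (integrable_fejerKernel_mul hD hM) fun v ↦ ?_
  have hk := fejerKernel_nonneg v
  by_cases hv : v ∈ Icc (-A) A
  · simpa [hv] using mul_le_mul_of_nonneg_left (hc v hv) hk
  · have hDv := (abs_le.1 (hM v)).1
    simp only [mem_compl_iff, hv, not_false_eq_true, indicator_of_mem]
    nlinarith

/-- The extremal value of `D = F_P - F_Q` persists, up to `2 A L`, on a window of width `2 A` to
one side of the point `x` where it is attained, by monotonicity of `F_P` and the Lipschitz bound on
`F_Q`; the smoothed difference sees this window. -/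
lemma abs_cdf_sub_cdf_le_of_abs_smoothedCDF_sub_le {P Q : Measure ℝ} {η L A M : ℝ} (hA : 0 ≤ A)
    (hsmooth : ∀ x, |smoothedCDF P x - smoothedCDF Q x| ≤ η)
    (hLip : ∀ x y, x ≤ y → cdf Q y - cdf Q x ≤ L * (y - x))
    (hM : ∀ x, |cdf P x - cdf Q x| ≤ M) (x : ℝ) :
    (∫ v, fejerKernel v) * (|cdf P x - cdf Q x| - 2 * A * L)
      ≤ η + 2 * M * ∫ v in (Icc (-A) A)ᶜ, fejerKernel v := by
  have hL : 0 ≤ L := by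
    have := hLip 0 1 zero_le_one
    linarith [monotone_cdf Q (zero_le_one' ℝ)]
  have hAL : 0 ≤ 2 * A * L := by positivity
  have hmeas (z : ℝ) : Measurable fun v ↦ cdf P (z - v) - cdf Q (z - v) :=
    (measurable_cdf_const_sub P z).sub (measurable_cdf_const_sub Q z)
  have hint (z : ℝ) : ∫ v, fejerKernel v * (cdf P (z - v) - cdf Q (z - v))
      = smoothedCDF P z - smoothedCDF Q z := by
    simp_rw [mul_sub, smoothedCDF]
    exact integral_sub (integrable_fejerKernel_mul_cdf P z) (integrable_fejerKernel_mul_cdf Q z)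
  rcases abs_cases (cdf P x - cdf Q x) with ⟨habs, -⟩ | ⟨habs, -⟩
  · have hwindow : ∀ v ∈ Icc (-A) A, |cdf P x - cdf Q x| - 2 * A * L
        ≤ cdf P (x + A - v) - cdf Q (x + A - v) := fun v hv ↦ by
      have hx : x ≤ x + A - v := by linarith [hv.2]
      nlinarith [monotone_cdf P hx, hLip _ _ hx, hv.1]
    have := le_integral_fejerKernel_mul (hmeas (x + A)) (fun v ↦ hM _) hwindow
      (by linarith [hM x])
    rw [hint] at this
    linarith [le_abs_self (smoothedCDF P (x + A) - smoothedCDF Q (x + A)), hsmooth (x + A)]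
  · have hwindow : ∀ v ∈ Icc (-A) A, |cdf P x - cdf Q x| - 2 * A * L
        ≤ -(cdf P (x - A - v) - cdf Q (x - A - v)) := fun v hv ↦ by
      have hx : x - A - v ≤ x := by linarith [hv.1]
      nlinarith [monotone_cdf P hx, hLip _ _ hx, hv.2]
    have := le_integral_fejerKernel_mul (hmeas (x - A)).neg
      (fun v ↦ (abs_neg _).trans_le (hM _)) hwindow (by linarith [hM x])
    simp only [Pi.neg_apply, mul_neg] at this
    rw [integral_neg, hint] at this
    linarith [neg_le_abs (smoothedCDF P (x - A) - smoothedCDF Q (x - A)), hsmooth (x - A)]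

lemma exists_abs_cdf_sub_cdf_le_unitScale :
    ∃ C > 0, ∀ (P Q : Measure ℝ) [IsProbabilityMeasure P] [IsProbabilityMeasure Q] (B : ℝ → ℝ),
      Integrable B → (∀ u, 0 ≤ B u) →
      (∀ u, |u| ≤ 1 → ‖charFun P u - charFun Q u‖ ≤ |u| * B u) → ∀ L : ℝ,
      (∀ x y, x ≤ y → cdf Q y - cdf Q x ≤ L * (y - x)) →
      ∀ x, |cdf P x - cdf Q x| ≤ C * ((∫ u, B u) + L) := by
  have hk : 0 < ∫ v, fejerKernel v := integral_fejerKernel_pos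
  set k := ∫ v, fejerKernel v with hkdef
  obtain ⟨A, hA, htail⟩ := exists_setIntegral_fejerKernel_compl_le (ε := k / 4) (by positivity)
  refine ⟨4 / k + 4 * A, by positivity, fun P Q _ _ B hB hB₀ h L hLip x ↦ ?_⟩
  have hbdd : BddAbove (range fun x ↦ |cdf P x - cdf Q x|) := ⟨1, by
    rintro _ ⟨y, rfl⟩
    exact abs_sub_le_of_nonneg_of_le (cdf_nonneg _ _) (cdf_le_one _ _) (cdf_nonneg _ _)
      (cdf_le_one _ _)⟩
  set M := ⨆ x, |cdf P x - cdf Q x|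
  have hleM (y : ℝ) : |cdf P y - cdf Q y| ≤ M := le_ciSup hbdd y
  have hM : 0 ≤ M := (abs_nonneg _).trans (hleM 0)
  have hI : 0 ≤ ∫ u, B u := integral_nonneg hB₀
  have hL : 0 ≤ L := by
    have := hLip 0 1 zero_le_one
    linarith [monotone_cdf Q (zero_le_one' ℝ)]
  have hself : M ≤ 2 / k * (∫ u, B u) + 2 * A * L + M / 2 := ciSup_le fun y ↦ by
    have := abs_cdf_sub_cdf_le_of_abs_smoothedCDF_sub_le hA.le
      (abs_smoothedCDF_sub_le hB hB₀ h) hLip hleM y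
    rw [← hkdef, mul_comm, ← le_div_iff₀ hk] at this
    have htail' : (2 * (∫ u, B u) + 2 * M * ∫ v in (Icc (-A) A)ᶜ, fejerKernel v) / k
        ≤ (2 * (∫ u, B u) + 2 * M * (k / 4)) / k := by gcongr
    have hsimp : (2 * (∫ u, B u) + 2 * M * (k / 4)) / k = 2 / k * (∫ u, B u) + M / 2 := by
      field_simp
      ring
    linarith
  have : 0 ≤ 4 / k * L := by positivity
  have : 0 ≤ 4 * A * ∫ u, B u := by positivity
  calc |cdf P x - cdf Q x| ≤ M := hleM x
    _ ≤ 4 / k * (∫ u, B u) + 4 * A * L := by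
        linarith [show 4 / k * (∫ u, B u) = 2 * (2 / k * ∫ u, B u) by ring]
    _ ≤ (4 / k + 4 * A) * ((∫ u, B u) + L) := by linarith

lemma cdf_map_const_mul (P : Measure ℝ) [IsProbabilityMeasure P] {T : ℝ} (hT : 0 < T) (y : ℝ) :
    cdf (P.map (T * ·)) y = cdf P (y / T) := by
  have hm : Measurable (T * · : ℝ → ℝ) := measurable_const_mul T
  have : IsProbabilityMeasure (P.map (T * ·)) := Measure.isProbabilityMeasure_map hm.aemeasurable
  rw [cdf_eq_real, cdf_eq_real, map_measureReal_apply hm measurableSet_Iic]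
  congr 1
  ext z
  simp [le_div_iff₀ hT, mul_comm]

/-- **Esseen's smoothing inequality**. -/
theorem exists_abs_cdf_sub_cdf_le :
    ∃ C > 0, ∀ (P Q : Measure ℝ) [IsProbabilityMeasure P] [IsProbabilityMeasure Q] (B : ℝ → ℝ)
      (T : ℝ), 0 < T → Integrable B → (∀ u, 0 ≤ B u) →
      (∀ u, |u| ≤ T → ‖charFun P u - charFun Q u‖ ≤ |u| * B u) → ∀ L : ℝ,
      (∀ x y, x ≤ y → cdf Q y - cdf Q x ≤ L * (y - x)) →
      ∀ x, |cdf P x - cdf Q x| ≤ C * ((∫ u, B u) + L / T) := by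
  obtain ⟨C, hC, h⟩ := exists_abs_cdf_sub_cdf_le_unitScale
  refine ⟨C, hC, fun P Q _ _ B T hT hB hB₀ hchar L hLip x ↦ ?_⟩
  have hm : Measurable (T * · : ℝ → ℝ) := measurable_const_mul T
  have : IsProbabilityMeasure (P.map (T * ·)) := Measure.isProbabilityMeasure_map hm.aemeasurable
  have : IsProbabilityMeasure (Q.map (T * ·)) := Measure.isProbabilityMeasure_map hm.aemeasurable
  have hscaled := h (P.map (T * ·)) (Q.map (T * ·)) (fun u ↦ T * B (T * u))
    ((hB.comp_mul_left' hT.ne').const_mul T) (fun u ↦ mul_nonneg hT.le (hB₀ _)) (fun u hu ↦ ?_)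
    (L / T) (fun y z hyz ↦ ?_) (T * x)
  · rwa [cdf_map_const_mul P hT, cdf_map_const_mul Q hT, mul_div_cancel_left₀ _ hT.ne',
      integral_const_mul, Measure.integral_comp_mul_left, abs_of_pos (inv_pos.2 hT), smul_eq_mul,
      mul_inv_cancel_left₀ hT.ne'] at hscaled
  · rw [charFun_map_mul, charFun_map_mul]
    refine (hchar (T * u) ?_).trans_eq ?_
    · rw [abs_mul, abs_of_pos hT]
      exact mul_le_of_le_one_right hT.le hu
    · rw [abs_mul, abs_of_pos hT]
      ring
  · rw [cdf_map_const_mul Q hT, cdf_map_const_mul Q hT]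
    refine (hLip _ _ (div_le_div_of_nonneg_right hyz hT.le)).trans_eq ?_
    ring

end Smoothing

section Tilting

lemma integral_setIntegral_indicator_mul (P : Measure ℝ) [IsProbabilityMeasure P] {R : Set ℝ}
    {g : ℝ → ℝ} (hg : IntegrableOn g R) {A : Set (ℝ × ℝ)} (hA : MeasurableSet A) :
    ∫ x, (∫ y in R, A.indicator (fun _ ↦ (1 : ℝ)) (x, y) * g y) ∂P
      = ∫ y in R, g y * P.real {x | (x, y) ∈ A} := by
  rw [integral_integral_swap]
  · refine integral_congr_ae (.of_forall fun y ↦ ?_)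
    have hAy : MeasurableSet {x : ℝ | (x, y) ∈ A} := (measurable_id.prodMk measurable_const) hA
    simp only
    rw [integral_mul_const, mul_comm, ← integral_indicator_one hAy]
    rfl
  · have hg' : Integrable (fun p : ℝ × ℝ ↦ g p.2) (P.prod (volume.restrict R)) := by
      simpa using Integrable.comp_snd (μ := P) (ν := volume.restrict R) hg
    refine hg'.bdd_mul (c := 1) (measurable_const.indicator hA).aestronglyMeasurable
      (.of_forall fun p ↦ ?_)
    by_cases hp : p ∈ A <;> simp [hp]

lemma integral_Ioi_mul_exp_neg {a : ℝ} (ha : 0 < a) (t : ℝ) :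
    ∫ y in Ioi t, a * Real.exp (-(a * y)) = Real.exp (-(a * t)) := by
  simp_rw [← neg_mul, integral_const_mul]
  rw [integral_exp_mul_Ioi (neg_neg_of_pos ha)]
  field_simp

lemma integrableOn_Ioi_mul_exp_neg {a : ℝ} (ha : 0 < a) (t : ℝ) :
    IntegrableOn (fun y ↦ a * Real.exp (-(a * y))) (Ioi t) := by
  simp_rw [← neg_mul]
  exact (integrableOn_exp_mul_Ioi (neg_neg_of_pos ha) t).const_mul a

lemma integral_Iic_mul_exp {a : ℝ} (ha : 0 < a) (t : ℝ) :
    ∫ y in Iic t, a * Real.exp (a * y) = Real.exp (a * t) := by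
  rw [integral_const_mul, integral_exp_mul_Iic ha]
  field_simp

lemma integrableOn_Iic_mul_exp {a : ℝ} (ha : 0 < a) (t : ℝ) :
    IntegrableOn (fun y ↦ a * Real.exp (a * y)) (Iic t) :=
  (integrableOn_exp_mul_Iic ha t).const_mul a

lemma setIntegral_Ioi_exp_neg_eq (P : Measure ℝ) [IsProbabilityMeasure P] {a : ℝ} (ha : 0 < a)
    (t : ℝ) : ∫ x in Ioi t, Real.exp (-(a * x)) ∂P
      = ∫ y in Ioi t, a * Real.exp (-(a * y)) * P.real (Ioc t y) := by
  have hA : MeasurableSet {p : ℝ × ℝ | t < p.1 ∧ p.1 ≤ p.2} :=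
    (measurableSet_lt measurable_const measurable_fst).inter
      (measurableSet_le measurable_fst measurable_snd)
  refine Eq.trans ?_
    (integral_setIntegral_indicator_mul P (integrableOn_Ioi_mul_exp_neg ha t) hA)
  rw [← integral_indicator measurableSet_Ioi]
  refine integral_congr_ae (.of_forall fun x ↦ ?_)
  by_cases hx : t < x
  · simp only
    rw [indicator_of_mem (show x ∈ Ioi t from hx), ← integral_Ioi_mul_exp_neg ha x,
      ← integral_Ici_eq_integral_Ioi, ← integral_indicator measurableSet_Ici,
      ← integral_indicator measurableSet_Ioi]
    congr 1 with y
    by_cases hxy : x ≤ y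
    · simp [hx, hxy, hx.trans_le hxy]
    · simp [indicator, hxy]
  · simp [hx]

lemma setIntegral_Iic_exp_eq (P : Measure ℝ) [IsProbabilityMeasure P] {a : ℝ} (ha : 0 < a)
    (t : ℝ) : ∫ x in Iic t, Real.exp (a * x) ∂P
      = ∫ y in Iic t, a * Real.exp (a * y) * P.real (Ioc y t) := by
  have hA : MeasurableSet {p : ℝ × ℝ | p.2 < p.1 ∧ p.1 ≤ t} :=
    (measurableSet_lt measurable_snd measurable_fst).inter
      (measurableSet_le measurable_fst measurable_const)
  refine Eq.trans ?_ (integral_setIntegral_indicator_mul P (integrableOn_Iic_mul_exp ha t) hA)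
  rw [← integral_indicator measurableSet_Iic]
  refine integral_congr_ae (.of_forall fun x ↦ ?_)
  by_cases hx : x ≤ t
  · simp only
    rw [indicator_of_mem (show x ∈ Iic t from hx), ← integral_Iic_mul_exp ha x,
      integral_Iic_eq_integral_Iio, ← integral_indicator measurableSet_Iio,
      ← integral_indicator measurableSet_Iic]
    congr 1 with y
    by_cases hxy : y < x
    · simp [hx, hxy, hxy.le.trans hx]
    · simp [indicator, hxy]
  · simp [hx]

lemma measureReal_eq_mgf_mul_setIntegral_tilted (P : Measure ℝ) [NeZero P] {θ : ℝ}
    (hθ : Integrable (fun x ↦ Real.exp (θ * x)) P) {A : Set ℝ} (hA : MeasurableSet A) :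
    P.real A = mgf id P θ * ∫ x in A, Real.exp (-(θ * x)) ∂(P.tilted (θ * ·)) := by
  have hpos : 0 < mgf id P θ := mgf_pos' (NeZero.ne P) hθ
  have hone (x : ℝ) : mgf id P θ *
      ((Real.exp (θ * x) / ∫ y, Real.exp (θ * y) ∂P) • Real.exp (-(θ * x))) = 1 := by
    change mgf id P θ * (Real.exp (θ * x) / mgf id P θ * Real.exp (-(θ * x))) = 1
    rw [Real.exp_neg]
    field_simp
  rw [setIntegral_tilted' _ _ hA, ← integral_const_mul]
  simp_rw [hone]
  simp

lemma abs_mul_setIntegral_sub_le {R : Set ℝ} (hR : MeasurableSet R) {w p q : ℝ → ℝ}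
    (hw : IntegrableOn w R) (hw₀ : ∀ y, 0 ≤ w y) (hp : Measurable p) (hq : Measurable q)
    (hp₀ : ∀ y, 0 ≤ p y) (hp₁ : ∀ y, p y ≤ 1) (hq₀ : ∀ y, 0 ≤ q y) (hq₁ : ∀ y, q y ≤ 1)
    {D Z Z' δ : ℝ} (hpq : ∀ y ∈ R, |p y - q y| ≤ D) (hZ' : 0 ≤ Z') (hZ : |Z - Z'| ≤ δ) :
    |Z * (∫ y in R, w y * p y) - Z' * ∫ y in R, w y * q y| ≤ (δ + Z' * D) * ∫ y in R, w y := by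
  have hint {v : ℝ → ℝ} (hv : Measurable v) (hv₀ : ∀ y, 0 ≤ v y) (hv₁ : ∀ y, v y ≤ 1) :
      IntegrableOn (fun y ↦ w y * v y) R :=
    Integrable.mul_bdd (c := 1) hw hv.aestronglyMeasurable
      (.of_forall fun y ↦ (Real.norm_of_nonneg (hv₀ y)).trans_le (hv₁ y))
  have hdiff : |(∫ y in R, w y * p y) - ∫ y in R, w y * q y| ≤ D * ∫ y in R, w y := by
    rw [← integral_sub (hint hp hp₀ hp₁) (hint hq hq₀ hq₁), ← integral_const_mul,
      ← Real.norm_eq_abs]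
    refine norm_integral_le_of_norm_le (hw.const_mul D) ?_
    filter_upwards [ae_restrict_mem hR] with y hy
    rw [← mul_sub, norm_mul, Real.norm_of_nonneg (hw₀ y), mul_comm]
    exact mul_le_mul_of_nonneg_right (hpq y hy) (hw₀ y)
  have hle : |∫ y in R, w y * p y| ≤ ∫ y in R, w y := by
    rw [abs_of_nonneg (integral_nonneg fun y ↦ mul_nonneg (hw₀ y) (hp₀ y))]
    exact integral_mono (hint hp hp₀ hp₁) hw fun y ↦
      mul_le_of_le_one_right (hw₀ y) (hp₁ y)
  have hδ : 0 ≤ δ := (abs_nonneg _).trans hZ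
  calc |Z * (∫ y in R, w y * p y) - Z' * ∫ y in R, w y * q y|
      = |(Z - Z') * (∫ y in R, w y * p y)
          + Z' * ((∫ y in R, w y * p y) - ∫ y in R, w y * q y)| := by ring_nf
    _ ≤ δ * (∫ y in R, w y) + Z' * (D * ∫ y in R, w y) := by
        refine (abs_add_le _ _).trans ?_
        rw [abs_mul, abs_mul, abs_of_nonneg hZ']
        gcongr
    _ = (δ + Z' * D) * ∫ y in R, w y := by ring

section

variable {P Q : Measure ℝ} [IsProbabilityMeasure P] [IsProbabilityMeasure Q]

lemma measureReal_Ioc_eq_cdf_sub (P : Measure ℝ) [IsProbabilityMeasure P] {x y : ℝ}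
    (hxy : x ≤ y) : P.real (Ioc x y) = cdf P y - cdf P x := by
  rw [cdf_eq_real, cdf_eq_real, ← Iic_sdiff_Iic,
    measureReal_sdiff (Iic_subset_Iic.2 hxy) measurableSet_Iic]

lemma abs_measureReal_Ioc_sub_le {D : ℝ} (hD : ∀ x, |cdf P x - cdf Q x| ≤ D) {x y : ℝ}
    (hxy : x ≤ y) : |P.real (Ioc x y) - Q.real (Ioc x y)| ≤ 2 * D := by
  rw [measureReal_Ioc_eq_cdf_sub P hxy, measureReal_Ioc_eq_cdf_sub Q hxy, sub_sub_sub_comm]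
  linarith [abs_sub (cdf P y - cdf Q y) (cdf P x - cdf Q x), hD x, hD y]

lemma measurable_measureReal_Ioc_right (P : Measure ℝ) [IsProbabilityMeasure P] (t : ℝ) :
    Measurable fun y ↦ P.real (Ioc t y) :=
  Monotone.measurable fun _ _ h ↦ measureReal_mono (Ioc_subset_Ioc_right h)

lemma measurable_measureReal_Ioc_left (P : Measure ℝ) [IsProbabilityMeasure P] (t : ℝ) :
    Measurable fun y ↦ P.real (Ioc y t) :=
  Antitone.measurable fun _ _ h ↦ measureReal_mono (Ioc_subset_Ioc_left h)

variable {a D δ t : ℝ}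

lemma abs_measureReal_Ioi_sub_le_of_tilted (ha : 0 < a)
    (hP : Integrable (fun x ↦ Real.exp (a * x)) P) (hQ : Integrable (fun x ↦ Real.exp (a * x)) Q)
    (hD : ∀ x, |cdf (P.tilted (a * ·)) x - cdf (Q.tilted (a * ·)) x| ≤ D)
    (hδ : |mgf id P a - mgf id Q a| ≤ δ) :
    |P.real (Ioi t) - Q.real (Ioi t)| ≤ (δ + mgf id Q a * (2 * D)) * Real.exp (-(a * t)) := by
  have := isProbabilityMeasure_tilted hP
  have := isProbabilityMeasure_tilted hQ
  rw [measureReal_eq_mgf_mul_setIntegral_tilted P hP measurableSet_Ioi,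
    measureReal_eq_mgf_mul_setIntegral_tilted Q hQ measurableSet_Ioi,
    setIntegral_Ioi_exp_neg_eq _ ha, setIntegral_Ioi_exp_neg_eq _ ha,
    ← integral_Ioi_mul_exp_neg ha t]
  exact abs_mul_setIntegral_sub_le measurableSet_Ioi (integrableOn_Ioi_mul_exp_neg ha t)
    (fun y ↦ by positivity) (measurable_measureReal_Ioc_right _ t)
    (measurable_measureReal_Ioc_right _ t) (fun _ ↦ measureReal_nonneg) (fun _ ↦ measureReal_le_one)
    (fun _ ↦ measureReal_nonneg) (fun _ ↦ measureReal_le_one)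
    (fun y hy ↦ abs_measureReal_Ioc_sub_le hD (le_of_lt hy)) mgf_nonneg hδ

lemma abs_measureReal_Iic_sub_le_of_tilted (ha : 0 < a)
    (hP : Integrable (fun x ↦ Real.exp (-a * x)) P)
    (hQ : Integrable (fun x ↦ Real.exp (-a * x)) Q)
    (hD : ∀ x, |cdf (P.tilted (-a * ·)) x - cdf (Q.tilted (-a * ·)) x| ≤ D)
    (hδ : |mgf id P (-a) - mgf id Q (-a)| ≤ δ) :
    |P.real (Iic t) - Q.real (Iic t)| ≤ (δ + mgf id Q (-a) * (2 * D)) * Real.exp (a * t) := by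
  have := isProbabilityMeasure_tilted hP
  have := isProbabilityMeasure_tilted hQ
  rw [measureReal_eq_mgf_mul_setIntegral_tilted P hP measurableSet_Iic,
    measureReal_eq_mgf_mul_setIntegral_tilted Q hQ measurableSet_Iic]
  have hexp (x : ℝ) : -(-a * x) = a * x := by ring
  simp_rw [hexp]
  rw [setIntegral_Iic_exp_eq _ ha, setIntegral_Iic_exp_eq _ ha, ← integral_Iic_mul_exp ha t]
  exact abs_mul_setIntegral_sub_le measurableSet_Iic (integrableOn_Iic_mul_exp ha t)
    (fun y ↦ by positivity) (measurable_measureReal_Ioc_left _ t)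
    (measurable_measureReal_Ioc_left _ t) (fun _ ↦ measureReal_nonneg) (fun _ ↦ measureReal_le_one)
    (fun _ ↦ measureReal_nonneg) (fun _ ↦ measureReal_le_one)
    (fun y hy ↦ abs_measureReal_Ioc_sub_le hD hy) mgf_nonneg hδ

/-- Tilting towards the side of `t` turns a uniform bound into an exponentially decaying one. -/
lemma abs_cdf_sub_cdf_le_of_tilted (ha : 0 < a) {Z : ℝ}
    (hP : ∀ θ, |θ| = a → Integrable (fun x ↦ Real.exp (θ * x)) P)
    (hQ : ∀ θ, |θ| = a → Integrable (fun x ↦ Real.exp (θ * x)) Q)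
    (hD : ∀ θ, |θ| = a → ∀ x, |cdf (P.tilted (θ * ·)) x - cdf (Q.tilted (θ * ·)) x| ≤ D)
    (hδ : ∀ θ, |θ| = a → |mgf id P θ - mgf id Q θ| ≤ δ)
    (hZ : ∀ θ, |θ| = a → mgf id Q θ ≤ Z) (t : ℝ) :
    |cdf P t - cdf Q t| ≤ (δ + Z * (2 * D)) * Real.exp (-(a * |t|)) := by
  have hpos : |a| = a := abs_of_pos ha
  have hneg : |-a| = a := by rw [abs_neg, hpos]
  have hD₀ : 0 ≤ 2 * D := by linarith [(abs_nonneg _).trans (hD a hpos 0)]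
  rw [cdf_eq_real, cdf_eq_real]
  rcases le_total 0 t with ht | ht
  · rw [← compl_Ioi, probReal_compl_eq_one_sub measurableSet_Ioi,
      probReal_compl_eq_one_sub measurableSet_Ioi, sub_sub_sub_cancel_left, abs_sub_comm,
      abs_of_nonneg ht]
    refine (abs_measureReal_Ioi_sub_le_of_tilted ha (hP a hpos) (hQ a hpos) (hD a hpos)
      (hδ a hpos)).trans ?_
    gcongr
    exact hZ a hpos
  · rw [abs_of_nonpos ht, mul_neg, neg_neg]
    refine (abs_measureReal_Iic_sub_le_of_tilted ha (hP _ hneg) (hQ _ hneg) (hD _ hneg)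
      (hδ _ hneg)).trans ?_
    gcongr
    exact hZ _ hneg

end

end Tilting

section NearGaussian

lemma norm_exp_sub_one_le_norm_mul_exp (z : ℂ) :
    ‖Complex.exp z - 1‖ ≤ ‖z‖ * Real.exp ‖z‖ := by
  simpa using Complex.norm_exp_sub_sum_le_norm_mul_exp z 1

lemma charFun_tilted_mul (P : Measure ℝ) (θ u : ℝ) :
    charFun (P.tilted (θ * ·)) u
      = complexMGF id P (θ + u * Complex.I) / complexMGF id P θ := by
  rw [charFun_apply_real, integral_tilted, complexMGF_ofReal, mgf, complexMGF, ← integral_div]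
  refine integral_congr_ae (.of_forall fun x ↦ ?_)
  simp only [id]
  rw [Complex.real_smul, Complex.ofReal_div, Complex.ofReal_exp, div_mul_eq_mul_div,
    ← Complex.exp_add]
  congr 2
  push_cast
  ring

lemma gaussianReal_tilted_mul (θ : ℝ) :
    (gaussianReal 0 1).tilted (θ * ·) = gaussianReal θ 1 := by
  have : IsProbabilityMeasure ((gaussianReal 0 1).tilted (θ * ·)) :=
    isProbabilityMeasure_tilted (integrable_exp_mul_gaussianReal θ)
  refine Measure.ext_of_charFun (funext fun u ↦ ?_)
  rw [charFun_tilted_mul, complexMGF_id_gaussianReal, complexMGF_id_gaussianReal,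
    charFun_gaussianReal, ← Complex.exp_sub]
  congr 1
  push_cast
  linear_combination (u ^ 2 / 2 : ℂ) * Complex.I_sq

lemma gaussianPDFReal_one_le_one (θ x : ℝ) : gaussianPDFReal θ 1 x ≤ 1 := by
  rw [gaussianPDFReal_def]
  refine mul_le_one₀ (inv_le_one_of_one_le₀ ?_) (Real.exp_pos _).le (Real.exp_le_one_iff.2 ?_)
  · rw [Real.one_le_sqrt, NNReal.coe_one]
    linarith [Real.pi_gt_three]
  · rw [NNReal.coe_one]
    linarith [sq_nonneg (x - θ)]

lemma cdf_gaussianReal_sub_le (θ : ℝ) {x y : ℝ} (hxy : x ≤ y) :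
    cdf (gaussianReal θ 1) y - cdf (gaussianReal θ 1) x ≤ 1 * (y - x) := by
  rw [← measureReal_Ioc_eq_cdf_sub _ hxy, measureReal_def,
    gaussianReal_apply_eq_integral _ one_ne_zero, ENNReal.toReal_ofReal
      (setIntegral_nonneg measurableSet_Ioc fun z _ ↦ gaussianPDFReal_nonneg _ _ _)]
  have := setIntegral_mono_on (μ := volume) (integrable_gaussianPDFReal θ 1).integrableOn
    (integrableOn_const (C := (1 : ℝ)) (by simp)) (measurableSet_Ioc (a := x) (b := y))
    fun z _ ↦ gaussianPDFReal_one_le_one θ z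
  simpa [hxy] using this

/-- On the disc `‖w‖ < R`, the moment generating function of `P` is the standard Gaussian one
multiplied by `exp (E w)`, where the holomorphic error `E` is at most cubic with factor `ε`. In the
application `P` is the law of a normalised sum, `ε` is of order `1 / σ` and `R` of order `σ`. -/
structure IsNearGaussian (P : Measure ℝ) (E : ℂ → ℂ) (ε R : ℝ) : Prop where
  differentiableOn : DifferentiableOn ℂ E (Metric.ball 0 R)
  norm_le : ∀ w ∈ Metric.ball (0 : ℂ) R, ‖E w‖ ≤ ε * ‖w‖ ^ 3
  complexMGF_eq : ∀ w ∈ Metric.ball (0 : ℂ) R,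
    complexMGF id P w = Complex.exp (w ^ 2 / 2 + E w)

lemma ofReal_mem_ball {θ R : ℝ} (hθ : |θ| < R) : (θ : ℂ) ∈ Metric.ball (0 : ℂ) R := by
  simpa using hθ

lemma norm_ofReal_add_mul_I_le {a θ : ℝ} (hθ : |θ| ≤ a) (u : ℝ) :
    ‖(θ + u * Complex.I : ℂ)‖ ≤ |u| + a := by
  refine (norm_add_le _ _).trans ?_
  simp only [Complex.norm_real, Real.norm_eq_abs, norm_mul, Complex.norm_I, mul_one]
  linarith

namespace IsNearGaussian

variable {P : Measure ℝ} {E : ℂ → ℂ} {ε R a θ u : ℝ}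

lemma mono {ε' : ℝ} (h : IsNearGaussian P E ε R) (hε : ε ≤ ε') : IsNearGaussian P E ε' R :=
  { h with norm_le := fun w hw ↦ (h.norm_le w hw).trans (by gcongr) }

lemma integrable_exp_mul (h : IsNearGaussian P E ε R) (hθ : |θ| < R) :
    Integrable (fun x ↦ Real.exp (θ * x)) P := by
  by_contra hnot
  refine Complex.exp_ne_zero ((θ : ℂ) ^ 2 / 2 + E θ) ?_
  rw [← h.complexMGF_eq θ (ofReal_mem_ball hθ), complexMGF_ofReal,
    mgf_undef (X := id) hnot, Complex.ofReal_zero]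

lemma norm_deriv_le (h : IsNearGaussian P E ε R) (hε : 0 ≤ ε) {w : ℂ} (hw : ‖w‖ + 1 < R) :
    ‖deriv E w‖ ≤ ε * (‖w‖ + 1) ^ 3 := by
  have hball {v : ℂ} (hv : ‖v - w‖ ≤ 1) : ‖v‖ ≤ ‖w‖ + 1 := by
    linarith [norm_le_norm_add_norm_sub' v w]
  have hcauchy := Complex.norm_deriv_le_of_forall_mem_sphere_norm_le (c := w) (R := 1)
    (C := ε * (‖w‖ + 1) ^ 3) (f := E) one_pos ?_ fun v hv ↦ ?_
  · simpa using hcauchy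
  · refine (h.differentiableOn.mono fun v hv ↦ ?_).diffContOnCl
    rw [closure_ball _ one_ne_zero, mem_closedBall_iff_norm] at hv
    exact mem_ball_zero_iff.2 ((hball hv).trans_lt hw)
  · have hv' : ‖v‖ ≤ ‖w‖ + 1 := hball (mem_sphere_iff_norm.1 hv).le
    refine (h.norm_le v (mem_ball_zero_iff.2 (hv'.trans_lt hw))).trans ?_
    gcongr

lemma norm_sub_le (h : IsNearGaussian P E ε R) (hε : 0 ≤ ε) (hθ : |θ| ≤ a)
    (hu : |u| + a + 1 < R) :
    ‖E (θ + u * Complex.I) - E θ‖ ≤ |u| * (ε * (|u| + a + 1) ^ 3) := by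
  have hmem : (θ + u * Complex.I : ℂ) ∈ Metric.closedBall (0 : ℂ) (|u| + a) :=
    mem_closedBall_zero_iff.2 (norm_ofReal_add_mul_I_le hθ u)
  have hmem₀ : (θ : ℂ) ∈ Metric.closedBall (0 : ℂ) (|u| + a) := by
    rw [mem_closedBall_zero_iff, Complex.norm_real, Real.norm_eq_abs]
    linarith [abs_nonneg u]
  have hmvt := Convex.norm_image_sub_le_of_norm_deriv_le (f := E)
    (C := ε * (|u| + a + 1) ^ 3) (fun w hw ↦ ?_) (fun w hw ↦ ?_) (convex_closedBall 0 _) hmem₀ hmem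
  · refine hmvt.trans_eq ?_
    simp [mul_comm]
  · rw [mem_closedBall_zero_iff] at hw
    refine h.differentiableOn.differentiableAt (Metric.isOpen_ball.mem_nhds ?_)
    rw [mem_ball_zero_iff]
    linarith
  · rw [mem_closedBall_zero_iff] at hw
    refine (h.norm_deriv_le hε (by linarith)).trans ?_
    gcongr

/-- The condition `16 ε |u| ≤ 1` lets half of the Gaussian exponent absorb the cubic error. -/
lemma norm_sub_le_sq (h : IsNearGaussian P E ε R) (hε : 0 ≤ ε) (hε₁ : ε ≤ 1) (hθ : |θ| ≤ a)
    (hR : |u| + a < R) (hu : 16 * ε * |u| ≤ 1) :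
    ‖E (θ + u * Complex.I) - E θ‖ ≤ u ^ 2 / 4 + 5 * a ^ 3 := by
  have ha : 0 ≤ a := (abs_nonneg θ).trans hθ
  have hu₀ := abs_nonneg u
  have hEθ : ‖E θ‖ ≤ a ^ 3 := by
    refine (h.norm_le _ (ofReal_mem_ball (by linarith))).trans ?_
    rw [Complex.norm_real, Real.norm_eq_abs]
    exact (mul_le_of_le_one_left (by positivity) hε₁).trans (by gcongr)
  have hE : ‖E (θ + u * Complex.I)‖ ≤ u ^ 2 / 4 + 4 * a ^ 3 := by
    have hnorm := norm_ofReal_add_mul_I_le hθ u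
    calc ‖E (θ + u * Complex.I)‖ ≤ ε * (|u| + a) ^ 3 :=
          (h.norm_le _ (mem_ball_zero_iff.2 (hnorm.trans_lt hR))).trans (by gcongr)
      _ ≤ ε * (4 * (|u| ^ 3 + a ^ 3)) := by
          gcongr
          nlinarith [mul_nonneg (add_nonneg hu₀ ha) (sq_nonneg (|u| - a))]
      _ = 16 * ε * |u| * (|u| ^ 2 / 4) + ε * (4 * a ^ 3) := by ring
      _ ≤ 1 * (|u| ^ 2 / 4) + 1 * (4 * a ^ 3) := by gcongr
      _ = u ^ 2 / 4 + 4 * a ^ 3 := by rw [sq_abs]; ring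
  linarith [_root_.norm_sub_le (E (θ + u * Complex.I)) (E θ)]

lemma charFun_tilted_sub (h : IsNearGaussian P E ε R) (hθ : |θ| ≤ a) (hu : |u| + a < R) :
    charFun (P.tilted (θ * ·)) u - charFun (gaussianReal θ 1) u
      = Complex.exp ((u * θ : ℝ) * Complex.I - (u ^ 2 / 2 : ℝ))
        * (Complex.exp (E (θ + u * Complex.I) - E θ) - 1) := by
  have hnorm := norm_ofReal_add_mul_I_le hθ u
  have hθ' : (θ : ℂ) ∈ Metric.ball (0 : ℂ) R :=
    ofReal_mem_ball (by linarith [abs_nonneg u])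
  rw [charFun_gaussianReal, charFun_tilted_mul,
    h.complexMGF_eq _ (mem_ball_zero_iff.2 (hnorm.trans_lt hu)), h.complexMGF_eq _ hθ',
    ← Complex.exp_sub, mul_sub, ← Complex.exp_add, mul_one]
  congr 2
  · push_cast
    linear_combination (u ^ 2 / 2 : ℂ) * Complex.I_sq
  · push_cast
    simp

lemma pow_mul_exp_neg_sq_le {b : ℝ} (hb : 0 ≤ b) (u : ℝ) :
    (|u| + b) ^ 3 * Real.exp (-u ^ 2 / 4) ≤ 6 * Real.exp (b + 2) * Real.exp (-(1 / 8) * u ^ 2) := by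
  have hcube := Real.pow_div_factorial_le_exp (|u| + b) (by positivity) 3
  rw [show ((3 : ℕ).factorial : ℝ) = 6 by norm_num [Nat.factorial],
    div_le_iff₀ (by norm_num)] at hcube
  calc (|u| + b) ^ 3 * Real.exp (-u ^ 2 / 4)
      ≤ Real.exp (|u| + b) * 6 * Real.exp (-u ^ 2 / 4) := by gcongr
    _ = 6 * Real.exp (|u| + b + -u ^ 2 / 4) := by rw [Real.exp_add _ (-u ^ 2 / 4)]; ring
    _ ≤ 6 * Real.exp (b + 2 + -(1 / 8) * u ^ 2) := by
        gcongr 6 * Real.exp ?_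
        nlinarith [sq_nonneg (|u| - 4), sq_abs u]
    _ = 6 * Real.exp (b + 2) * Real.exp (-(1 / 8) * u ^ 2) := by rw [Real.exp_add]; ring

lemma norm_charFun_tilted_sub_le (h : IsNearGaussian P E ε R) (hε : 0 ≤ ε) (hε₁ : ε ≤ 1)
    (hθ : |θ| ≤ a) (hR : |u| + a + 1 < R) (hu : 16 * ε * |u| ≤ 1) :
    ‖charFun (P.tilted (θ * ·)) u - charFun (gaussianReal θ 1) u‖
      ≤ |u| * (ε * (6 * Real.exp (5 * a ^ 3) * Real.exp (a + 3))
        * Real.exp (-(1 / 8) * u ^ 2)) := by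
  have ha : 0 ≤ a := (abs_nonneg θ).trans hθ
  rw [h.charFun_tilted_sub hθ (by linarith), norm_mul, Complex.norm_exp, Complex.sub_re,
    Complex.re_ofReal_mul, Complex.I_re, mul_zero, zero_sub, Complex.ofReal_re]
  calc Real.exp (-(u ^ 2 / 2)) * ‖Complex.exp (E (θ + u * Complex.I) - E θ) - 1‖
      ≤ Real.exp (-(u ^ 2 / 2))
        * (|u| * (ε * (|u| + a + 1) ^ 3) * Real.exp (u ^ 2 / 4 + 5 * a ^ 3)) := by
        gcongr
        refine (norm_exp_sub_one_le_norm_mul_exp _).trans ?_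
        gcongr
        · exact h.norm_sub_le hε hθ hR
        · exact h.norm_sub_le_sq hε hε₁ hθ (by linarith) hu
    _ = |u| * ε * Real.exp (5 * a ^ 3) * ((|u| + (a + 1)) ^ 3 * Real.exp (-u ^ 2 / 4)) := by
        rw [show -u ^ 2 / 4 = -(u ^ 2 / 2) + u ^ 2 / 4 by ring, Real.exp_add, Real.exp_add]
        ring
    _ ≤ |u| * ε * Real.exp (5 * a ^ 3)
        * (6 * Real.exp (a + 1 + 2) * Real.exp (-(1 / 8) * u ^ 2)) :=
        mul_le_mul_of_nonneg_left (pow_mul_exp_neg_sq_le (by positivity) u) (by positivity)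
    _ = _ := by
        rw [show a + 1 + 2 = a + 3 by ring]
        ring

lemma abs_mgf_sub_le (h : IsNearGaussian P E ε R) (hε : 0 ≤ ε) (hε₁ : ε ≤ 1) (hθ : |θ| ≤ a)
    (hR : a < R) :
    |mgf id P θ - mgf id (gaussianReal 0 1) θ|
      ≤ Real.exp (a ^ 2 / 2) * (a ^ 3 * Real.exp (a ^ 3)) * ε := by
  have ha : 0 ≤ a := (abs_nonneg θ).trans hθ
  have hmem : (θ : ℂ) ∈ Metric.ball (0 : ℂ) R := ofReal_mem_ball (by linarith)
  have hE : ‖E θ‖ ≤ ε * a ^ 3 := by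
    refine (h.norm_le _ hmem).trans ?_
    rw [Complex.norm_real, Real.norm_eq_abs]
    gcongr
  have hE₁ : ‖E θ‖ ≤ a ^ 3 := hE.trans (mul_le_of_le_one_left (by positivity) hε₁)
  have hdiff : ((mgf id P θ - mgf id (gaussianReal 0 1) θ : ℝ) : ℂ)
      = (Real.exp (θ ^ 2 / 2) : ℝ) * (Complex.exp (E θ) - 1) := by
    push_cast
    rw [← complexMGF_ofReal, ← complexMGF_ofReal, h.complexMGF_eq θ hmem,
      complexMGF_id_gaussianReal, Complex.exp_add]
    simp only [NNReal.coe_one, Complex.ofReal_one, Complex.ofReal_zero, mul_zero, zero_add,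
      one_mul]
    ring
  rw [← Real.norm_eq_abs, ← Complex.norm_real, hdiff, norm_mul, Complex.norm_real,
    Real.norm_of_nonneg (Real.exp_pos _).le]
  calc Real.exp (θ ^ 2 / 2) * ‖Complex.exp (E θ) - 1‖
      ≤ Real.exp (a ^ 2 / 2) * (ε * a ^ 3 * Real.exp (a ^ 3)) := by
        rw [← sq_abs θ]
        gcongr
        exact (norm_exp_sub_one_le_norm_mul_exp _).trans (by gcongr)
    _ = _ := by ring

end IsNearGaussian

lemma exists_abs_cdf_tilted_sub_le (a : ℝ) :
    ∃ D, 0 ≤ D ∧ ∀ (P : Measure ℝ) [IsProbabilityMeasure P] (E : ℂ → ℂ) (ε T R θ : ℝ),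
      IsNearGaussian P E ε R → 0 ≤ ε → ε ≤ 1 → 0 < T → 16 * ε * T ≤ 1 → T + a + 1 < R → |θ| ≤ a →
      ∀ x, |cdf (P.tilted (θ * ·)) x - cdf (gaussianReal θ 1) x| ≤ D * (ε + 1 / T) := by
  obtain ⟨C, hC, hEsseen⟩ := exists_abs_cdf_sub_cdf_le
  set K := 6 * Real.exp (5 * a ^ 3) * Real.exp (a + 3)
  set J := ∫ u : ℝ, Real.exp (-(1 / 8) * u ^ 2)
  have : 0 ≤ J := integral_nonneg fun u ↦ (Real.exp_pos _).le
  have : 0 ≤ K := by positivity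
  refine ⟨C * (K * J + 1), by positivity, fun P _ E ε T R θ h hε hε₁ hT hεT hR hθ x ↦ ?_⟩
  have : IsProbabilityMeasure (P.tilted (θ * ·)) :=
    isProbabilityMeasure_tilted (h.integrable_exp_mul (by linarith))
  have := hEsseen (P.tilted (θ * ·)) (gaussianReal θ 1)
    (fun u ↦ ε * K * Real.exp (-(1 / 8) * u ^ 2)) T hT
    ((integrable_exp_neg_mul_sq (by norm_num)).const_mul _) (fun u ↦ by positivity)
    (fun u hu ↦ h.norm_charFun_tilted_sub_le hε hε₁ hθ (by linarith)
      ((mul_le_mul_of_nonneg_left hu (by positivity)).trans hεT)) 1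
    (fun _ _ hxy ↦ cdf_gaussianReal_sub_le θ hxy) x
  rw [integral_const_mul] at this
  refine this.trans ?_
  rw [mul_assoc C]
  refine mul_le_mul_of_nonneg_left ?_ hC.le
  have : 0 ≤ K * J * (1 / T) := by positivity
  have hint : ε * K * J = K * J * ε := by ring
  rw [hint]
  linarith

theorem exists_abs_cdf_sub_gaussian_le {a : ℝ} (ha : 0 < a) :
    ∃ D, ∀ (P : Measure ℝ) [IsProbabilityMeasure P] (E : ℂ → ℂ) (ε T R : ℝ),
      IsNearGaussian P E ε R → 0 ≤ ε → ε ≤ 1 → 0 < T → 16 * ε * T ≤ 1 → T + a + 1 < R →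
      ∀ t, |cdf P t - cdf (gaussianReal 0 1) t| ≤ D * (ε + 1 / T) * Real.exp (-(a * |t|)) := by
  obtain ⟨D, _, h⟩ := exists_abs_cdf_tilted_sub_le a
  set Z := Real.exp (a ^ 2 / 2)
  set δ := Z * (a ^ 3 * Real.exp (a ^ 3))
  have : 0 ≤ δ := by positivity
  refine ⟨δ + Z * (2 * D), fun P _ E ε T R hP hε hε₁ hT hεT hR t ↦ ?_⟩
  refine (abs_cdf_sub_cdf_le_of_tilted ha (Z := Z)
    (fun θ hθ ↦ hP.integrable_exp_mul (by linarith))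
    (fun θ _ ↦ integrable_exp_mul_gaussianReal θ)
    (fun θ hθ x ↦ by
      rw [gaussianReal_tilted_mul]
      exact h P E ε T R θ hP hε hε₁ hT hεT hR hθ.le x)
    (fun θ hθ ↦ hP.abs_mgf_sub_le hε hε₁ hθ.le (by linarith))
    (fun θ hθ ↦ by rw [mgf_id_gaussianReal]; simp [Z, ← hθ]) t).trans ?_
  gcongr
  have : 0 ≤ δ * (1 / T) := by positivity
  linarith

end NearGaussian

section QuadraticGerm

open Asymptotics

/-- `g z = v * z ^ 2 / 2 + o(z ^ 2)` as `z → 0`. For the logarithm of the moment generating function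
of a centred variable, and for that function minus `1`, the coefficient `v` is the variance. -/
def HasQuadraticGerm (g : ℂ → ℂ) (v : ℝ) : Prop :=
  (fun z : ℂ ↦ g z - v * z ^ 2 / 2) =o[𝓝 0] fun z : ℂ ↦ z ^ 2

lemma norm_ofReal_mul_sq_div_two (v : ℝ) (z : ℂ) : ‖(v * z ^ 2 / 2 : ℂ)‖ = |v| / 2 * ‖z‖ ^ 2 := by
  simp only [norm_div, norm_mul, norm_pow, Complex.norm_real, Real.norm_eq_abs, Complex.norm_ofNat]
  ring

namespace HasQuadraticGerm

variable {f g : ℂ → ℂ} {v w r M : ℝ}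

lemma add_isLittleO (hg : HasQuadraticGerm g v)
    (h : (fun z ↦ f z - g z) =o[𝓝 0] fun z : ℂ ↦ z ^ 2) : HasQuadraticGerm f v :=
  (IsLittleO.add hg h).congr_left fun z ↦ by ring

lemma congr' (hg : HasQuadraticGerm g v) (h : f =ᶠ[𝓝 0] g) : HasQuadraticGerm f v :=
  IsLittleO.congr' hg (h.symm.mono fun z hz ↦ by simp only [hz]) (EventuallyEq.refl _ _)

lemma isBigO (hg : HasQuadraticGerm g v) : g =O[𝓝 0] fun z : ℂ ↦ z ^ 2 :=
  (IsLittleO.isBigO hg |>.add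
    ((isBigO_refl (fun z : ℂ ↦ z ^ 2) (𝓝 0)).const_mul_left (v / 2 : ℂ))).congr_left fun z ↦ by ring

lemma isLittleO_mul (hf : HasQuadraticGerm f v) (hg : HasQuadraticGerm g w) :
    (fun z ↦ f z * g z) =o[𝓝 0] fun z : ℂ ↦ z ^ 2 := by
  refine (hf.isBigO.mul hg.isBigO).trans_isLittleO ?_
  simpa only [← pow_add] using isLittleO_pow_pow (𝕜 := ℂ) (m := 2) (n := 4) (by norm_num)

lemma apply_zero (hg : HasQuadraticGerm g v) : g 0 = 0 := by
  simpa using hg.isBigO.eq_zero_imp.self_of_nhds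

lemma tendsto (hg : HasQuadraticGerm g v) : Tendsto g (𝓝 0) (𝓝 0) :=
  hg.isBigO.trans_tendsto (by simpa using (continuous_pow (M := ℂ) 2).tendsto 0)

lemma mul (hf : HasQuadraticGerm (fun z ↦ f z - 1) v) (hg : HasQuadraticGerm (fun z ↦ g z - 1) w) :
    HasQuadraticGerm (fun z ↦ f z * g z - 1) (v + w) := by
  have hadd : HasQuadraticGerm (fun z ↦ (f z - 1) + (g z - 1)) (v + w) :=
    (IsLittleO.add hf hg).congr_left fun z ↦ by push_cast; ring
  exact hadd.add_isLittleO ((hf.isLittleO_mul hg).congr_left fun z ↦ by ring)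

lemma inv (hf : HasQuadraticGerm (fun z ↦ f z - 1) v) :
    HasQuadraticGerm (fun z ↦ (f z)⁻¹ - 1) (-v) := by
  have hneg : HasQuadraticGerm (fun z ↦ -(f z - 1)) (-v) :=
    (IsLittleO.neg_left hf).congr_left fun z ↦ by push_cast; ring
  have hf₁ : Tendsto f (𝓝 0) (𝓝 1) := by simpa using hf.tendsto.add_const 1
  refine hneg.add_isLittleO
    (((hf.isLittleO_mul hf).mul_isBigO ((hf₁.inv₀ one_ne_zero).isBigO_one ℂ)).congr' ?_ ?_)
  · filter_upwards [hf₁.eventually_ne one_ne_zero] with z hz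
    field_simp
    ring
  · filter_upwards with z using mul_one _

lemma clog (hf : HasQuadraticGerm (fun z ↦ f z - 1) v) :
    HasQuadraticGerm (fun z ↦ Complex.log (f z)) v := by
  refine hf.add_isLittleO (IsBigO.trans_isLittleO (IsBigO.of_bound 1 ?_) (hf.isLittleO_mul hf))
  filter_upwards [hf.tendsto.norm.eventually
    (eventually_lt_nhds (show ‖(0 : ℂ)‖ < 1 / 2 by simp))] with z hz
  have hlog := Complex.norm_log_one_add_sub_self_le (z := f z - 1) (by linarith)
  rw [add_sub_cancel] at hlog
  refine hlog.trans ?_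
  have : (1 - ‖f z - 1‖)⁻¹ ≤ 2 := by
    rw [inv_le_comm₀ (by linarith) (by norm_num)]
    linarith
  rw [one_mul, norm_mul, ← sq]
  nlinarith [sq_nonneg ‖f z - 1‖]

lemma of_exp_eq {Λ : ℂ → ℂ} (hf : HasQuadraticGerm (fun z ↦ f z - 1) v)
    (hΛ : Tendsto Λ (𝓝 0) (𝓝 0)) (hexp : ∀ᶠ z in 𝓝 0, Complex.exp (Λ z) = f z) :
    HasQuadraticGerm Λ v := by
  refine hf.clog.congr' ?_
  filter_upwards [hexp, hΛ.norm.eventually (eventually_lt_nhds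
    (show ‖(0 : ℂ)‖ < Real.pi by simpa using Real.pi_pos))] with z hz hπ
  have him := abs_lt.1 ((Complex.abs_im_le_norm (Λ z)).trans_lt hπ)
  rw [← hz, Complex.log_exp him.1 him.2.le]

lemma norm_le_mul_sq (hg : HasQuadraticGerm g v) (hd : DifferentiableOn ℂ g (Metric.ball 0 r))
    (hb : ∀ z ∈ Metric.ball (0 : ℂ) r, ‖g z‖ ≤ M) {z : ℂ} (hz : z ∈ Metric.ball (0 : ℂ) r) :
    ‖g z‖ ≤ M * (‖z‖ / r) ^ 2 := by
  have hlittle : (fun z ↦ g z - g 0) =o[𝓝 0] fun z : ℂ ↦ ‖z - 0‖ ^ 1 := by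
    have := (isLittleO_pow_pow (𝕜 := ℂ) (show 1 < 2 by norm_num)).norm_right
    simpa [hg.apply_zero] using hg.isBigO.trans_isLittleO this
  simpa [hg.apply_zero] using Complex.dist_le_mul_div_pow_of_mapsTo_ball_of_isLittleO (R₂ := M) hd
    (fun w hw ↦ by simpa [hg.apply_zero] using hb w hw) hlittle hz

lemma abs_div_two_le (hg : HasQuadraticGerm g v) (hr : 0 < r)
    (hd : DifferentiableOn ℂ g (Metric.ball 0 r))
    (hb : ∀ z ∈ Metric.ball (0 : ℂ) r, ‖g z‖ ≤ M) : |v| / 2 ≤ M / r ^ 2 := by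
  refine le_of_forall_pos_le_add fun ε hε ↦ ?_
  have hsmall := (hg.bound hε).filter_mono (nhdsWithin_le_nhds (s := {0}ᶜ))
  have hball : ∀ᶠ z in 𝓝[≠] (0 : ℂ), z ∈ Metric.ball (0 : ℂ) r :=
    mem_nhdsWithin_of_mem_nhds (Metric.ball_mem_nhds 0 hr)
  obtain ⟨z, ⟨hzε, hzr⟩, hz⟩ := ((hsmall.and hball).and self_mem_nhdsWithin).exists
  have hz₀ : 0 < ‖z‖ := norm_pos_iff.2 hz
  refine le_of_mul_le_mul_right ?_ (pow_pos hz₀ 2)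
  calc |v| / 2 * ‖z‖ ^ 2 = ‖(v * z ^ 2 / 2 : ℂ)‖ := (norm_ofReal_mul_sq_div_two v z).symm
    _ ≤ ‖g z‖ + ‖g z - v * z ^ 2 / 2‖ := norm_le_norm_add_norm_sub _ _
    _ ≤ M * (‖z‖ / r) ^ 2 + ε * ‖z‖ ^ 2 :=
        add_le_add (hg.norm_le_mul_sq hd hb hzr) (by simpa only [norm_pow] using hzε)
    _ = (M / r ^ 2 + ε) * ‖z‖ ^ 2 := by ring

lemma norm_sub_le_mul_cube (hg : HasQuadraticGerm g v) (hr : 0 < r)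
    (hd : DifferentiableOn ℂ g (Metric.ball 0 r))
    (hb : ∀ z ∈ Metric.ball (0 : ℂ) r, ‖g z‖ ≤ M) {z : ℂ} (hz : z ∈ Metric.ball (0 : ℂ) r) :
    ‖g z - v * z ^ 2 / 2‖ ≤ 2 * M * (‖z‖ / r) ^ 3 := by
  have hmaps : MapsTo (fun z ↦ g z - v * z ^ 2 / 2) (Metric.ball 0 r)
      (Metric.closedBall (g 0 - v * 0 ^ 2 / 2) (2 * M)) := fun w hw ↦ by
    have hquad : ‖(v * w ^ 2 / 2 : ℂ)‖ ≤ M := by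
      have hv := hg.abs_div_two_le hr hd hb
      have hwr : ‖w‖ ^ 2 ≤ r ^ 2 :=
        pow_le_pow_left₀ (norm_nonneg w) (mem_ball_zero_iff.1 hw).le 2
      rw [norm_ofReal_mul_sq_div_two]
      calc |v| / 2 * ‖w‖ ^ 2 ≤ M / r ^ 2 * r ^ 2 :=
            mul_le_mul hv hwr (by positivity) ((by positivity : 0 ≤ |v| / 2).trans hv)
        _ = M := div_mul_cancel₀ _ (by positivity)
    simp only [hg.apply_zero, mem_closedBall_iff_norm]
    simpa using (norm_sub_le _ _).trans (by linarith [hb w hw])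
  have hlittle : (fun z : ℂ ↦ g z - v * z ^ 2 / 2 - (g 0 - v * 0 ^ 2 / 2))
      =o[𝓝 0] fun z ↦ ‖z - 0‖ ^ 2 := by
    simpa [hg.apply_zero] using IsLittleO.norm_right hg
  simpa [hg.apply_zero] using Complex.dist_le_mul_div_pow_of_mapsTo_ball_of_isLittleO
    (hd.sub (Differentiable.differentiableOn (by fun_prop))) hmaps hlittle hz

end HasQuadraticGerm

lemma mem_slitPlane_of_norm_sub_one_le {w : ℂ} (h : ‖w - 1‖ ≤ 1 / 2) : w ∈ Complex.slitPlane := by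
  have hre := abs_le.1 ((Complex.abs_re_le_norm _).trans h)
  rw [Complex.sub_re, Complex.one_re] at hre
  exact Or.inl (by linarith)

lemma norm_log_le_one_of_norm_sub_one_le {w : ℂ} (h : ‖w - 1‖ ≤ 1 / 2) : ‖Complex.log w‖ ≤ 1 := by
  have := Complex.norm_log_one_add_half_le_self h
  rw [add_sub_cancel] at this
  linarith

end QuadraticGerm

section BoundedMGF

variable {μ : Measure Ω} [IsProbabilityMeasure μ] {S : Ω → ℝ} {K : ℝ}

lemma integrable_cexp_mul_of_bounded (hS : AEMeasurable S μ) (hK : ∀ᵐ ω ∂μ, |S ω| ≤ K) (z : ℂ) :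
    Integrable (fun ω ↦ Complex.exp (z * S ω)) μ := by
  refine Integrable.of_bound (C := Real.exp (‖z‖ * K)) ?_ ?_
  · exact ((by fun_prop : Continuous fun x : ℝ ↦ Complex.exp (z * x)).measurable.comp_aemeasurable
      hS).aestronglyMeasurable
  · filter_upwards [hK] with ω hω
    rw [Complex.norm_exp]
    refine Real.exp_le_exp.2 ((Complex.re_le_norm _).trans ?_)
    rw [norm_mul, Complex.norm_real, Real.norm_eq_abs]
    gcongr

lemma differentiable_complexMGF_of_bounded (hS : AEMeasurable S μ) (hK : ∀ᵐ ω ∂μ, |S ω| ≤ K) :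
    Differentiable ℂ (complexMGF S μ) := by
  have huniv : integrableExpSet S μ = univ := eq_univ_of_forall fun t ↦
    (integrable_cexp_mul_of_bounded hS hK t).re.congr <| .of_forall fun ω ↦ by
      simp [← Complex.ofReal_mul, ← Complex.ofReal_exp]
  exact fun z ↦ (hasDerivAt_complexMGF (by simp [huniv])).differentiableAt

lemma complexMGF_sub_one_sub_eq (hS : AEMeasurable S μ) (hK : ∀ᵐ ω ∂μ, |S ω| ≤ K)
    (hmean : ∫ ω, S ω ∂μ = 0) (z : ℂ) :
    complexMGF S μ z - 1 - (∫ ω, S ω ^ 2 ∂μ : ℝ) * z ^ 2 / 2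
      = ∫ ω, (Complex.exp (z * S ω) - (1 + z * S ω + z ^ 2 / 2 * ↑(S ω ^ 2))) ∂μ := by
  have hint : Integrable (fun ω ↦ z * (S ω : ℂ)) μ :=
    (Integrable.of_bound (C := K) hS.aestronglyMeasurable hK).ofReal.const_mul z
  have hint₂ : Integrable (fun ω ↦ z ^ 2 / 2 * ((S ω ^ 2 : ℝ) : ℂ)) μ := by
    refine (Integrable.of_bound (C := K ^ 2) (hS.pow_const 2).aestronglyMeasurable ?_).ofReal
      |>.const_mul _
    filter_upwards [hK] with ω hω
    rw [norm_pow]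
    exact pow_le_pow_left₀ (norm_nonneg _) hω 2
  have hint₁ : Integrable (fun ω ↦ 1 + z * (S ω : ℂ)) μ := (integrable_const _).add hint
  rw [integral_sub (g := fun ω ↦ 1 + z * (S ω : ℂ) + z ^ 2 / 2 * ((S ω ^ 2 : ℝ) : ℂ))
      (integrable_cexp_mul_of_bounded hS hK z) (hint₁.add hint₂),
    integral_add hint₁ hint₂, integral_add (integrable_const _) hint, integral_const_mul,
    integral_const_mul, integral_complex_ofReal, integral_complex_ofReal, hmean, complexMGF]
  simp only [integral_const, probReal_univ, one_smul, Complex.ofReal_zero, mul_zero, add_zero]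
  ring

lemma norm_cexp_mul_sub_taylor_le {x : ℝ} (hx : |x| ≤ K) {z : ℂ} (hz : ‖z‖ ≤ 1) :
    ‖Complex.exp (z * x) - (1 + z * x + z ^ 2 / 2 * ↑(x ^ 2))‖ ≤ K ^ 3 * Real.exp K * ‖z ^ 3‖ := by
  have hK : 0 ≤ K := (abs_nonneg x).trans hx
  have hzx : ‖z * (x : ℂ)‖ ≤ ‖z‖ * K := by
    rw [norm_mul, Complex.norm_real, Real.norm_eq_abs]
    gcongr
  have htaylor := Complex.norm_exp_sub_sum_le_norm_mul_exp (z * x) 3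
  have hsum : ∑ m ∈ Finset.range 3, (z * (x : ℂ)) ^ m / m.factorial
      = 1 + z * x + z ^ 2 / 2 * ↑(x ^ 2) := by
    simp only [Finset.sum_range_succ, Finset.range_zero, Finset.sum_empty, Nat.factorial]
    push_cast
    ring
  rw [hsum] at htaylor
  calc _ ≤ ‖z * (x : ℂ)‖ ^ 3 * Real.exp ‖z * (x : ℂ)‖ := htaylor
    _ ≤ (‖z‖ * K) ^ 3 * Real.exp K := by
        gcongr
        exact hzx.trans (mul_le_of_le_one_left hK hz)
    _ = K ^ 3 * Real.exp K * ‖z ^ 3‖ := by rw [norm_pow]; ring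

lemma hasQuadraticGerm_complexMGF_sub_one (hS : AEMeasurable S μ) (hK : ∀ᵐ ω ∂μ, |S ω| ≤ K)
    (hmean : ∫ ω, S ω ∂μ = 0) :
    HasQuadraticGerm (fun z ↦ complexMGF S μ z - 1) (∫ ω, S ω ^ 2 ∂μ) := by
  refine Asymptotics.IsBigO.trans_isLittleO
    (Asymptotics.IsBigO.of_bound (K ^ 3 * Real.exp K) ?_)
    (Asymptotics.isLittleO_pow_pow (show 2 < 3 by norm_num))
  filter_upwards [Metric.closedBall_mem_nhds (0 : ℂ) one_pos] with z hz
  rw [complexMGF_sub_one_sub_eq hS hK hmean]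
  refine (norm_integral_le_of_norm_le_const (hK.mono fun ω hω ↦
    norm_cexp_mul_sub_taylor_le hω (mem_closedBall_zero_iff.1 hz))).trans_eq ?_
  simp

end BoundedMGF

section Markov

lemma pastSigma_le {X : ∀ j, Ω → 𝒳 j} (hX : ∀ j, Measurable (X j)) (j : ℕ) :
    pastSigma X j ≤ ‹MeasurableSpace Ω› :=
  iSup₂_le fun i _ ↦ (hX i).comap_le

lemma pastSigma_le_succ {Ω' : Type*} (X : ∀ j, Ω' → 𝒳 j) (j : ℕ) :
    pastSigma X j ≤ pastSigma X (j + 1) :=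
  biSup_mono fun _ hi ↦ Finset.range_subset_range.2 (j + 1).le_succ hi

lemma measurable_pastSigma {Ω' : Type*} (X : ∀ j, Ω' → 𝒳 j) (j : ℕ) :
    Measurable[pastSigma X j] (X j) := by
  rw [measurable_iff_comap_le]
  exact le_biSup (fun i ↦ MeasurableSpace.comap (X i) inferInstance) (Finset.self_mem_range_succ j)

lemma integrable_of_forall_norm_le {α 𝕜 : Type*} [MeasurableSpace α] [RCLike 𝕜] (ν : Measure α)
    [IsFiniteMeasure ν] {g : α → 𝕜} (hg : Measurable g) {B : ℝ} (hB : ∀ x, ‖g x‖ ≤ B) :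
    Integrable g ν :=
  .of_bound hg.aestronglyMeasurable B (ae_of_all _ hB)

lemma integral_bind_kernel {α β 𝕜 : Type*} [MeasurableSpace α] [MeasurableSpace β] [RCLike 𝕜]
    (ν : Measure α) [IsFiniteMeasure ν] (η : Kernel α β) [IsMarkovKernel η] {g : β → 𝕜}
    (hg : Measurable g) {B : ℝ} (hB : ∀ x, ‖g x‖ ≤ B) :
    ∫ y, g y ∂(η ∘ₘ ν) = ∫ x, ∫ y, g y ∂η x ∂ν := by
  rw [← Measure.snd_compProd, Measure.snd,
    integral_map measurable_snd.aemeasurable hg.aestronglyMeasurable,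
    Measure.integral_compProd (f := fun p : α × β ↦ g p.2)
      (integrable_of_forall_norm_le _ (hg.comp measurable_snd) fun x ↦ hB _)]

end Markov

end BerryEsseen

namespace IsInhomMarkov

open Set BerryEsseen

variable {μ : Measure Ω} {X : ∀ j, Ω → 𝒳 j}
  {κ : ∀ j n, Kernel (𝒳 j) (𝒳 (j + n))} {𝕜 : Type*} [RCLike 𝕜] {j n : ℕ}
  {g : 𝒳 (j + n) → 𝕜} {A B : ℝ} {s : Set Ω}

lemma norm_integral_kernel_le (h : IsInhomMarkov μ X κ) (hB : ∀ y, ‖g y‖ ≤ B) (x : 𝒳 j) :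
    ‖∫ y, g y ∂κ j n x‖ ≤ B := by
  have := h.isMarkovKernel j n
  simpa using norm_integral_le_of_norm_le_const (μ := κ j n x) (ae_of_all _ hB)

lemma measurable_integral_kernel (h : IsInhomMarkov μ X κ) (hg : Measurable g) :
    Measurable fun x ↦ ∫ y, g y ∂κ j n x := by
  have := h.isMarkovKernel j n
  exact (StronglyMeasurable.integral_kernel (κ := κ j n) hg.stronglyMeasurable).measurable

variable [IsFiniteMeasure μ]

lemma setIntegral_kernel_toReal (h : IsInhomMarkov μ X κ) (hs : MeasurableSet[pastSigma X j] s)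
    {Γ : Set (𝒳 (j + n))} (hΓ : MeasurableSet Γ) :
    ∫ ω in s, (κ j n (X j ω) Γ).toReal ∂μ = μ.real (X (j + n) ⁻¹' Γ ∩ s) := by
  have hind : (fun ω ↦ Γ.indicator (fun _ ↦ (1 : ℝ)) (X (j + n) ω))
      = (X (j + n) ⁻¹' Γ).indicator 1 := rfl
  rw [integral_congr_ae (ae_restrict_of_ae (h.cond j n Γ hΓ).symm), hind,
    setIntegral_condExp (pastSigma_le h.meas j) ((integrable_const 1).indicator (h.meas _ hΓ)) hs,
    integral_indicator_one (h.meas _ hΓ), measureReal_restrict_apply (h.meas _ hΓ)]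

lemma map_restrict (h : IsInhomMarkov μ X κ) (n : ℕ) (hs : MeasurableSet[pastSigma X j] s) :
    (μ.restrict s).map (X (j + n)) = κ j n ∘ₘ (μ.restrict s).map (X j) := by
  have := h.isMarkovKernel j n
  ext Γ hΓ
  have hκ := (κ j n).measurable_coe hΓ
  rw [Measure.map_apply (h.meas _) hΓ, Measure.bind_apply hΓ (κ j n).aemeasurable,
    lintegral_map hκ (h.meas j), Measure.restrict_apply (h.meas _ hΓ),
    ← ENNReal.toReal_eq_toReal_iff' (measure_ne_top _ _)
      (ne_top_of_le_ne_top (b := ∫⁻ _ in s, 1 ∂μ) (by simp)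
        (lintegral_mono fun ω ↦ prob_le_one)),
    ← integral_toReal (f := fun ω ↦ κ j n (X j ω) Γ) (hκ.comp (h.meas j)).aemeasurable
      (ae_of_all _ fun ω ↦ measure_lt_top _ _)]
  exact (h.setIntegral_kernel_toReal hs hΓ).symm

lemma map_add (h : IsInhomMarkov μ X κ) (j n : ℕ) : μ.map (X (j + n)) = κ j n ∘ₘ μ.map (X j) := by
  simpa using h.map_restrict n (s := univ) (j := j) MeasurableSet.univ

lemma ae_ae_kernel (h : IsInhomMarkov μ X κ) {p : 𝒳 (j + n) → Prop}
    (hp : ∀ᵐ y ∂μ.map (X (j + n)), p y) : ∀ᵐ x ∂μ.map (X j), ∀ᵐ y ∂κ j n x, p y := by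
  rw [h.map_add j n] at hp
  exact Measure.ae_ae_of_ae_comp hp

lemma setIntegral_comp (h : IsInhomMarkov μ X κ) (hs : MeasurableSet[pastSigma X j] s)
    (hg : Measurable g) (hB : ∀ y, ‖g y‖ ≤ B) :
    ∫ ω in s, g (X (j + n) ω) ∂μ = ∫ ω in s, ∫ y, g y ∂κ j n (X j ω) ∂μ := by
  have := h.isMarkovKernel j n
  rw [← integral_map (h.meas _).aemeasurable hg.aestronglyMeasurable, h.map_restrict n hs,
    integral_bind_kernel _ _ hg hB,
    integral_map (h.meas _).aemeasurable (h.measurable_integral_kernel hg).aestronglyMeasurable]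

lemma condExp_comp (h : IsInhomMarkov μ X κ) (hg : Measurable g) (hB : ∀ y, ‖g y‖ ≤ B) :
    μ[fun ω ↦ g (X (j + n) ω) | pastSigma X j] =ᵐ[μ] fun ω ↦ ∫ y, g y ∂κ j n (X j ω) := by
  have hκ := h.measurable_integral_kernel hg
  refine (ae_eq_condExp_of_forall_setIntegral_eq (pastSigma_le h.meas j)
    (integrable_of_forall_norm_le _ (hg.comp (h.meas _)) fun ω ↦ hB _)
    (fun s _ _ ↦ (integrable_of_forall_norm_le _ (hκ.comp (h.meas j))
      fun ω ↦ h.norm_integral_kernel_le hB _).integrableOn)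
    (fun s hs _ ↦ (h.setIntegral_comp hs hg hB).symm)
    (hκ.comp (measurable_pastSigma X j)).stronglyMeasurable.aestronglyMeasurable).symm

lemma condExp_mul_of_pastSigma (h : IsInhomMarkov μ X κ) {j : ℕ} {ξ ζ : Ω → 𝕜}
    (hξ : Measurable[pastSigma X j] ξ) {A : ℝ} (hA : ∀ ω, ‖ξ ω‖ ≤ A) (hζ : Integrable ζ μ) :
    μ[fun ω ↦ ξ ω * ζ ω | pastSigma X j] =ᵐ[μ] fun ω ↦ ξ ω * (μ[ζ | pastSigma X j]) ω :=
  condExp_stronglyMeasurable_bilin_of_bound (ContinuousLinearMap.mul ℝ 𝕜)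
    (pastSigma_le h.meas j) hξ.stronglyMeasurable hζ A (ae_of_all _ hA)

lemma integral_mul_comp (h : IsInhomMarkov μ X κ) {ξ : Ω → 𝕜} (hξ : Measurable[pastSigma X j] ξ)
    (hA : ∀ ω, ‖ξ ω‖ ≤ A) (hg : Measurable g) (hB : ∀ y, ‖g y‖ ≤ B) :
    ∫ ω, ξ ω * g (X (j + n) ω) ∂μ = ∫ ω, ξ ω * ∫ y, g y ∂κ j n (X j ω) ∂μ := by
  have hpull := h.condExp_mul_of_pastSigma hξ hA
    (integrable_of_forall_norm_le μ (hg.comp (h.meas _)) fun ω ↦ hB _)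
  rw [← integral_condExp (pastSigma_le h.meas j)]
  refine integral_congr_ae ?_
  filter_upwards [hpull, h.condExp_comp hg hB] with ω hω hκ
  rw [← hκ]
  exact hω

end IsInhomMarkov

namespace BerryEsseen
open Set Topology

section Transfer

variable {𝕜 : Type*} [RCLike 𝕜]

/-- A family `v` of functions on the state spaces which are measurable and bounded, uniformly in
time. -/
structure IsBddMeas (v : ∀ j, 𝒳 j → 𝕜) : Prop where
  measurable (j : ℕ) : Measurable (v j)
  exists_norm_le : ∃ B, 0 ≤ B ∧ ∀ j x, ‖v j x‖ ≤ B

namespace IsBddMeas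

variable {u v w : ∀ j, 𝒳 j → 𝕜}

lemma one : IsBddMeas (1 : ∀ j, 𝒳 j → 𝕜) := ⟨fun _ ↦ measurable_const, 1, zero_le_one, by simp⟩

lemma continuous_comp {𝕜' : Type*} [RCLike 𝕜'] {g : 𝕜 → 𝕜'} (hg : Continuous g)
    (hv : IsBddMeas v) : IsBddMeas fun j x ↦ g (v j x) := by
  obtain ⟨B, -, hB⟩ := hv.exists_norm_le
  obtain ⟨D, hD⟩ := (isCompact_closedBall (0 : 𝕜) B).exists_bound_of_continuousOn hg.continuousOn
  exact ⟨fun j ↦ hg.measurable.comp (hv.measurable j), max D 0, le_max_right _ _,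
    fun j x ↦ (hD _ (by simpa using hB j x)).trans (le_max_left _ _)⟩

lemma add (hu : IsBddMeas u) (hv : IsBddMeas v) : IsBddMeas (u + v) := by
  obtain ⟨A, hA0, hA⟩ := hu.exists_norm_le
  obtain ⟨B, hB0, hB⟩ := hv.exists_norm_le
  exact ⟨fun j ↦ (hu.measurable j).add (hv.measurable j), A + B, by positivity,
    fun j x ↦ norm_add_le_of_le (hA j x) (hB j x)⟩

lemma const_smul (hv : IsBddMeas v) (c : 𝕜) : IsBddMeas (c • v) :=
  hv.continuous_comp (continuous_const_mul c)

lemma integrable (hv : IsBddMeas v) (j : ℕ) (ν : Measure (𝒳 j)) [IsFiniteMeasure ν] :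
    Integrable (v j) ν :=
  let ⟨_, _, hB⟩ := hv.exists_norm_le
  integrable_of_forall_norm_le ν (hv.measurable j) (hB j)

lemma measurable_comp (hv : IsBddMeas v) {X : ∀ j, Ω → 𝒳 j} (hX : ∀ j, Measurable (X j)) (j : ℕ) :
    Measurable fun ω ↦ v j (X j ω) :=
  (hv.measurable j).comp (hX j)

lemma integrable_comp (hv : IsBddMeas v) {X : ∀ j, Ω → 𝒳 j} (hX : ∀ j, Measurable (X j)) (j : ℕ)
    (μ : Measure Ω) [IsFiniteMeasure μ] : Integrable (fun ω ↦ v j (X j ω)) μ :=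
  let ⟨_, _, hB⟩ := hv.exists_norm_le
  integrable_of_forall_norm_le μ (hv.measurable_comp hX j) fun _ ↦ hB j _

end IsBddMeas

/-- The weighted transfer operator `(v_j) ↦ (w_j · E[v_{j+1}(X_{j+1}) | X_j = ·])` of the chain with
one-step kernels `κ j 1`. Its `l`-th iterate computes
`E[w_j(X_j) ⋯ w_{j+l-1}(X_{j+l-1}) v_{j+l}(X_{j+l}) | X_j = ·]`. -/
def transfer (κ : ∀ j n, Kernel (𝒳 j) (𝒳 (j + n))) (w v : ∀ j, 𝒳 j → 𝕜) : ∀ j, 𝒳 j → 𝕜 :=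
  fun j x ↦ w j x * ∫ y, v (j + 1) y ∂κ j 1 x

/-- The expectation of `∏_{a ≤ i < b} w_i(X_i)`. -/
def meanProd (μ : Measure Ω) (X : ∀ j, Ω → 𝒳 j) (w : ∀ j, 𝒳 j → 𝕜) (a b : ℕ) : 𝕜 :=
  ∫ ω, ∏ i ∈ Finset.Ico a b, w i (X i ω) ∂μ

end Transfer

end BerryEsseen

namespace IsInhomMarkov

open Set BerryEsseen

variable {μ : Measure Ω} {X : ∀ j, Ω → 𝒳 j}
  {κ : ∀ j n, Kernel (𝒳 j) (𝒳 (j + n))} {𝕜 : Type*} [RCLike 𝕜] {u v w : ∀ j, 𝒳 j → 𝕜}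

lemma isBddMeas_transfer (h : IsInhomMarkov μ X κ) (hw : IsBddMeas w) (hv : IsBddMeas v) :
    IsBddMeas (transfer κ w v) := by
  obtain ⟨A, hA0, hA⟩ := hw.exists_norm_le
  obtain ⟨B, hB0, hB⟩ := hv.exists_norm_le
  refine ⟨fun j ↦ (hw.measurable j).mul (h.measurable_integral_kernel (hv.measurable (j + 1))),
    A * B, by positivity, fun j x ↦ ?_⟩
  rw [transfer, norm_mul]
  exact mul_le_mul (hA j x) (h.norm_integral_kernel_le (hB (j + 1)) x) (norm_nonneg _) hA0

lemma isBddMeas_iterate_transfer (h : IsInhomMarkov μ X κ) (hw : IsBddMeas w) (hv : IsBddMeas v)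
    (l : ℕ) : IsBddMeas ((transfer κ w)^[l] v) := by
  induction l with
  | zero => exact hv
  | succ l ih =>
    rw [Function.iterate_succ_apply']
    exact h.isBddMeas_transfer hw ih

lemma iterate_transfer_add_smul (h : IsInhomMarkov μ X κ) (hw : IsBddMeas w)
    (hv : IsBddMeas v) (hu : IsBddMeas u) (t : 𝕜) (l : ℕ) :
    (transfer κ w)^[l] (v + t • u) = (transfer κ w)^[l] v + t • (transfer κ w)^[l] u := by
  induction l with
  | zero => rfl
  | succ l ih =>
    ext j x
    have := h.isMarkovKernel j 1
    have hvl := (h.isBddMeas_iterate_transfer hw hv l).integrable (j + 1) (κ j 1 x)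
    have hul := (h.isBddMeas_iterate_transfer hw hu l).integrable (j + 1) (κ j 1 x)
    simp only [Function.iterate_succ_apply', ih, transfer, Pi.add_apply, Pi.smul_apply,
      smul_eq_mul]
    rw [integral_add hvl (hul.const_mul t), integral_const_mul]
    ring

lemma iterate_transfer_one (h : IsInhomMarkov μ X κ) (l : ℕ) :
    (transfer κ 1)^[l] (1 : ∀ j, 𝒳 j → 𝕜) = 1 := by
  refine Function.iterate_fixed ?_ l
  ext j x
  have := h.isMarkovKernel j 1
  simp [transfer]

variable [IsFiniteMeasure μ]

lemma integrable_prod_mul (h : IsInhomMarkov μ X κ) (hw : IsBddMeas w) (hv : IsBddMeas v)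
    (j k : ℕ) :
    Integrable (fun ω ↦ (∏ i ∈ Finset.Ico j k, w i (X i ω)) * v k (X k ω)) μ := by
  obtain ⟨A, -, hA⟩ := hw.exists_norm_le
  refine (hv.integrable_comp h.meas k μ).bdd_mul (c := A ^ (Finset.Ico j k).card)
    (Finset.measurable_prod _ fun i _ ↦ hw.measurable_comp h.meas i).aestronglyMeasurable
    (ae_of_all _ fun ω ↦ ?_)
  rw [norm_prod]
  exact (Finset.prod_le_prod (fun _ _ ↦ norm_nonneg _) fun i _ ↦ hA i (X i ω)).trans_eq
    (Finset.prod_const A)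

lemma condExp_prod_mul (h : IsInhomMarkov μ X κ) (hw : IsBddMeas w) (hv : IsBddMeas v) (l : ℕ) :
    ∀ {j k : ℕ}, j + l = k →
      μ[fun ω ↦ (∏ i ∈ Finset.Ico j k, w i (X i ω)) * v k (X k ω) | pastSigma X j]
        =ᵐ[μ] fun ω ↦ (transfer κ w)^[l] v j (X j ω) := by
  induction l with
  | zero =>
    rintro j _ rfl
    have hmeas : Measurable[pastSigma X j] fun ω ↦ v j (X j ω) :=
      (hv.measurable j).comp (measurable_pastSigma X j)
    simpa using (condExp_of_stronglyMeasurable (pastSigma_le h.meas j) hmeas.stronglyMeasurable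
      (hv.integrable_comp h.meas j μ)).eventuallyEq
  | succ l ih =>
    intro j k hk
    obtain ⟨A, -, hA⟩ := hw.exists_norm_le
    have hl := h.isBddMeas_iterate_transfer hw hv l
    obtain ⟨B, -, hB⟩ := hl.exists_norm_le
    have hsplit : (fun ω ↦ (∏ i ∈ Finset.Ico j k, w i (X i ω)) * v k (X k ω)) = fun ω ↦
        w j (X j ω) * ((∏ i ∈ Finset.Ico (j + 1) k, w i (X i ω)) * v k (X k ω)) := by
      ext ω
      rw [Finset.prod_eq_prod_Ico_succ_bot (by lia), mul_assoc]
    have hpull := h.condExp_mul_of_pastSigma (ξ := fun ω ↦ w j (X j ω)) (A := A)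
      ((hw.measurable j).comp (measurable_pastSigma X j)) (fun ω ↦ hA j (X j ω))
      (h.integrable_prod_mul hw hv (j + 1) k)
    have htower := (condExp_condExp_of_le (f := fun ω ↦
      (∏ i ∈ Finset.Ico (j + 1) k, w i (X i ω)) * v k (X k ω)) (pastSigma_le_succ X j)
      (pastSigma_le h.meas (j + 1))).symm.trans
      (condExp_congr_ae (ih (j := j + 1) (k := k) (by lia)))
    rw [hsplit]
    filter_upwards [hpull, htower, h.condExp_comp (hl.measurable (j + 1)) (hB (j + 1))]
      with ω hω hω' hω''
    rw [Function.iterate_succ_apply', transfer, hω, hω', hω'']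

lemma meanProd_eq (h : IsInhomMarkov μ X κ) (hw : IsBddMeas w) (j l : ℕ) :
    meanProd μ X w j (j + l) = ∫ x, (transfer κ w)^[l] 1 j x ∂μ.map (X j) := by
  rw [integral_map (h.meas j).aemeasurable
    ((h.isBddMeas_iterate_transfer hw .one l).measurable j).aestronglyMeasurable,
    ← integral_congr_ae (h.condExp_prod_mul hw .one l rfl),
    integral_condExp (pastSigma_le h.meas j)]
  simp [meanProd]

/-- The chain only determines its kernels up to null sets, so Chapman–Kolmogorov holds a.e. -/
lemma iterate_transfer_one_apply (h : IsInhomMarkov μ X κ) (hv : IsBddMeas v) (j n : ℕ) :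
    ∀ᵐ x ∂μ.map (X j), (transfer κ 1)^[n] v j x = ∫ y, v (j + n) y ∂κ j n x := by
  obtain ⟨B, -, hB⟩ := hv.exists_norm_le
  have hmeas := (h.isBddMeas_iterate_transfer .one hv n).measurable j
  rw [ae_map_iff (h.meas j).aemeasurable (measurableSet_eq_fun hmeas
    (h.measurable_integral_kernel (hv.measurable (j + n))))]
  have hprod := h.condExp_prod_mul .one hv n (j := j) rfl
  simp only [Pi.one_apply, Finset.prod_const_one, one_mul] at hprod
  exact hprod.symm.trans (h.condExp_comp (hv.measurable (j + n)) (hB (j + n)))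

end IsInhomMarkov

namespace BerryEsseen
open Set Topology

section Minorization

variable {α E : Type*} [MeasurableSpace α] [NormedAddCommGroup E] [NormedSpace ℝ E]
  {g h : α → E} {c : E} {ρ γ : ℝ}

lemma norm_integral_sub_integral_le (ν : Measure α) [IsProbabilityMeasure ν]
    (hg : Integrable g ν) (hh : Integrable h ν) (hgh : ∀ᵐ x ∂ν, ‖g x - h x‖ ≤ ρ) :
    ‖∫ x, g x ∂ν - ∫ x, h x ∂ν‖ ≤ ρ := by
  rw [← integral_sub hg hh]
  simpa using norm_integral_le_of_norm_le_const hgh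

variable [CompleteSpace E] {k m : Measure α} [IsProbabilityMeasure m]

lemma norm_integral_sub_convexCombo_le [IsProbabilityMeasure k] (hγ : 0 ≤ γ)
    (hle : ENNReal.ofReal γ • m ≤ k) (hg : Integrable g k)
    (hgm : Integrable g m) (hc : ∀ᵐ x ∂k, ‖g x - c‖ ≤ ρ) :
    ‖∫ x, g x ∂k - (γ • ∫ x, g x ∂m + (1 - γ) • c)‖ ≤ (1 - γ) * ρ := by
  have := m.smul_finite (ENNReal.ofReal_ne_top (r := γ))
  set q := k - ENNReal.ofReal γ • m
  have hqk : q ≤ k := Measure.sub_le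
  have hdecomp : q + ENNReal.ofReal γ • m = k := Measure.sub_add_cancel_of_le hle
  have := isFiniteMeasure_of_le k hqk
  have hgq := hg.mono_measure hqk
  have hmass : q.real univ = 1 - γ := by
    have : k.real univ = q.real univ + γ := by
      rw [← hdecomp, measureReal_add_apply, measureReal_ennreal_smul_apply, probReal_univ (μ := m),
        mul_one, ENNReal.toReal_ofReal hγ]
    simp only [probReal_univ] at this
    linarith
  have hsplit : ∫ x, g x ∂k = ∫ x, g x ∂q + γ • ∫ x, g x ∂m := by
    conv_lhs => rw [← hdecomp]
    rw [integral_add_measure hgq (hgm.smul_measure ENNReal.ofReal_ne_top), integral_smul_measure,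
      ENNReal.toReal_ofReal hγ]
  have hcenter : ∫ x, g x ∂q - (1 - γ) • c = ∫ x, (g x - c) ∂q := by
    rw [integral_sub hgq (integrable_const _), integral_const, hmass]
  have hq := norm_integral_le_of_norm_le_const (hqk.absolutelyContinuous hc)
  rw [hsplit, add_comm (γ • _), add_sub_add_right_eq_sub, hcenter, mul_comm]
  rwa [hmass] at hq

lemma norm_convexCombo_sub_le (hγ : γ ∈ Ioo (0 : ℝ) 1) (hle : ENNReal.ofReal γ • m ≤ k)
    (hgm : Integrable g m) (hc : ∀ᵐ x ∂k, ‖g x - c‖ ≤ ρ) :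
    ‖(γ • ∫ x, g x ∂m + (1 - γ) • c) - c‖ ≤ ρ := by
  have hmk : m ≪ k := (Measure.absolutelyContinuous_smul (by simp [hγ.1])).trans
    hle.absolutelyContinuous
  have hm := norm_integral_sub_integral_le m hgm (integrable_const c) (hmk hc)
  rw [integral_const, probReal_univ, one_smul] at hm
  rw [show (γ • ∫ x, g x ∂m + (1 - γ) • c) - c = γ • (∫ x, g x ∂m - c) by module, norm_smul,
    Real.norm_of_nonneg hγ.1.le]
  nlinarith [hγ.1, hγ.2, norm_nonneg (∫ x, g x ∂m - c)]

end Minorization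

/-- The uniform Doeblin minorization condition: all `n₀`-step transition probabilities into the
state space at time `j + n₀` dominate `γ` times one probability measure `m (j + n₀)`. -/
structure IsDoeblin (κ : ∀ j n, Kernel (𝒳 j) (𝒳 (j + n))) (n₀ : ℕ) (γ : ℝ) : Prop where
  pos : 0 < n₀
  mem_Ioo : γ ∈ Ioo (0 : ℝ) 1
  exists_smul_le : ∃ m : ∀ j, Measure (𝒳 j), (∀ j, IsProbabilityMeasure (m j)) ∧
    ∀ j x, ENNReal.ofReal γ • m (j + n₀) ≤ κ j n₀ x

section Mixing

variable {μ : Measure Ω} {X : ∀ j, Ω → 𝒳 j} {κ : ∀ j n, Kernel (𝒳 j) (𝒳 (j + n))}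
  {n₀ : ℕ} {γ : ℝ} {𝕜 : Type*} [RCLike 𝕜] {v w : ∀ j, 𝒳 j → 𝕜}

lemma IsDoeblin.exists_ae_norm_iterate_transfer_sub_le [IsProbabilityMeasure μ]
    (hD : IsDoeblin κ n₀ γ) (h : IsInhomMarkov μ X κ) (hv : IsBddMeas v) (j : ℕ) {c : 𝕜} {ρ : ℝ}
    (hc : ∀ᵐ x ∂μ.map (X (j + n₀)), ‖v (j + n₀) x - c‖ ≤ ρ) :
    ∃ c' : 𝕜, ‖c' - c‖ ≤ ρ ∧
      ∀ᵐ x ∂μ.map (X j), ‖(transfer κ 1)^[n₀] v j x - c'‖ ≤ (1 - γ) * ρ := by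
  obtain ⟨-, hγ, m, hm, hle⟩ := hD
  have := h.isMarkovKernel j n₀
  have := hm (j + n₀)
  have := Measure.isProbabilityMeasure_map (μ := μ) (h.meas j).aemeasurable
  have hvm := hv.integrable (j + n₀) (m (j + n₀))
  have hκ := h.ae_ae_kernel hc
  obtain ⟨x, hx⟩ := hκ.exists
  refine ⟨_, norm_convexCombo_sub_le hγ (hle j x) hvm hx, ?_⟩
  filter_upwards [h.iterate_transfer_one_apply hv j n₀, hκ] with y hy hyc
  rw [hy]
  exact norm_integral_sub_convexCombo_le hγ.1.le (hle j y) (hv.integrable _ _) hvm hyc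

/-- Weights in the closed disc of radius `B - 1` about `1`. -/
structure IsNearOne (w : ∀ j, 𝒳 j → 𝕜) (B : ℝ) : Prop where
  measurable (j : ℕ) : Measurable (w j)
  norm_sub_one_le (j : ℕ) (x : 𝒳 j) : ‖w j x - 1‖ ≤ B - 1

lemma IsNearOne.norm_le {B : ℝ} (hw : IsNearOne w B) (j : ℕ) (x : 𝒳 j) : ‖w j x‖ ≤ B := by
  have := norm_le_norm_sub_add (w j x) 1
  rw [norm_one] at this
  linarith [hw.norm_sub_one_le j x]

lemma IsNearOne.isBddMeas {B : ℝ} (hw : IsNearOne w B) : IsBddMeas w :=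
  ⟨hw.measurable, max B 0, le_max_right _ _, fun j x ↦ (hw.norm_le j x).trans (le_max_left _ _)⟩

lemma ae_norm_iterate_transfer_le [IsFiniteMeasure μ] (h : IsInhomMarkov μ X κ)
    {B V : ℝ} (hw : IsNearOne w B) (hv : IsBddMeas v) (l : ℕ) : ∀ {j k : ℕ}, j + l = k →
    (∀ᵐ x ∂μ.map (X k), ‖v k x‖ ≤ V) →
    ∀ᵐ x ∂μ.map (X j), ‖(transfer κ w)^[l] v j x‖ ≤ B ^ l * V ∧
      ‖(transfer κ w)^[l] v j x - (transfer κ 1)^[l] v j x‖ ≤ (B ^ l - 1) * V := by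
  induction l with
  | zero =>
    rintro j _ rfl hV
    filter_upwards [hV] with x hx
    simpa using hx
  | succ l ih =>
    intro j k hk hV
    filter_upwards [h.ae_ae_kernel (ih (j := j + 1) (by lia) hV)] with x hx
    have := h.isMarkovKernel j 1
    have hI := norm_integral_le_of_norm_le_const (hx.mono fun _ hy ↦ hy.1)
    have hIJ := norm_integral_sub_integral_le (κ j 1 x)
      ((h.isBddMeas_iterate_transfer hw.isBddMeas hv l).integrable (j + 1) _)
      ((h.isBddMeas_iterate_transfer .one hv l).integrable (j + 1) _) (hx.mono fun _ hy ↦ hy.2)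
    simp only [probReal_univ, mul_one, Function.iterate_succ_apply', transfer, Pi.one_apply,
      one_mul] at hI ⊢
    set I := ∫ y, (transfer κ w)^[l] v (j + 1) y ∂κ j 1 x
    set J := ∫ y, (transfer κ 1)^[l] v (j + 1) y ∂κ j 1 x
    refine ⟨?_, ?_⟩
    · rw [norm_mul, pow_succ', mul_assoc]
      exact mul_le_mul (hw.norm_le j x) hI (norm_nonneg _)
        ((norm_nonneg _).trans (hw.norm_le j x))
    calc ‖w j x * I - J‖ = ‖(w j x - 1) * I + (I - J)‖ := by ring_nf
      _ ≤ (B - 1) * (B ^ l * V) + (B ^ l - 1) * V := by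
        refine norm_add_le_of_le ?_ hIJ
        rw [norm_mul]
        exact mul_le_mul (hw.norm_sub_one_le j x) hI (norm_nonneg _)
          ((norm_nonneg _).trans (hw.norm_sub_one_le j x))
      _ = (B ^ (l + 1) - 1) * V := by ring

lemma IsDoeblin.exists_ae_norm_iterate_transfer_sub_le_add [IsProbabilityMeasure μ]
    (hD : IsDoeblin κ n₀ γ) (h : IsInhomMarkov μ X κ) {B V : ℝ} (hw : IsNearOne w B)
    (hv : IsBddMeas v) (j : ℕ) {c : 𝕜} {ρ : ℝ}
    (hc : ∀ᵐ x ∂μ.map (X (j + n₀)), ‖v (j + n₀) x - c‖ ≤ ρ)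
    (hV : ∀ᵐ x ∂μ.map (X (j + n₀)), ‖v (j + n₀) x‖ ≤ V) :
    ∃ c' : 𝕜, ‖c' - c‖ ≤ ρ ∧
      ∀ᵐ x ∂μ.map (X j), ‖(transfer κ w)^[n₀] v j x - c'‖ ≤ (B ^ n₀ - 1) * V + (1 - γ) * ρ := by
  obtain ⟨c', hc', hmix⟩ := hD.exists_ae_norm_iterate_transfer_sub_le h hv j hc
  refine ⟨c', hc', ?_⟩
  filter_upwards [hmix, ae_norm_iterate_transfer_le h hw hv n₀ rfl hV] with x hx hxw
  exact (norm_sub_le_norm_sub_add_norm_sub _ _ _).trans (add_le_add hxw.2 hx)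

end Mixing

section AlmostMultiplicative

variable {μ : Measure Ω} [IsProbabilityMeasure μ] {X : ∀ j, Ω → 𝒳 j}
  {κ : ∀ j n, Kernel (𝒳 j) (𝒳 (j + n))} {n₀ : ℕ} {γ B ε V : ℝ} {v w : ∀ j, 𝒳 j → ℂ}

/-- Up to a relative error `ε`, the function `u` is the nonzero constant `c`, and `p` is `d * u` up
to an error `ρ * ‖c‖`. -/
def IsNearlyProportional {α : Type*} [MeasurableSpace α] (ν : Measure α) (u p : α → ℂ) (c d : ℂ)
    (ε ρ : ℝ) : Prop :=
  c ≠ 0 ∧ ∀ᵐ x ∂ν, ‖u x - c‖ ≤ ε * ‖c‖ ∧ ‖p x - d * u x‖ ≤ ρ * ‖c‖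

/-- The weights are so close to `1` that `n₀` steps of the weighted chain still contract, and
`ε` is an admissible relative error for `IsNearlyProportional`. -/
structure IsContractive (w : ∀ j, 𝒳 j → ℂ) (n₀ : ℕ) (γ B ε : ℝ) : Prop where
  isNearOne : IsNearOne w B
  one_le : 1 ≤ B
  eps_pos : 0 < ε
  eps_le : ε ≤ γ / 4
  pow_sub_one_le : 2 * (B ^ n₀ - 1) ≤ 3 / 4 * ε * γ

lemma exists_iterate_transfer_near_const (hD : IsDoeblin κ n₀ γ) (h : IsInhomMarkov μ X κ)
    (hw : IsContractive w n₀ γ B ε) {u : ∀ j, 𝒳 j → ℂ} (hu : IsBddMeas u) (j : ℕ) {c : ℂ}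
    (hc : ∀ᵐ x ∂μ.map (X (j + n₀)), ‖u (j + n₀) x - c‖ ≤ ε * ‖c‖) :
    ∃ c' : ℂ, (1 - ε) * ‖c‖ ≤ ‖c'‖ ∧
      ∀ᵐ x ∂μ.map (X j), ‖(transfer κ w)^[n₀] u j x - c'‖ ≤ ε * ‖c'‖ := by
  obtain ⟨hγ0, hγ1⟩ := hD.mem_Ioo
  have hε0 := hw.eps_pos
  have hε := hw.eps_le
  have hB := hw.pow_sub_one_le
  have hu2 : ∀ᵐ x ∂μ.map (X (j + n₀)), ‖u (j + n₀) x‖ ≤ 2 * ‖c‖ := by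
    filter_upwards [hc] with x hx
    nlinarith [norm_sub_norm_le (u (j + n₀) x) c, norm_nonneg c]
  obtain ⟨c', hc', hmix⟩ :=
    hD.exists_ae_norm_iterate_transfer_sub_le_add h hw.isNearOne hu j hc hu2
  have hcc' : (1 - ε) * ‖c‖ ≤ ‖c'‖ := by
    linarith [norm_sub_norm_le c c', norm_sub_rev c c']
  refine ⟨c', hcc', hmix.mono fun x hx ↦ hx.trans ?_⟩
  have hcontr : (B ^ n₀ - 1) * 2 + (1 - γ) * ε ≤ ε * (1 - ε) := by nlinarith
  calc (B ^ n₀ - 1) * (2 * ‖c‖) + (1 - γ) * (ε * ‖c‖)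
      = ((B ^ n₀ - 1) * 2 + (1 - γ) * ε) * ‖c‖ := by ring
    _ ≤ ε * (1 - ε) * ‖c‖ := by gcongr
    _ ≤ ε * ‖c'‖ := by rw [mul_assoc]; gcongr

lemma norm_sub_add_div_mul_le {u p c d δ : ℂ} {ρ r : ℝ} (hc : c ≠ 0) (hu : ‖u - c‖ ≤ ε * ‖c‖)
    (hp : ‖p - d * u - δ‖ ≤ r) (hδ : ‖δ‖ ≤ ρ) : ‖p - (d + δ / c) * u‖ ≤ r + ρ * ε := by
  have hratio : ‖δ * ((u - c) / c)‖ ≤ ρ * ε := by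
    rw [norm_mul, norm_div]
    exact mul_le_mul hδ ((div_le_iff₀ (norm_pos_iff.2 hc)).2 hu) (by positivity)
      ((norm_nonneg _).trans hδ)
  calc ‖p - (d + δ / c) * u‖ = ‖(p - d * u - δ) - δ * ((u - c) / c)‖ := by
        congr 1
        field
    _ ≤ r + ρ * ε := norm_sub_le_of_le hp hratio

lemma IsNearlyProportional.exists_iterate_transfer (hD : IsDoeblin κ n₀ γ)
    (h : IsInhomMarkov μ X κ) (hw : IsContractive w n₀ γ B ε) {u p : ∀ j, 𝒳 j → ℂ}
    (hu : IsBddMeas u) (hp : IsBddMeas p) {j : ℕ} {c d : ℂ} {ρ : ℝ} (hρ : 0 ≤ ρ)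
    (hup : IsNearlyProportional (μ.map (X (j + n₀))) (u (j + n₀)) (p (j + n₀)) c d ε ρ) :
    ∃ c' d' : ℂ, ‖d' - d‖ ≤ 2 * ρ ∧ IsNearlyProportional (μ.map (X j)) ((transfer κ w)^[n₀] u j)
      ((transfer κ w)^[n₀] p j) c' d' ε ((1 - γ / 4) * ρ) := by
  obtain ⟨hγ0, hγ1⟩ := hD.mem_Ioo
  have hε0 := hw.eps_pos
  have hε := hw.eps_le
  have hB := hw.pow_sub_one_le
  obtain ⟨hc, hae⟩ := hup
  have hc0 := norm_pos_iff.2 hc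
  obtain ⟨c', hcc', hu'⟩ :=
    exists_iterate_transfer_near_const hD h hw hu j (hae.mono fun x hx ↦ hx.1)
  have hc'0 : 0 < ‖c'‖ := by nlinarith
  have herr : ∀ᵐ x ∂μ.map (X (j + n₀)), ‖(p + (-d) • u) (j + n₀) x‖ ≤ ρ * ‖c‖ := by
    filter_upwards [hae] with x hx
    simpa [sub_eq_add_neg] using hx.2
  obtain ⟨δ, hδ, he⟩ := hD.exists_ae_norm_iterate_transfer_sub_le_add h hw.isNearOne
    (hp.add (hu.const_smul (-d))) j (c := 0) (by simpa only [sub_zero]) herr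
  rw [sub_zero] at hδ
  rw [h.iterate_transfer_add_smul hw.isNearOne.isBddMeas hp hu] at he
  refine ⟨c', d + δ / c', ?_, norm_pos_iff.1 hc'0, ?_⟩
  · have hcc : ‖c‖ ≤ 2 * ‖c'‖ := by nlinarith
    rw [add_sub_cancel_left, norm_div, div_le_iff₀ hc'0]
    nlinarith
  filter_upwards [hu', he] with x hx hex
  simp only [Pi.add_apply, Pi.smul_apply, smul_eq_mul, neg_mul, ← sub_eq_add_neg] at hex
  refine ⟨hx, (norm_sub_add_div_mul_le (norm_pos_iff.1 hc'0) hx hex hδ).trans ?_⟩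
  have hcontr : (B ^ n₀ - 1) + (1 - γ) + ε ≤ (1 - γ / 4) * (1 - ε) := by nlinarith
  calc (B ^ n₀ - 1) * (ρ * ‖c‖) + (1 - γ) * (ρ * ‖c‖) + ρ * ‖c‖ * ε
      = ((B ^ n₀ - 1) + (1 - γ) + ε) * (ρ * ‖c‖) := by ring
    _ ≤ (1 - γ / 4) * (1 - ε) * (ρ * ‖c‖) := by gcongr
    _ = (1 - γ / 4) * ρ * ((1 - ε) * ‖c‖) := by ring
    _ ≤ (1 - γ / 4) * ρ * ‖c'‖ := by
        have : 0 ≤ 1 - γ / 4 := by linarith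
        gcongr

lemma exists_isNearlyProportional_of_lt (h : IsInhomMarkov μ X κ)
    (hw : IsContractive w n₀ γ B ε) (hv : IsBddMeas v) (hV : 0 ≤ V) (hγ : γ ≤ 1) {l j k : ℕ}
    (hl : l < n₀) (hk : j + l = k) (hvV : ∀ᵐ x ∂μ.map (X k), ‖v k x‖ ≤ V) :
    IsNearlyProportional (μ.map (X j)) ((transfer κ w)^[l] 1 j) ((transfer κ w)^[l] v j)
      1 0 ε (2 * V) := by
  have hε0 := hw.eps_pos
  have hε := hw.eps_le
  have hB := hw.pow_sub_one_le
  have hBl : B ^ l ≤ B ^ n₀ := pow_le_pow_right₀ hw.one_le hl.le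
  refine ⟨one_ne_zero, ?_⟩
  filter_upwards [ae_norm_iterate_transfer_le h hw.isNearOne .one l (V := 1) hk (by simp),
    ae_norm_iterate_transfer_le h hw.isNearOne hv l hk hvV] with x h1 hv
  rw [h.iterate_transfer_one, Pi.one_apply, Pi.one_apply, mul_one] at h1
  simp only [norm_one, mul_one, zero_mul, sub_zero]
  exact ⟨by nlinarith [h1.2], hv.1.trans (by gcongr; nlinarith)⟩

/-- The bound on `d` survives the backward iteration because each increment is at most `2 * ρ`,
while `ρ` decreases geometrically with ratio `1 - γ / 4`. -/
lemma exists_isNearlyProportional (hD : IsDoeblin κ n₀ γ) (h : IsInhomMarkov μ X κ)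
    (hw : IsContractive w n₀ γ B ε) (hv : IsBddMeas v) (hV : 0 ≤ V) (l : ℕ) {j k : ℕ}
    (hk : j + l = k) (hvV : ∀ᵐ x ∂μ.map (X k), ‖v k x‖ ≤ V) :
    ∃ (c d : ℂ) (ρ : ℝ), 0 ≤ ρ ∧ ‖d‖ + 8 / γ * ρ ≤ 16 / γ * V ∧
      IsNearlyProportional (μ.map (X j)) ((transfer κ w)^[l] 1 j) ((transfer κ w)^[l] v j)
        c d ε ρ := by
  obtain ⟨hγ0, hγ1⟩ := hD.mem_Ioo
  induction l using Nat.strong_induction_on generalizing j with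
  | _ l ih =>
    rcases lt_or_ge l n₀ with hl | hl
    · refine ⟨1, 0, 2 * V, by positivity, ?_,
        exists_isNearlyProportional_of_lt h hw hv hV hγ1.le hl hk hvV⟩
      rw [norm_zero, zero_add]
      exact le_of_eq (by ring)
    · obtain ⟨l, rfl⟩ := Nat.exists_eq_add_of_le hl
      obtain ⟨c, d, ρ, hρ, hd, hup⟩ := ih l (by have := hD.pos; lia) (j := j + n₀) (by lia)
      obtain ⟨c', d', hdd', hup'⟩ := hup.exists_iterate_transfer hD h hw
        (h.isBddMeas_iterate_transfer hw.isNearOne.isBddMeas .one l)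
        (h.isBddMeas_iterate_transfer hw.isNearOne.isBddMeas hv l) hρ
      simp only [← Function.iterate_add_apply] at hup'
      refine ⟨c', d', (1 - γ / 4) * ρ, mul_nonneg (by linarith) hρ, ?_, hup'⟩
      have hincr : 8 / γ * ((1 - γ / 4) * ρ) = 8 / γ * ρ - 2 * ρ := by field
      linarith [norm_sub_norm_le d' d]

lemma exists_iterate_transfer_one_near_const (hD : IsDoeblin κ n₀ γ) (h : IsInhomMarkov μ X κ)
    (hw : IsContractive w n₀ γ B ε) (j l : ℕ) :
    ∃ c : ℂ, c ≠ 0 ∧ (∀ᵐ x ∂μ.map (X j), ‖(transfer κ w)^[l] 1 j x - c‖ ≤ ε * ‖c‖) ∧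
      ‖meanProd μ X w j (j + l) - c‖ ≤ ε * ‖c‖ := by
  have := Measure.isProbabilityMeasure_map (μ := μ) (h.meas j).aemeasurable
  obtain ⟨c, _, _, _, _, hc, hae⟩ :=
    exists_isNearlyProportional hD h hw .one zero_le_one l rfl (k := j + l) (by simp)
  have hnear := hae.mono fun x hx ↦ hx.1
  refine ⟨c, hc, hnear, ?_⟩
  rw [h.meanProd_eq hw.isNearOne.isBddMeas]
  simpa using norm_integral_sub_integral_le (μ.map (X j))
    ((h.isBddMeas_iterate_transfer hw.isNearOne.isBddMeas .one l).integrable j _)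
    (integrable_const c) hnear

lemma meanProd_ne_zero (hD : IsDoeblin κ n₀ γ) (h : IsInhomMarkov μ X κ)
    (hw : IsContractive w n₀ γ B ε) (j l : ℕ) : meanProd μ X w j (j + l) ≠ 0 := by
  obtain ⟨c, hc, -, hZ⟩ := exists_iterate_transfer_one_near_const hD h hw j l
  intro h0
  rw [h0, zero_sub, norm_neg] at hZ
  nlinarith [norm_pos_iff.2 hc, hw.eps_le, hD.mem_Ioo.2]

lemma norm_integral_iterate_transfer_le (hD : IsDoeblin κ n₀ γ) (h : IsInhomMarkov μ X κ)
    (hw : IsContractive w n₀ γ B ε) (hv : IsBddMeas v) (hV : 0 ≤ V) {l j k : ℕ}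
    (hk : j + l = k) (hvV : ∀ᵐ x ∂μ.map (X k), ‖v k x‖ ≤ V) :
    ‖∫ x, (transfer κ w)^[l] v j x ∂μ.map (X j)‖ ≤ 16 / γ * V * ‖meanProd μ X w j k‖ := by
  obtain ⟨hγ0, hγ1⟩ := hD.mem_Ioo
  have := Measure.isProbabilityMeasure_map (μ := μ) (h.meas j).aemeasurable
  have hε := hw.eps_le
  obtain ⟨c, d, ρ, hρ, hd, -, hae⟩ := exists_isNearlyProportional hD h hw hv hV l hk hvV
  have hint := (h.isBddMeas_iterate_transfer hw.isNearOne.isBddMeas .one l).integrable j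
    (μ.map (X j))
  subst hk
  rw [h.meanProd_eq hw.isNearOne.isBddMeas]
  set Z := ∫ x, (transfer κ w)^[l] 1 j x ∂μ.map (X j)
  have hZ : ‖Z - c‖ ≤ ε * ‖c‖ := by
    simpa using norm_integral_sub_integral_le _ hint (integrable_const c)
      (hae.mono fun x hx ↦ hx.1)
  have hcZ : ‖c‖ ≤ 2 * ‖Z‖ := by
    nlinarith [norm_sub_norm_le c Z, norm_sub_rev c Z, norm_nonneg c]
  have hprop := norm_integral_sub_integral_le _
    ((h.isBddMeas_iterate_transfer hw.isNearOne.isBddMeas hv l).integrable j _)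
    (hint.const_mul d) (hae.mono fun x hx ↦ hx.2)
  rw [integral_const_mul] at hprop
  have h8 : 2 ≤ 8 / γ := by rw [le_div_iff₀ hγ0]; linarith
  calc ‖∫ x, (transfer κ w)^[l] v j x ∂μ.map (X j)‖ ≤ ‖d * Z‖ + ρ * ‖c‖ :=
        norm_le_norm_add_const_of_dist_le (by rwa [dist_eq_norm])
    _ ≤ ‖d‖ * ‖Z‖ + ρ * (2 * ‖Z‖) := by rw [norm_mul]; gcongr
    _ = (‖d‖ + 2 * ρ) * ‖Z‖ := by ring
    _ ≤ (‖d‖ + 8 / γ * ρ) * ‖Z‖ := by gcongr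
    _ ≤ 16 / γ * V * ‖Z‖ := by gcongr

lemma meanProd_sub_const_mul_eq (h : IsInhomMarkov μ X κ) (hw : IsBddMeas w) (a l₁ l₂ : ℕ) (c : ℂ) :
    meanProd μ X w a (a + l₁ + l₂) - c * meanProd μ X w a (a + l₁)
      = ∫ x, (transfer κ w)^[l₁] ((transfer κ w)^[l₂] 1 + (-c) • 1) a x ∂μ.map (X a) := by
  have hg := h.isBddMeas_iterate_transfer hw .one l₂
  have hint := (h.isBddMeas_iterate_transfer hw .one l₁).integrable a (μ.map (X a))
  have hgint := (h.isBddMeas_iterate_transfer hw hg l₁).integrable a (μ.map (X a))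
  rw [h.iterate_transfer_add_smul hw hg .one, h.meanProd_eq hw, add_assoc,
    h.meanProd_eq hw, Function.iterate_add_apply, ← integral_const_mul,
    ← integral_sub hgint (hint.const_mul c)]
  simp [sub_eq_add_neg]

theorem norm_meanProd_sub_mul_le (hD : IsDoeblin κ n₀ γ) (h : IsInhomMarkov μ X κ)
    (hw : IsContractive w n₀ γ B (γ / 68)) (a l₁ l₂ : ℕ) :
    ‖meanProd μ X w a (a + l₁ + l₂)
        - meanProd μ X w a (a + l₁) * meanProd μ X w (a + l₁) (a + l₁ + l₂)‖
      ≤ 1 / 2 * ‖meanProd μ X w a (a + l₁) * meanProd μ X w (a + l₁) (a + l₁ + l₂)‖ := by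
  obtain ⟨hγ0, hγ1⟩ := hD.mem_Ioo
  have hwb := hw.isNearOne.isBddMeas
  obtain ⟨c, hc, hae, hc₂⟩ := exists_iterate_transfer_one_near_const hD h hw (a + l₁) l₂
  have he : IsBddMeas ((transfer κ w)^[l₂] 1 + (-c) • 1) :=
    (h.isBddMeas_iterate_transfer hwb .one l₂).add (IsBddMeas.one.const_smul (-c))
  have hdom := norm_integral_iterate_transfer_le hD h hw he (V := γ / 68 * ‖c‖) (by positivity)
    (rfl : a + l₁ = a + l₁) (by
      filter_upwards [hae] with x hx
      simpa [sub_eq_add_neg] using hx)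
  rw [← meanProd_sub_const_mul_eq h hwb] at hdom
  set Z₁ := meanProd μ X w a (a + l₁)
  set Z₂ := meanProd μ X w (a + l₁) (a + l₁ + l₂)
  have hcZ₂ : ‖c‖ ≤ 68 / 67 * ‖Z₂‖ := by
    nlinarith [norm_sub_norm_le c Z₂, norm_sub_rev c Z₂, norm_nonneg c]
  calc ‖meanProd μ X w a (a + l₁ + l₂) - Z₁ * Z₂‖
      = ‖(meanProd μ X w a (a + l₁ + l₂) - c * Z₁) - Z₁ * (Z₂ - c)‖ := by ring_nf
    _ ≤ 16 / γ * (γ / 68 * ‖c‖) * ‖Z₁‖ + ‖Z₁‖ * (γ / 68 * ‖c‖) :=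
        norm_sub_le_of_le hdom (by rw [norm_mul]; gcongr)
    _ = (16 + γ) / 68 * ‖Z₁‖ * ‖c‖ := by field
    _ ≤ 17 / 68 * ‖Z₁‖ * (68 / 67 * ‖Z₂‖) := by gcongr; linarith
    _ ≤ 1 / 2 * ‖Z₁ * Z₂‖ := by
        rw [norm_mul]
        nlinarith [mul_nonneg (norm_nonneg Z₁) (norm_nonneg Z₂)]

end AlmostMultiplicative

section ConditionalMoments

variable {μ : Measure Ω} {X : ∀ j, Ω → 𝒳 j} {κ : ∀ j n, Kernel (𝒳 j) (𝒳 (j + n))}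
  {f v : ∀ j, 𝒳 j → ℝ} {s : ℕ → ∀ j, 𝒳 j → ℝ}

lemma IsBddMeas.memLp_two (hv : IsBddMeas v) (j : ℕ) (ν : Measure (𝒳 j)) [IsFiniteMeasure ν] :
    MemLp (v j) 2 ν :=
  let ⟨B, _, hB⟩ := hv.exists_norm_le
  .of_bound (hv.measurable j).aestronglyMeasurable B (ae_of_all _ (hB j))

lemma IsBddMeas.memLp_two_comp (hv : IsBddMeas v) (hX : ∀ j, Measurable (X j)) (j : ℕ)
    (μ : Measure Ω) [IsFiniteMeasure μ] : MemLp (fun ω ↦ v j (X j ω)) 2 μ :=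
  let ⟨B, _, hB⟩ := hv.exists_norm_le
  .of_bound (hv.measurable_comp hX j).aestronglyMeasurable B (ae_of_all _ fun _ ↦ hB j _)

lemma integral_add_sq {α : Type*} [MeasurableSpace α] {ν : Measure α} {a b : α → ℝ}
    (ha : MemLp a 2 ν) (hb : MemLp b 2 ν) :
    ∫ x, (a x + b x) ^ 2 ∂ν = ∫ x, a x ^ 2 ∂ν + 2 * ∫ x, a x * b x ∂ν + ∫ x, b x ^ 2 ∂ν := by
  have hab : Integrable (fun x ↦ a x * b x) ν := ha.integrable_mul hb
  have hsum : Integrable (fun x ↦ a x ^ 2 + 2 * (a x * b x)) ν :=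
    ha.integrable_sq.add (hab.const_mul 2)
  rw [← integral_const_mul, ← integral_add ha.integrable_sq (hab.const_mul 2),
    ← integral_add hsum hb.integrable_sq]
  congr with x
  ring

lemma ae_abs_sub_integral_le {α : Type*} [MeasurableSpace α] (ν : Measure α)
    [IsProbabilityMeasure ν] {g : α → ℝ} (hg : Integrable g ν) {c ρ : ℝ}
    (hc : ∀ᵐ x ∂ν, |g x - c| ≤ ρ) : ∀ᵐ x ∂ν, |g x - ∫ y, g y ∂ν| ≤ 2 * ρ := by
  have hm := norm_integral_sub_integral_le ν hg (integrable_const c) hc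
  simp only [integral_const, probReal_univ, one_smul, Real.norm_eq_abs] at hm
  filter_upwards [hc] with x hx
  linarith [abs_sub_le (g x) c (∫ y, g y ∂ν), abs_sub_comm c (∫ y, g y ∂ν)]

section Sum

/-- The conditional expectation `E[∑_{i<l} s_{l-1-i,j+i}(X_{j+i}) | X_j = ·]` of an additive
functional whose summands may depend on the number `l - 1 - i` of steps that remain. -/
def condSum (κ : ∀ j n, Kernel (𝒳 j) (𝒳 (j + n))) (s : ℕ → ∀ j, 𝒳 j → ℝ) : ℕ → ∀ j, 𝒳 j → ℝ
  | 0 => 0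
  | l + 1 => s l + transfer κ 1 (condSum κ s l)

lemma isBddMeas_condSum (h : IsInhomMarkov μ X κ) (hs : ∀ l, IsBddMeas (s l)) (l : ℕ) :
    IsBddMeas (condSum κ s l) := by
  induction l with
  | zero => exact ⟨fun _ ↦ measurable_const, 0, le_rfl, fun _ _ ↦ by simp [condSum]⟩
  | succ l ih => exact (hs l).add (h.isBddMeas_transfer .one ih)

lemma integral_transfer_one [IsFiniteMeasure μ] (h : IsInhomMarkov μ X κ) (hv : IsBddMeas v)
    (j : ℕ) : ∫ ω, transfer κ 1 v j (X j ω) ∂μ = ∫ ω, v (j + 1) (X (j + 1) ω) ∂μ := by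
  obtain ⟨B, -, hB⟩ := hv.exists_norm_le
  have hcomp := h.integral_mul_comp (j := j) (ξ := fun _ ↦ (1 : ℝ)) (A := 1) measurable_const
    (by simp) (hv.measurable (j + 1)) (hB (j + 1))
  simpa [transfer] using hcomp.symm

lemma integral_condSum_succ [IsFiniteMeasure μ] (h : IsInhomMarkov μ X κ)
    (hs : ∀ l, IsBddMeas (s l)) (l j : ℕ) :
    ∫ ω, condSum κ s (l + 1) j (X j ω) ∂μ
      = ∫ ω, s l j (X j ω) ∂μ + ∫ ω, condSum κ s l (j + 1) (X (j + 1) ω) ∂μ := by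
  have hl := isBddMeas_condSum h hs l
  rw [← integral_transfer_one h hl]
  exact integral_add ((hs l).integrable_comp h.meas j μ)
    ((h.isBddMeas_transfer .one hl).integrable_comp h.meas j μ)

variable {M : ℝ}

lemma ae_abs_condSum_sub_iterate_transfer_le [IsFiniteMeasure μ] (h : IsInhomMarkov μ X κ)
    (hs : ∀ l, IsBddMeas (s l)) (hsM : ∀ l j, ∀ᵐ x ∂μ.map (X j), |s l j x| ≤ M) (l a j : ℕ) :
    ∀ᵐ x ∂μ.map (X j),
      |condSum κ s (a + l) j x - (transfer κ 1)^[a] (condSum κ s l) j x| ≤ a * M := by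
  induction a generalizing j with
  | zero => simp
  | succ a ih =>
    filter_upwards [h.ae_ae_kernel (ih (j + 1)), hsM (a + l) j] with x hx hsx
    have := h.isMarkovKernel j 1
    have hI := norm_integral_sub_integral_le (κ j 1 x)
      ((isBddMeas_condSum h hs (a + l)).integrable (j + 1) _)
      ((h.isBddMeas_iterate_transfer .one (isBddMeas_condSum h hs l) a).integrable (j + 1) _) hx
    simp only [Function.iterate_succ_apply', transfer, Pi.one_apply, one_mul, Nat.add_right_comm,
      condSum, Pi.add_apply, add_sub_assoc]
    refine (abs_add_le _ _).trans ((add_le_add hsx hI).trans_eq ?_)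
    push_cast
    ring

variable [IsProbabilityMeasure μ] {n₀ : ℕ} {γ : ℝ}

lemma IsDoeblin.exists_ae_abs_condSum_sub_le (hD : IsDoeblin κ n₀ γ) (h : IsInhomMarkov μ X κ)
    (hs : ∀ l, IsBddMeas (s l)) (hM : 0 ≤ M) (hsM : ∀ l j, ∀ᵐ x ∂μ.map (X j), |s l j x| ≤ M)
    (l j : ℕ) : ∃ c : ℝ, ∀ᵐ x ∂μ.map (X j), |condSum κ s l j x - c| ≤ n₀ * M / γ := by
  have hγ : 0 < γ := hD.mem_Ioo.1
  induction l using Nat.strong_induction_on generalizing j with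
  | _ l ih =>
  obtain hl | hl := lt_or_ge l n₀
  · have hfix : (transfer κ 1)^[l] (condSum κ s 0) = 0 :=
      Function.iterate_fixed (by ext; simp [condSum, transfer]) l
    refine ⟨0, ?_⟩
    filter_upwards [ae_abs_condSum_sub_iterate_transfer_le h hs hsM 0 l j] with x hx
    simp only [hfix, add_zero, Pi.zero_apply] at hx
    calc |condSum κ s l j x - 0| ≤ l * M := hx
      _ ≤ n₀ * M := by gcongr
      _ ≤ n₀ * M / γ := le_div_self (by positivity) hγ hD.mem_Ioo.2.le
  · obtain ⟨l, rfl⟩ := Nat.exists_eq_add_of_le hl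
    obtain ⟨c, hc⟩ := ih l (by have := hD.pos; lia) (j + n₀)
    obtain ⟨c', -, hmix⟩ :=
      hD.exists_ae_norm_iterate_transfer_sub_le h (isBddMeas_condSum h hs l) j hc
    refine ⟨c', ?_⟩
    filter_upwards [hmix, ae_abs_condSum_sub_iterate_transfer_le h hs hsM l n₀ j] with x hx hx'
    calc |condSum κ s (n₀ + l) j x - c'| ≤ n₀ * M + (1 - γ) * (n₀ * M / γ) :=
          (abs_sub_le _ _ _).trans (add_le_add hx' hx)
      _ = n₀ * M / γ := by field_simp; ring

lemma IsDoeblin.ae_abs_condSum_sub_integral_le (hD : IsDoeblin κ n₀ γ) (h : IsInhomMarkov μ X κ)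
    (hs : ∀ l, IsBddMeas (s l)) (hM : 0 ≤ M) (hsM : ∀ l j, ∀ᵐ x ∂μ.map (X j), |s l j x| ≤ M)
    (l j : ℕ) :
    ∀ᵐ x ∂μ.map (X j),
      |condSum κ s l j x - ∫ ω, condSum κ s l j (X j ω) ∂μ| ≤ 2 * (n₀ * M / γ) := by
  have := Measure.isProbabilityMeasure_map (μ := μ) (h.meas j).aemeasurable
  have hl := isBddMeas_condSum h hs l
  obtain ⟨c, hc⟩ := hD.exists_ae_abs_condSum_sub_le h hs hM hsM l j
  rw [← integral_map (h.meas j).aemeasurable (hl.measurable j).aestronglyMeasurable]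
  exact ae_abs_sub_integral_le _ (hl.integrable j _) hc

end Sum

/-- The conditional mean `E[f_j(X_j) + ⋯ + f_{j+l-1}(X_{j+l-1}) | X_j = ·]`. -/
def condMean (κ : ∀ j n, Kernel (𝒳 j) (𝒳 (j + n))) (f : ∀ j, 𝒳 j → ℝ) : ℕ → ∀ j, 𝒳 j → ℝ :=
  condSum κ fun _ ↦ f

/-- The variance, over one step of the chain, of the conditional mean of the `l` summands that
follow this step. -/
def stepVar (κ : ∀ j n, Kernel (𝒳 j) (𝒳 (j + n))) (f : ∀ j, 𝒳 j → ℝ) (l j : ℕ) (x : 𝒳 j) : ℝ :=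
  Var[condMean κ f l (j + 1); κ j 1 x]

/-- The conditional variance `Var[f_j(X_j) + ⋯ + f_{j+l-1}(X_{j+l-1}) | X_j = ·]`, as the sum of
the expected step variances. -/
def condVar (κ : ∀ j n, Kernel (𝒳 j) (𝒳 (j + n))) (f : ∀ j, 𝒳 j → ℝ) : ℕ → ∀ j, 𝒳 j → ℝ :=
  condSum κ (stepVar κ f)

/-- The block sum `f_a(X_a) + ⋯ + f_{b-1}(X_{b-1})`. -/
def blockSum (f : ∀ j, 𝒳 j → ℝ) (X : ∀ j, Ω → 𝒳 j) (a b : ℕ) (ω : Ω) : ℝ :=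
  ∑ i ∈ Finset.Ico a b, f i (X i ω)

lemma isBddMeas_condMean (h : IsInhomMarkov μ X κ) (hf : IsBddMeas f) (l : ℕ) :
    IsBddMeas (condMean κ f l) :=
  isBddMeas_condSum h (fun _ ↦ hf) l

lemma variance_kernel_eq_transfer_sub (h : IsInhomMarkov μ X κ) (hv : IsBddMeas v) (j : ℕ)
    (x : 𝒳 j) :
    Var[v (j + 1); κ j 1 x]
      = transfer κ 1 (fun i y ↦ v i y ^ 2) j x - transfer κ 1 v j x ^ 2 := by
  have := h.isMarkovKernel j 1
  simp [variance_eq_sub (hv.memLp_two (j + 1) (κ j 1 x)), transfer]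

lemma isBddMeas_variance_kernel (h : IsInhomMarkov μ X κ) (hv : IsBddMeas v) :
    IsBddMeas fun j x ↦ Var[v (j + 1); κ j 1 x] := by
  have hsq := h.isBddMeas_transfer .one (hv.continuous_comp (continuous_pow 2))
  have hT := (h.isBddMeas_transfer .one hv).continuous_comp (continuous_neg.comp (continuous_pow 2))
  convert hsq.add hT using 3 with j x
  rw [variance_kernel_eq_transfer_sub h hv, sub_eq_add_neg]
  rfl

lemma isBddMeas_stepVar (h : IsInhomMarkov μ X κ) (hf : IsBddMeas f) (l : ℕ) :
    IsBddMeas (stepVar κ f l) :=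
  isBddMeas_variance_kernel h (isBddMeas_condMean h hf l)

lemma isBddMeas_condVar (h : IsInhomMarkov μ X κ) (hf : IsBddMeas f) (l : ℕ) :
    IsBddMeas (condVar κ f l) :=
  isBddMeas_condSum h (isBddMeas_stepVar h hf) l

lemma condVar_nonneg (l j : ℕ) (x : 𝒳 j) : 0 ≤ condVar κ f l j x := by
  induction l generalizing j x with
  | zero => exact le_rfl
  | succ l ih =>
    refine add_nonneg (variance_nonneg _ _) ?_
    simpa [transfer] using integral_nonneg (ih (j + 1))

lemma measurable_blockSum (hX : ∀ j, Measurable (X j)) (hf : ∀ j, Measurable (f j)) (a b : ℕ) :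
    Measurable (blockSum f X a b) :=
  Finset.measurable_sum _ fun i _ ↦ (hf i).comp (hX i)

lemma abs_blockSum_le {Ω' : Type*} {𝒴 : ℕ → Type*} {f : ∀ j, 𝒴 j → ℝ} {X : ∀ j, Ω' → 𝒴 j}
    {C : ℝ} (hC : ∀ j x, |f j x| ≤ C) (a b : ℕ) (ω : Ω') :
    |blockSum f X a b ω| ≤ (b - a : ℕ) * C := by
  refine (Finset.abs_sum_le_sum_abs _ _).trans ((Finset.sum_le_sum fun i _ ↦ hC i _).trans_eq ?_)
  simp

variable [IsFiniteMeasure μ]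

lemma integral_condMean_eq_zero (h : IsInhomMarkov μ X κ) (hf : IsBddMeas f)
    (hmean : ∀ j, ∫ ω, f j (X j ω) ∂μ = 0) (l j : ℕ) :
    ∫ ω, condMean κ f l j (X j ω) ∂μ = 0 := by
  induction l generalizing j with
  | zero => simp [condMean, condSum]
  | succ l ih =>
    refine (integral_condSum_succ h (fun _ ↦ hf) l j).trans ?_
    rw [hmean, zero_add]
    exact ih (j + 1)

/-- Orthogonality of the innovation `v(X_{j+1}) - E[v(X_{j+1}) | X_j]` to the past. -/
lemma integral_add_sq_succ (h : IsInhomMarkov μ X κ) (hv : IsBddMeas v) {j : ℕ} {ξ : Ω → ℝ}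
    (hξ : Measurable[pastSigma X j] ξ) {A : ℝ} (hA : ∀ ω, |ξ ω| ≤ A) :
    ∫ ω, (ξ ω + v (j + 1) (X (j + 1) ω)) ^ 2 ∂μ
      = ∫ ω, (ξ ω + transfer κ 1 v j (X j ω)) ^ 2 ∂μ
        + ∫ ω, Var[v (j + 1); κ j 1 (X j ω)] ∂μ := by
  obtain ⟨B, -, hB⟩ := hv.exists_norm_le
  have hT := h.isBddMeas_transfer (w := 1) .one hv
  have hv2 : IsBddMeas fun i y ↦ v i y ^ 2 := hv.continuous_comp (continuous_pow 2)
  have hξ2 : MemLp ξ 2 μ := .of_bound (hξ.mono (pastSigma_le h.meas j) le_rfl).aestronglyMeasurable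
    A (ae_of_all _ hA)
  have hcross : ∫ ω, ξ ω * v (j + 1) (X (j + 1) ω) ∂μ = ∫ ω, ξ ω * transfer κ 1 v j (X j ω) ∂μ := by
    simpa [transfer] using h.integral_mul_comp hξ hA (hv.measurable (j + 1)) (hB (j + 1))
  rw [integral_add_sq hξ2 (hv.memLp_two_comp h.meas (j + 1) μ),
    integral_add_sq hξ2 (hT.memLp_two_comp h.meas j μ), hcross,
    ← integral_transfer_one h hv2 j]
  simp_rw [variance_kernel_eq_transfer_sub h hv]
  rw [integral_sub ((h.isBddMeas_transfer .one hv2).integrable_comp h.meas j μ)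
    (hT.memLp_two_comp h.meas j μ).integrable_sq]
  ring

/-- The law of total variance along the chain; the past `ξ` is carried along for the induction. -/
lemma integral_add_blockSum_sq (h : IsInhomMarkov μ X κ) (hf : IsBddMeas f) (l : ℕ) :
    ∀ {j k : ℕ} {ξ : Ω → ℝ} {A : ℝ}, j + l = k → Measurable[pastSigma X j] ξ →
      (∀ ω, |ξ ω| ≤ A) →
      ∫ ω, (ξ ω + blockSum f X j k ω) ^ 2 ∂μ
        = ∫ ω, (ξ ω + condMean κ f l j (X j ω)) ^ 2 ∂μ + ∫ ω, condVar κ f l j (X j ω) ∂μ := by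
  obtain ⟨B, -, hB⟩ := hf.exists_norm_le
  induction l with
  | zero =>
    rintro j k ξ A rfl - -
    simp [condMean, condVar, condSum, blockSum]
  | succ l ih =>
    intro j k ξ A hk hξ hA
    have hξ' : Measurable[pastSigma X j] fun ω ↦ ξ ω + f j (X j ω) :=
      hξ.add ((hf.measurable j).comp (measurable_pastSigma X j))
    have hA' (ω : Ω) : |ξ ω + f j (X j ω)| ≤ A + B :=
      (abs_add_le _ _).trans (add_le_add (hA ω) (hB j _))
    have hbot (ω : Ω) : ξ ω + blockSum f X j k ω
        = ξ ω + f j (X j ω) + blockSum f X (j + 1) k ω := by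
      rw [blockSum, Finset.sum_eq_sum_Ico_succ_bot (by lia), blockSum, add_assoc]
    simp_rw [hbot]
    rw [ih (by lia) (hξ'.mono (pastSigma_le_succ X j) le_rfl) hA',
      integral_add_sq_succ h (isBddMeas_condMean h hf l) hξ' hA', condVar,
      integral_condSum_succ h (isBddMeas_stepVar h hf) l j, add_assoc]
    simp only [stepVar, condMean, condSum, Pi.add_apply, add_assoc]

end ConditionalMoments

section ExponentialMoments

section Integrals

variable {α : Type*} [MeasurableSpace α] {ν : Measure α}

lemma integral_mul_sq_le {a b : α → ℝ} (ha : MemLp a 2 ν) (hb : MemLp b 2 ν) :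
    (∫ x, a x * b x ∂ν) ^ 2 ≤ (∫ x, a x ^ 2 ∂ν) * ∫ x, b x ^ 2 ∂ν := by
  have hquad (t : ℝ) : 0 ≤ (∫ x, b x ^ 2 ∂ν) * (t * t) + 2 * (∫ x, a x * b x ∂ν) * t
      + ∫ x, a x ^ 2 ∂ν := by
    have hsq := integral_add_sq ha (hb.const_mul t)
    simp only [mul_pow, mul_left_comm _ t, integral_const_mul] at hsq
    have : 0 ≤ ∫ x, (a x + t * b x) ^ 2 ∂ν := integral_nonneg fun _ ↦ sq_nonneg _
    linarith
  have := discrim_le_zero hquad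
  rw [discrim] at this
  linarith

variable {h : α → ℝ} {H r : ℝ} [IsProbabilityMeasure ν]

lemma memLp_exp_mul_of_abs_le (hh : AEStronglyMeasurable h ν) (hH : ∀ᵐ x ∂ν, |h x| ≤ H)
    (r : ℝ) (p : ℝ≥0∞) : MemLp (fun x ↦ Real.exp (r * h x)) p ν := by
  refine .of_bound (Real.continuous_exp.comp_aestronglyMeasurable (hh.const_mul r))
    (Real.exp (|r| * H)) ?_
  filter_upwards [hH] with x hx
  rw [Real.norm_of_nonneg (Real.exp_pos _).le, Real.exp_le_exp]
  calc r * h x ≤ |r| * |h x| := (le_abs_self _).trans_eq (abs_mul r (h x))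
    _ ≤ |r| * H := by gcongr

lemma mgf_le_exp_mul_one_add_variance (hh : AEStronglyMeasurable h ν)
    (hH : ∀ᵐ x ∂ν, |h x| ≤ H) (hr : |r| * (2 * H) ≤ 1) :
    mgf h ν r ≤ Real.exp (r * ∫ x, h x ∂ν) * (1 + r ^ 2 * Var[h; ν]) := by
  have hh2 : MemLp h 2 ν := .of_bound hh H hH
  have hhi : Integrable h ν := hh2.integrable one_le_two
  have hcenter : Integrable (fun x ↦ h x - ∫ y, h y ∂ν) ν := hhi.sub (integrable_const _)
  have hlin : Integrable (fun x ↦ 1 + r * (h x - ∫ y, h y ∂ν)) ν :=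
    (integrable_const _).add (hcenter.const_mul r)
  have hquad : Integrable (fun x ↦ r ^ 2 * (h x - ∫ y, h y ∂ν) ^ 2) ν :=
    (hh2.sub (memLp_const _)).integrable_sq.const_mul _
  have hsum : Integrable (fun x ↦ 1 + r * (h x - ∫ y, h y ∂ν) + r ^ 2 * (h x - ∫ y, h y ∂ν) ^ 2)
      ν := hlin.add hquad
  have hmean : |∫ y, h y ∂ν| ≤ H := by
    simpa using norm_integral_le_of_norm_le_const (μ := ν) (f := h) (C := H) hH
  have hbound : ∀ᵐ x ∂ν, Real.exp (r * h x) ≤ Real.exp (r * ∫ y, h y ∂ν)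
      * (1 + r * (h x - ∫ y, h y ∂ν) + r ^ 2 * (h x - ∫ y, h y ∂ν) ^ 2) := by
    filter_upwards [hH] with x hx
    have hle : |r * (h x - ∫ y, h y ∂ν)| ≤ 1 := by
      rw [abs_mul]
      refine (mul_le_mul_of_nonneg_left ?_ (abs_nonneg r)).trans hr
      linarith [abs_sub (h x) (∫ y, h y ∂ν)]
    have htaylor := le_of_abs_le (Real.abs_exp_sub_one_sub_id_le hle)
    rw [show r * h x = r * ∫ y, h y ∂ν + r * (h x - ∫ y, h y ∂ν) by ring, Real.exp_add]
    gcongr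
    linarith [mul_pow r (h x - ∫ y, h y ∂ν) 2]
  refine (integral_mono_ae ((memLp_exp_mul_of_abs_le hh hH r 1).integrable le_rfl)
    (hsum.const_mul _) hbound).trans_eq ?_
  rw [integral_const_mul, integral_add hlin hquad, integral_add (integrable_const _)
    (hcenter.const_mul r), integral_const_mul, integral_const_mul, integral_sub hhi
    (integrable_const _), variance_eq_integral hh.aemeasurable]
  simp

lemma sq_integral_le_mgf_mul_integral {V W : α → ℝ} (hV : AEStronglyMeasurable V ν)
    (hh : AEStronglyMeasurable h ν) (hH : ∀ᵐ x ∂ν, |h x| ≤ H) (hW : Integrable W ν)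
    (hVW : ∀ᵐ x ∂ν, V x ^ 2 ≤ Real.exp (2 * r * h x) * W x) :
    (∫ x, V x ∂ν) ^ 2 ≤ mgf h ν (2 * r) * ∫ x, W x ∂ν := by
  have hrest : ∀ᵐ x ∂ν, (V x * Real.exp (-r * h x)) ^ 2 ≤ W x := by
    filter_upwards [hVW] with x hx
    have hexp : Real.exp (2 * r * h x) * Real.exp (-r * h x) ^ 2 = 1 := by
      rw [← Real.exp_nat_mul, ← Real.exp_add, Real.exp_eq_one_iff]
      push_cast
      ring
    calc (V x * Real.exp (-r * h x)) ^ 2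
        ≤ Real.exp (2 * r * h x) * W x * Real.exp (-r * h x) ^ 2 := by
          rw [mul_pow]; gcongr
      _ = W x := by rw [mul_right_comm, hexp, one_mul]
  have hrestm : AEStronglyMeasurable (fun x ↦ V x * Real.exp (-r * h x)) ν :=
    hV.mul (Real.continuous_exp.comp_aestronglyMeasurable (hh.const_mul (-r)))
  have hrest2 : Integrable (fun x ↦ (V x * Real.exp (-r * h x)) ^ 2) ν :=
    hW.mono' (hrestm.pow 2) <| hrest.mono fun x hx ↦ by
      rwa [Real.norm_of_nonneg (sq_nonneg _)]
  have hcs := integral_mul_sq_le (memLp_exp_mul_of_abs_le hh hH r 2)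
    ((memLp_two_iff_integrable_sq hrestm).2 hrest2)
  have hprod (x : α) : Real.exp (r * h x) * (V x * Real.exp (-r * h x)) = V x := by
    rw [mul_left_comm, ← Real.exp_add]; simp
  have hsq (x : α) : Real.exp (r * h x) ^ 2 = Real.exp (2 * r * h x) := by
    rw [← Real.exp_nat_mul]; push_cast; ring_nf
  simp only [hprod, hsq] at hcs
  exact hcs.trans (mul_le_mul_of_nonneg_left (integral_mono_ae hrest2 hW hrest) mgf_nonneg)

/-- One step of the recursion for conditional exponential moments. Squaring `V` leaves room for
Cauchy–Schwarz, which separates the conditional mean `h` from the conditional variance `G`. -/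
lemma integral_sq_le_exp_mul_one_add {V G : α → ℝ} (hV : AEStronglyMeasurable V ν)
    (hh : AEStronglyMeasurable h ν) (hG : Integrable G ν) (hH : ∀ᵐ x ∂ν, |h x| ≤ H)
    (hr : 4 * |r| * H ≤ 1) (hG0 : 0 ≤ ∫ x, G x ∂ν) (hG1 : 8 * r ^ 2 * ∫ x, G x ∂ν ≤ 1)
    (hVhG : ∀ᵐ x ∂ν, V x ^ 2 ≤ Real.exp (2 * r * h x) * (1 + 8 * r ^ 2 * G x)) :
    (∫ x, V x ∂ν) ^ 2
      ≤ Real.exp (2 * r * ∫ x, h x ∂ν) * (1 + 8 * r ^ 2 * (Var[h; ν] + ∫ x, G x ∂ν)) := by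
  have hGi : Integrable (fun x ↦ 1 + 8 * r ^ 2 * G x) ν :=
    (integrable_const _).add (hG.const_mul _)
  have hmgf := mgf_le_exp_mul_one_add_variance (r := 2 * r) hh hH (by
    rw [abs_mul, abs_two]; linarith)
  calc (∫ x, V x ∂ν) ^ 2
      ≤ mgf h ν (2 * r) * ∫ x, (1 + 8 * r ^ 2 * G x) ∂ν :=
        sq_integral_le_mgf_mul_integral hV hh hH hGi hVhG
    _ ≤ Real.exp (2 * r * ∫ x, h x ∂ν) * (1 + (2 * r) ^ 2 * Var[h; ν])
        * (1 + 8 * r ^ 2 * ∫ x, G x ∂ν) := by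
      rw [integral_add (integrable_const _) (hG.const_mul _), integral_const_mul]
      simp only [integral_const, probReal_univ, one_smul]
      gcongr
    _ ≤ _ := by
      rw [mul_assoc]
      gcongr
      nlinarith [mul_nonneg (sq_nonneg r) (variance_nonneg h ν)]

lemma norm_cexp_mul_sub_one_le {r : ℝ} (hr : 0 < r) {z : ℂ} (hz : ‖z‖ ≤ r / 2) (y : ℝ) :
    ‖Complex.exp (z * y) - 1‖ ≤ 2 * ‖z‖ / r * (Real.exp (r * y) + Real.exp (-r * y)) := by
  have hnorm : ‖z * y‖ = ‖z‖ * |y| := by rw [norm_mul, Complex.norm_real, Real.norm_eq_abs]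
  calc ‖Complex.exp (z * y) - 1‖ ≤ ‖z‖ * |y| * Real.exp (‖z‖ * |y|) :=
        (norm_exp_sub_one_le_norm_mul_exp _).trans_eq (by rw [hnorm])
    _ = 2 * ‖z‖ / r * (r / 2 * |y| * Real.exp (‖z‖ * |y|)) := by field_simp
    _ ≤ 2 * ‖z‖ / r * (Real.exp (r / 2 * |y|) * Real.exp (r / 2 * |y|)) := by
      gcongr
      linarith [Real.add_one_le_exp (r / 2 * |y|)]
    _ = 2 * ‖z‖ / r * Real.exp |r * y| := by
      rw [← Real.exp_add, abs_mul, abs_of_pos hr]; ring_nf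
    _ ≤ _ := by
      rw [neg_mul]
      gcongr
      exact Real.exp_abs_le _

lemma norm_complexMGF_sub_one_le {Y : α → ℝ} (hr : 0 < r)
    (hpos : Integrable (fun x ↦ Real.exp (r * Y x)) ν)
    (hneg : Integrable (fun x ↦ Real.exp (-r * Y x)) ν) {z : ℂ} (hz : ‖z‖ ≤ r / 2) :
    ‖complexMGF Y ν z - 1‖ ≤ 2 * ‖z‖ / r * (mgf Y ν r + mgf Y ν (-r)) := by
  have hY : AEMeasurable Y ν := aemeasurable_of_integrable_exp_mul (by linarith) hpos hneg
  have hre : |z.re| ≤ |r| := by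
    rw [abs_of_pos hr]; linarith [Complex.abs_re_le_norm z]
  have hint : Integrable (fun x ↦ Complex.exp (z * Y x)) ν :=
    integrable_cexp_mul_of_re_mem_integrableExpSet hY (integrable_exp_mul_of_abs_le hpos hneg hre)
  have hsub : complexMGF Y ν z - 1 = ∫ x, (Complex.exp (z * Y x) - 1) ∂ν := by
    rw [integral_sub hint (integrable_const _)]; simp [complexMGF]
  rw [hsub]
  have hsum : Integrable (fun x ↦ Real.exp (r * Y x) + Real.exp (-r * Y x)) ν := hpos.add hneg
  refine (norm_integral_le_of_norm_le (hsum.const_mul _)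
    (ae_of_all _ fun x ↦ norm_cexp_mul_sub_one_le hr hz (Y x))).trans_eq ?_
  rw [integral_const_mul, integral_add hpos hneg, mgf, mgf]

end Integrals

end ExponentialMoments

section MartingaleBounds

variable {μ : Measure Ω} [IsProbabilityMeasure μ] {X : ∀ j, Ω → 𝒳 j}
  {κ : ∀ j n, Kernel (𝒳 j) (𝒳 (j + n))} {n₀ : ℕ} {γ C H A r : ℝ} {f : ∀ j, 𝒳 j → ℝ}

lemma IsDoeblin.ae_abs_condMean_le (hD : IsDoeblin κ n₀ γ) (h : IsInhomMarkov μ X κ)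
    (hf : IsBddMeas f) (hC : 0 ≤ C) (hfC : ∀ j x, |f j x| ≤ C)
    (hmean : ∀ j, ∫ ω, f j (X j ω) ∂μ = 0) (l j : ℕ) :
    ∀ᵐ x ∂μ.map (X j), |condMean κ f l j x| ≤ 2 * (n₀ * C / γ) := by
  filter_upwards [hD.ae_abs_condSum_sub_integral_le h (fun _ ↦ hf) hC
    (fun _ j ↦ ae_of_all _ (hfC j)) l j] with x hx
  rwa [← condMean, integral_condMean_eq_zero h hf hmean, sub_zero] at hx

lemma ae_stepVar_le (h : IsInhomMarkov μ X κ) (hf : IsBddMeas f) {l j : ℕ}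
    (hH : ∀ᵐ x ∂μ.map (X (j + 1)), |condMean κ f l (j + 1) x| ≤ H) :
    ∀ᵐ x ∂μ.map (X j), stepVar κ f l j x ≤ H ^ 2 := by
  filter_upwards [h.ae_ae_kernel hH] with x hx
  have := h.isMarkovKernel j 1
  refine (variance_le_sq_of_bounded (a := -H) (b := H) (hx.mono fun y hy ↦ abs_le.1 hy)
    ((isBddMeas_condMean h hf l).measurable (j + 1)).aemeasurable).trans_eq ?_
  ring

lemma IsDoeblin.ae_condVar_le (hD : IsDoeblin κ n₀ γ) (h : IsInhomMarkov μ X κ)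
    (hf : IsBddMeas f) (hH : ∀ l j, ∀ᵐ x ∂μ.map (X j), |condMean κ f l j x| ≤ H) (l j : ℕ) :
    ∀ᵐ x ∂μ.map (X j),
      condVar κ f l j x ≤ ∫ ω, condVar κ f l j (X j ω) ∂μ + 2 * (n₀ * H ^ 2 / γ) := by
  have hstep (l j : ℕ) : ∀ᵐ x ∂μ.map (X j), |stepVar κ f l j x| ≤ H ^ 2 := by
    filter_upwards [ae_stepVar_le h hf (hH l (j + 1))] with x hx
    rwa [stepVar, abs_of_nonneg (variance_nonneg _ _)]
  filter_upwards [hD.ae_abs_condSum_sub_integral_le h (isBddMeas_stepVar h hf) (sq_nonneg H)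
    hstep l j] with x hx
  exact sub_le_iff_le_add'.1 (le_of_abs_le hx)

lemma integral_condVar_le_integral_sq_blockSum (h : IsInhomMarkov μ X κ) (hf : IsBddMeas f)
    (l j : ℕ) :
    ∫ ω, condVar κ f l j (X j ω) ∂μ ≤ ∫ ω, blockSum f X j (j + l) ω ^ 2 ∂μ := by
  have htotal := integral_add_blockSum_sq h hf l rfl (j := j) (ξ := fun _ ↦ 0) (A := 0)
    measurable_const (by simp)
  have : 0 ≤ ∫ ω, condMean κ f l j (X j ω) ^ 2 ∂μ := integral_nonneg fun _ ↦ sq_nonneg _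
  simp only [zero_add] at htotal
  linarith

lemma isBddMeas_exp_mul (hf : IsBddMeas f) (r : ℝ) : IsBddMeas fun j x ↦ Real.exp (r * f j x) :=
  hf.continuous_comp (g := fun y ↦ Real.exp (r * y)) (by fun_prop)

lemma condMean_succ_apply (l j : ℕ) (x : 𝒳 j) :
    condMean κ f (l + 1) j x = f j x + ∫ y, condMean κ f l (j + 1) y ∂κ j 1 x := by
  simp [condMean, condSum, transfer]

lemma condVar_succ_apply (l j : ℕ) (x : 𝒳 j) :
    condVar κ f (l + 1) j x = stepVar κ f l j x + ∫ y, condVar κ f l (j + 1) y ∂κ j 1 x := by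
  simp [condVar, condSum, transfer]

lemma sq_iterate_transfer_exp_le (h : IsInhomMarkov μ X κ) (hf : IsBddMeas f)
    (hH : ∀ l j, ∀ᵐ x ∂μ.map (X j), |condMean κ f l j x| ≤ H) (hr : 4 * |r| * H ≤ 1)
    (hA : ∀ l j, ∫ ω, condVar κ f l j (X j ω) ∂μ ≤ A →
      ∀ᵐ x ∂μ.map (X j), 8 * r ^ 2 * condVar κ f l j x ≤ 1) (l : ℕ) :
    ∀ j, ∫ ω, condVar κ f l j (X j ω) ∂μ ≤ A → ∀ᵐ x ∂μ.map (X j),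
      (transfer κ fun j x ↦ Real.exp (r * f j x))^[l] 1 j x ^ 2
        ≤ Real.exp (2 * r * condMean κ f l j x) * (1 + 8 * r ^ 2 * condVar κ f l j x) := by
  induction l with
  | zero => simp [condMean, condVar, condSum]
  | succ l ih =>
    intro j hvar
    have hnext : ∫ ω, condVar κ f l (j + 1) (X (j + 1) ω) ∂μ ≤ A := by
      have hsucc := integral_condSum_succ h (isBddMeas_stepVar h hf) l j
      have : 0 ≤ ∫ ω, stepVar κ f l j (X j ω) ∂μ := integral_nonneg fun _ ↦ variance_nonneg _ _
      rw [condVar] at hvar ⊢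
      linarith
    filter_upwards [h.ae_ae_kernel (ih (j + 1) hnext), h.ae_ae_kernel (hH l (j + 1)),
      hA (l + 1) j hvar] with x hV hHx hvarx
    have := h.isMarkovKernel j 1
    have hG0 : 0 ≤ ∫ y, condVar κ f l (j + 1) y ∂κ j 1 x :=
      integral_nonneg (condVar_nonneg l (j + 1))
    rw [condVar_succ_apply, mul_add] at hvarx
    have hstep0 : 0 ≤ 8 * r ^ 2 * stepVar κ f l j x :=
      mul_nonneg (by positivity) (variance_nonneg _ _)
    have hstep := integral_sq_le_exp_mul_one_add
      ((h.isBddMeas_iterate_transfer (isBddMeas_exp_mul hf r) .one l).measurable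
        (j + 1)).aestronglyMeasurable
      ((isBddMeas_condMean h hf l).measurable (j + 1)).aestronglyMeasurable
      ((isBddMeas_condVar h hf l).integrable (j + 1) _) hHx hr hG0 (by linarith) hV
    have hexp : Real.exp (r * f j x) ^ 2 = Real.exp (2 * r * f j x) := by
      rw [← Real.exp_nat_mul]; push_cast; ring_nf
    rw [Function.iterate_succ_apply', transfer, mul_pow, hexp, condMean_succ_apply,
      condVar_succ_apply, mul_add (2 * r), Real.exp_add, mul_assoc (Real.exp _)]
    gcongr
    exact hstep

lemma mgf_blockSum_eq (h : IsInhomMarkov μ X κ) (hf : IsBddMeas f) (r : ℝ) (j l : ℕ) :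
    mgf (blockSum f X j (j + l)) μ r
      = ∫ x, (transfer κ fun j x ↦ Real.exp (r * f j x))^[l] 1 j x ∂μ.map (X j) := by
  rw [← h.meanProd_eq (isBddMeas_exp_mul hf r), mgf, meanProd]
  simp only [blockSum, Finset.mul_sum, Real.exp_sum]

lemma IsDoeblin.mgf_blockSum_le_two (hD : IsDoeblin κ n₀ γ) (h : IsInhomMarkov μ X κ)
    (hf : IsBddMeas f) (hH : ∀ l j, ∀ᵐ x ∂μ.map (X j), |condMean κ f l j x| ≤ H)
    (hr : 4 * |r| * H ≤ 1) (hrA : 8 * r ^ 2 * (A + 2 * (n₀ * H ^ 2 / γ)) ≤ 1) {j l : ℕ}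
    (hA : ∫ ω, blockSum f X j (j + l) ω ^ 2 ∂μ ≤ A) :
    mgf (blockSum f X j (j + l)) μ r ≤ 2 := by
  have hvar (l j : ℕ) (hA : ∫ ω, condVar κ f l j (X j ω) ∂μ ≤ A) :
      ∀ᵐ x ∂μ.map (X j), 8 * r ^ 2 * condVar κ f l j x ≤ 1 := by
    filter_upwards [hD.ae_condVar_le h hf hH l j] with x hx
    refine le_trans ?_ hrA
    gcongr
    linarith
  have hA' := (integral_condVar_le_integral_sq_blockSum h hf l j).trans hA
  have hU : ∀ᵐ x ∂μ.map (X j), (transfer κ fun j x ↦ Real.exp (r * f j x))^[l] 1 j x ≤ 2 := by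
    filter_upwards [sq_iterate_transfer_exp_le h hf hH hr hvar l j hA', hH l j, hvar l j hA']
      with x hsq hHx hvarx
    have hexp : Real.exp (2 * r * condMean κ f l j x) ≤ 2 := by
      have hle : 2 * r * condMean κ f l j x ≤ 1 / 2 := by
        have : 2 * r * condMean κ f l j x ≤ 2 * |r| * H := by
          refine (le_abs_self _).trans ?_
          rw [abs_mul, abs_mul, abs_two]
          gcongr
        linarith
      refine (Real.exp_le_exp.2 (hle.trans ?_)).trans_eq (Real.exp_log two_pos)
      linarith [Real.log_two_gt_d9]
    refine le_of_sq_le_sq (hsq.trans ?_) two_pos.le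
    have : 0 ≤ 8 * r ^ 2 * condVar κ f l j x := mul_nonneg (by positivity) (condVar_nonneg l j x)
    nlinarith [Real.exp_pos (2 * r * condMean κ f l j x)]
  have := Measure.isProbabilityMeasure_map (μ := μ) (h.meas j).aemeasurable
  rw [mgf_blockSum_eq h hf]
  refine (integral_mono_ae ((h.isBddMeas_iterate_transfer (isBddMeas_exp_mul hf r) .one
    l).integrable j _) (integrable_const 2) hU).trans_eq ?_
  simp

lemma integrable_exp_mul_blockSum (hX : ∀ j, Measurable (X j)) (hf : IsBddMeas f) (r : ℝ)
    (j k : ℕ) : Integrable (fun ω ↦ Real.exp (r * blockSum f X j k ω)) μ := by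
  obtain ⟨C, -, hC⟩ := hf.exists_norm_le
  exact (memLp_exp_mul_of_abs_le (measurable_blockSum hX hf.measurable j k).aestronglyMeasurable
    (ae_of_all _ (abs_blockSum_le hC j k)) r 1).integrable le_rfl

/-- On blocks of bounded variance the complex moment generating function stays close to `1` on a
disc that does not depend on the block. -/
lemma IsDoeblin.exists_norm_complexMGF_blockSum_sub_one_le (hD : IsDoeblin κ n₀ γ)
    (h : IsInhomMarkov μ X κ) (hf : IsBddMeas f) (hmean : ∀ j, ∫ ω, f j (X j ω) ∂μ = 0)
    (hA : 0 ≤ A) :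
    ∃ r > 0, ∀ j l, ∫ ω, blockSum f X j (j + l) ω ^ 2 ∂μ ≤ A →
      ∀ z : ℂ, ‖z‖ < r → ‖complexMGF (blockSum f X j (j + l)) μ z - 1‖ ≤ 1 / 2 := by
  obtain ⟨C, hC, hfC⟩ := hf.exists_norm_le
  have hγ := hD.mem_Ioo.1
  set H : ℝ := 2 * (n₀ * C / γ)
  set G : ℝ := A + 2 * (n₀ * H ^ 2 / γ)
  have hH0 : 0 ≤ H := by positivity
  have hG0 : 0 ≤ G := by positivity
  have hcond := hD.ae_abs_condMean_le h hf hC hfC hmean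
  set r : ℝ := 1 / (4 * (1 + H + G)) with hr
  have hr0 : 0 < r := by positivity
  have hrinv : r * (4 * (1 + H + G)) = 1 := by rw [hr]; field_simp
  have hrH : 4 * |r| * H ≤ 1 := by rw [abs_of_pos hr0]; nlinarith
  have hrG : 8 * r ^ 2 * G ≤ 1 := by
    have hr4 : r ≤ 1 / 4 := by nlinarith
    have hrG4 : r * G ≤ 1 / 4 := by nlinarith
    calc 8 * r ^ 2 * G = 8 * r * (r * G) := by ring
      _ ≤ 8 * (1 / 4) * (1 / 4) := by gcongr
      _ ≤ 1 := by norm_num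
  refine ⟨r / 16, by positivity, fun j l hvar z hz ↦ ?_⟩
  have hpos := hD.mgf_blockSum_le_two h hf hcond hrH hrG hvar
  have hneg := hD.mgf_blockSum_le_two (r := -r) h hf hcond (by rwa [abs_neg])
    (by rwa [neg_sq]) hvar
  calc ‖complexMGF (blockSum f X j (j + l)) μ z - 1‖
      ≤ 2 * ‖z‖ / r * (mgf (blockSum f X j (j + l)) μ r + mgf (blockSum f X j (j + l)) μ (-r)) :=
        norm_complexMGF_sub_one_le hr0 (integrable_exp_mul_blockSum h.meas hf r j _)
          (integrable_exp_mul_blockSum h.meas hf (-r) j _) (by linarith)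
    _ ≤ 2 * ‖z‖ / r * (2 + 2) := by gcongr
    _ ≤ 1 / 2 := by rw [div_mul_eq_mul_div, div_le_iff₀ hr0]; linarith

end MartingaleBounds

section BlockLogarithm

open Metric

/-- `Λ` is a holomorphic logarithm of `Z` on the disc of radius `r` about `0`, normalized by
`Λ 0 = 0` and bounded by `M`. -/
structure IsBddLog (Λ Z : ℂ → ℂ) (r M : ℝ) : Prop where
  differentiableOn : DifferentiableOn ℂ Λ (ball 0 r)
  apply_zero : Λ 0 = 0
  exp_eq : ∀ z ∈ ball 0 r, Complex.exp (Λ z) = Z z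
  norm_le : ∀ z ∈ ball 0 r, ‖Λ z‖ ≤ M

namespace IsBddLog

variable {Λ Λ₁ Λ₂ Z Z₁ Z₂ : ℂ → ℂ} {r r' M M₁ M₂ v : ℝ}

lemma congr (h : IsBddLog Λ Z₁ r M) (heq : EqOn Z₁ Z₂ (ball 0 r)) : IsBddLog Λ Z₂ r M :=
  { h with exp_eq := fun z hz ↦ (h.exp_eq z hz).trans (heq hz) }

lemma mono (h : IsBddLog Λ Z r M₁) (hr : r' ≤ r) (hM : M₁ ≤ M₂) : IsBddLog Λ Z r' M₂ where
  differentiableOn := h.differentiableOn.mono (ball_subset_ball hr)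
  apply_zero := h.apply_zero
  exp_eq z hz := h.exp_eq z (ball_subset_ball hr hz)
  norm_le z hz := (h.norm_le z (ball_subset_ball hr hz)).trans hM

lemma mul (h₁ : IsBddLog Λ₁ Z₁ r M₁) (h₂ : IsBddLog Λ₂ Z₂ r M₂) :
    IsBddLog (Λ₁ + Λ₂) (Z₁ * Z₂) r (M₁ + M₂) where
  differentiableOn := h₁.differentiableOn.add h₂.differentiableOn
  apply_zero := by simp [h₁.apply_zero, h₂.apply_zero]
  exp_eq z hz := by
    rw [Pi.add_apply, Complex.exp_add, h₁.exp_eq z hz, h₂.exp_eq z hz, Pi.mul_apply]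
  norm_le z hz := norm_add_le_of_le (h₁.norm_le z hz) (h₂.norm_le z hz)

lemma clog (hd : DifferentiableOn ℂ Z (ball 0 r)) (hZ0 : Z 0 = 1)
    (hZ : ∀ z ∈ ball 0 r, ‖Z z - 1‖ ≤ 1 / 2) : IsBddLog (fun z ↦ Complex.log (Z z)) Z r 1 where
  differentiableOn := hd.clog fun z hz ↦ mem_slitPlane_of_norm_sub_one_le (hZ z hz)
  apply_zero := by simp [hZ0]
  exp_eq z hz :=
    Complex.exp_log (Complex.slitPlane_ne_zero (mem_slitPlane_of_norm_sub_one_le (hZ z hz)))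
  norm_le z hz := norm_log_le_one_of_norm_sub_one_le (hZ z hz)

lemma hasQuadraticGerm (h : IsBddLog Λ Z r M) (hr : 0 < r)
    (hZ : HasQuadraticGerm (fun z ↦ Z z - 1) v) : HasQuadraticGerm Λ v := by
  have hcont := (h.differentiableOn.differentiableAt (ball_mem_nhds 0 hr)).continuousAt.tendsto
  rw [h.apply_zero] at hcont
  exact hZ.of_exp_eq hcont (eventually_of_mem (ball_mem_nhds 0 hr) h.exp_eq)

end IsBddLog

/-- A family of holomorphic functions `Z a b`, with variances `V a b` read off from the quadratic
germ at `0`, which is multiplicative in the block `[a, b)` up to a relative error `1/2` on the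
disc of radius `r` about `0`. -/
structure IsAlmostMultiplicative (Z : ℕ → ℕ → ℂ → ℂ) (V : ℕ → ℕ → ℝ) (r : ℝ) : Prop where
  pos : 0 < r
  differentiableOn (a b : ℕ) : DifferentiableOn ℂ (Z a b) (ball 0 r)
  hasQuadraticGerm (a b : ℕ) : HasQuadraticGerm (fun z ↦ Z a b z - 1) (V a b)
  ne_zero {a b : ℕ} : a ≤ b → ∀ z ∈ ball 0 r, Z a b z ≠ 0
  norm_sub_mul_le {a b c : ℕ} : a ≤ b → b ≤ c → ∀ z ∈ ball 0 r,
    ‖Z a c z - Z a b z * Z b c z‖ ≤ 1 / 2 * ‖Z a b z * Z b c z‖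

namespace IsAlmostMultiplicative

variable {Z : ℕ → ℕ → ℂ → ℂ} {V : ℕ → ℕ → ℝ} {r s B : ℝ} {a b c : ℕ}

lemma apply_zero (hZ : IsAlmostMultiplicative Z V r) (a b : ℕ) : Z a b 0 = 1 :=
  sub_eq_zero.1 (hZ.hasQuadraticGerm a b).apply_zero

lemma exists_isBddLog_div (hZ : IsAlmostMultiplicative Z V r) (hab : a ≤ b) (hbc : b ≤ c) :
    ∃ Λ, IsBddLog Λ (fun z ↦ Z a c z * (Z a b z * Z b c z)⁻¹) r 1 := by
  have hne (z : ℂ) (hz : z ∈ ball 0 r) : Z a b z * Z b c z ≠ 0 :=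
    mul_ne_zero (hZ.ne_zero hab z hz) (hZ.ne_zero hbc z hz)
  refine ⟨_, IsBddLog.clog ((hZ.differentiableOn a c).mul
    (((hZ.differentiableOn a b).mul (hZ.differentiableOn b c)).fun_inv hne))
    (by simp [hZ.apply_zero]) fun z hz ↦ ?_⟩
  have hdiv : Z a c z * (Z a b z * Z b c z)⁻¹ - 1
      = (Z a c z - Z a b z * Z b c z) / (Z a b z * Z b c z) := by
    rw [sub_div, div_self (hne z hz), div_eq_mul_inv]
  rw [hdiv, norm_div, div_le_iff₀ (norm_pos_iff.2 (hne z hz))]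
  exact hZ.norm_sub_mul_le hab hbc z hz

lemma abs_sub_add_le (hZ : IsAlmostMultiplicative Z V r) (hab : a ≤ b) (hbc : b ≤ c) :
    |V a c - (V a b + V b c)| ≤ 2 / r ^ 2 := by
  obtain ⟨Λ, hΛ⟩ := hZ.exists_isBddLog_div hab hbc
  have hgerm := hΛ.hasQuadraticGerm hZ.pos ((hZ.hasQuadraticGerm a c).mul
    ((hZ.hasQuadraticGerm a b).mul (hZ.hasQuadraticGerm b c)).inv)
  have hdefect := hgerm.abs_div_two_le hZ.pos hΛ.differentiableOn hΛ.norm_le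
  rw [← sub_eq_add_neg, div_le_iff₀ two_pos] at hdefect
  exact hdefect.trans_eq (by ring)

lemma exists_block (hZ : IsAlmostMultiplicative Z V r) (hB : ∀ a, V a (a + 1) ≤ B) (hab : a ≤ b)
    (hV : 1 + 2 / r ^ 2 ≤ V a b) :
    ∃ c, a < c ∧ c ≤ b ∧ 1 + 2 / r ^ 2 ≤ V a c ∧ V a c ≤ 1 + B + 4 / r ^ 2 := by
  classical
  have hex : ∃ c, a ≤ c ∧ 1 + 2 / r ^ 2 ≤ V a c := ⟨b, hab, hV⟩
  obtain ⟨hac, hVc⟩ := Nat.find_spec hex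
  have hself := (abs_le.1 (hZ.abs_sub_add_le le_rfl (le_refl a))).1
  have hne : a ≠ Nat.find hex := fun heq ↦ by
    rw [← heq] at hVc
    linarith
  obtain ⟨p, hp⟩ := Nat.exists_eq_add_of_lt (lt_of_le_of_ne hac hne)
  have hlt : V a (a + p) < 1 + 2 / r ^ 2 := not_le.1 fun hle ↦
    Nat.find_min hex (m := a + p) (by lia) ⟨by lia, hle⟩
  refine ⟨_, lt_of_le_of_ne hac hne, Nat.find_min' hex ⟨hab, hV⟩, hVc, ?_⟩
  rw [hp]
  have hadd := (abs_le.1 (hZ.abs_sub_add_le (Nat.le_add_right a p) (Nat.le_succ (a + p)))).2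
  have := hB (a + p)
  have : 4 / r ^ 2 = 2 / r ^ 2 + 2 / r ^ 2 := by ring
  linarith

/-- Peel off a block whose variance is bounded, but large enough to pay for the logarithm of the
block and of the multiplicative error. -/
theorem exists_isBddLog (hZ : IsAlmostMultiplicative Z V r) (hV : ∀ a b, 0 ≤ V a b)
    (hB : ∀ a, V a (a + 1) ≤ B) (hsr : s ≤ r)
    (hs : ∀ {a b}, a ≤ b → V a b ≤ 1 + B + 4 / r ^ 2 → ∀ z ∈ ball 0 s, ‖Z a b z - 1‖ ≤ 1 / 2)
    (hab : a ≤ b) : ∃ Λ, IsBddLog Λ (Z a b) s (2 * (V a b + 1)) := by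
  have hlog {a b : ℕ} (hab : a ≤ b) (hVab : V a b ≤ 1 + B + 4 / r ^ 2) :
      ∃ Λ, IsBddLog Λ (Z a b) s 1 :=
    ⟨_, .clog ((hZ.differentiableOn a b).mono (ball_subset_ball hsr)) (hZ.apply_zero a b)
      (hs hab hVab)⟩
  induction hl : b - a using Nat.strong_induction_on generalizing a with
  | _ l ih =>
    by_cases hVab : 1 + 2 / r ^ 2 ≤ V a b
    · obtain ⟨c, hac, hcb, hVac, hVac'⟩ := hZ.exists_block hB hab hVab
      obtain ⟨Λ₁, h₁⟩ := hlog hac.le hVac'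
      obtain ⟨Λ₂, h₂⟩ := ih (b - c) (by lia) hcb rfl
      obtain ⟨Λ₃, h₃⟩ := hZ.exists_isBddLog_div hac.le hcb
      have hdefect := (abs_le.1 (hZ.abs_sub_add_le hac.le hcb)).1
      refine ⟨_, (((h₁.mul h₂).mul (h₃.mono hsr le_rfl)).congr fun z hz ↦ ?_).mono le_rfl
        (by linarith)⟩
      have hzr := ball_subset_ball hsr hz
      have hne := mul_ne_zero (hZ.ne_zero hac.le z hzr) (hZ.ne_zero hcb z hzr)
      rw [Pi.mul_apply, Pi.mul_apply, mul_left_comm, mul_inv_cancel₀ hne, mul_one]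
    · have : 4 / r ^ 2 = 2 / r ^ 2 + 2 / r ^ 2 := by ring
      have : 0 ≤ 2 / r ^ 2 := by positivity
      obtain ⟨Λ, hΛ⟩ := hlog hab (by linarith [(hV 0 1).trans (hB 0)])
      exact ⟨Λ, hΛ.mono le_rfl (by linarith [hV a b])⟩

end IsAlmostMultiplicative

variable {μ : Measure Ω} {X : ∀ j, Ω → 𝒳 j} {κ : ∀ j n, Kernel (𝒳 j) (𝒳 (j + n))} {n₀ : ℕ}
  {γ : ℝ} {f : ∀ j, 𝒳 j → ℝ}

lemma exists_isContractive_cexp {ε : ℝ} (hf : IsBddMeas f) (n₀ : ℕ) (hγ : 0 < γ) (hε : 0 < ε)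
    (hεγ : ε ≤ γ / 4) :
    ∃ r > 0, ∃ B, ∀ z : ℂ, ‖z‖ < r →
      IsContractive (fun j x ↦ Complex.exp (z * f j x)) n₀ γ B ε := by
  obtain ⟨C, hC, hfC⟩ := hf.exists_norm_le
  have hcont : Continuous fun r : ℝ ↦ 2 * (Real.exp (r * C) ^ n₀ - 1) := by fun_prop
  have hsmall : ∀ᶠ r in 𝓝[>] (0 : ℝ), 2 * (Real.exp (r * C) ^ n₀ - 1) ≤ 3 / 4 * ε * γ :=
    (hcont.tendsto 0).mono_left nhdsWithin_le_nhds |>.eventually_le_const <| by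
      simpa using by positivity
  obtain ⟨r, hr, hr0⟩ := (hsmall.and self_mem_nhdsWithin).exists
  refine ⟨r, hr0, Real.exp (r * C), fun z hz ↦ ⟨⟨fun j ↦ ?_, fun j x ↦ ?_⟩,
    Real.one_le_exp (mul_nonneg (le_of_lt hr0) hC), hε, hεγ, hr⟩⟩
  · have := hf.measurable j
    fun_prop
  · have hexp := Complex.norm_exp_sub_sum_le_exp_norm_sub_sum (z * f j x) 1
    simp only [Finset.range_one, Finset.sum_singleton, pow_zero, Nat.factorial_zero, Nat.cast_one,
      div_one] at hexp
    refine hexp.trans (sub_le_sub_right (Real.exp_le_exp.2 ?_) 1)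
    rw [norm_mul, Complex.norm_real]
    gcongr
    exact hfC j x

lemma complexMGF_blockSum {𝒴 : ℕ → Type*} (f : ∀ j, 𝒴 j → ℝ) (X : ∀ j, Ω → 𝒴 j) (a b : ℕ)
    (z : ℂ) :
    complexMGF (blockSum f X a b) μ z = meanProd μ X (fun j x ↦ Complex.exp (z * f j x)) a b := by
  simp only [complexMGF, blockSum, meanProd, Complex.ofReal_sum, Finset.mul_sum, Complex.exp_sum]

lemma integral_blockSum_eq_zero [IsFiniteMeasure μ] (hX : ∀ j, Measurable (X j))
    (hf : IsBddMeas f) (hmean : ∀ j, ∫ ω, f j (X j ω) ∂μ = 0) (a b : ℕ) :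
    ∫ ω, blockSum f X a b ω ∂μ = 0 := by
  simp only [blockSum]
  rw [integral_finsetSum _ fun i _ ↦ hf.integrable_comp hX i μ]
  exact Finset.sum_eq_zero fun i _ ↦ hmean i

variable [IsProbabilityMeasure μ]

lemma IsDoeblin.exists_isAlmostMultiplicative (hD : IsDoeblin κ n₀ γ) (h : IsInhomMarkov μ X κ)
    (hf : IsBddMeas f) (hmean : ∀ j, ∫ ω, f j (X j ω) ∂μ = 0) :
    ∃ r, IsAlmostMultiplicative (fun a b ↦ complexMGF (blockSum f X a b) μ)
      (fun a b ↦ ∫ ω, blockSum f X a b ω ^ 2 ∂μ) r := by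
  have hγ := hD.mem_Ioo.1
  obtain ⟨r, hr, B, hw⟩ := exists_isContractive_cexp hf n₀ hγ (ε := γ / 68) (by positivity)
    (by linarith)
  obtain ⟨C, -, hfC⟩ := hf.exists_norm_le
  have hm (a b : ℕ) : AEMeasurable (blockSum f X a b) μ :=
    (measurable_blockSum h.meas hf.measurable a b).aemeasurable
  have hbdd (a b : ℕ) : ∀ᵐ ω ∂μ, |blockSum f X a b ω| ≤ (b - a : ℕ) * C :=
    ae_of_all _ (abs_blockSum_le hfC a b)
  refine ⟨r, hr, fun a b ↦ (differentiable_complexMGF_of_bounded (hm a b)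
    (hbdd a b)).differentiableOn, fun a b ↦ hasQuadraticGerm_complexMGF_sub_one (hm a b) (hbdd a b)
    (integral_blockSum_eq_zero h.meas hf hmean a b), fun {a b} hab z hz ↦ ?_,
    fun {a b c} hab hbc z hz ↦ ?_⟩
  · obtain ⟨l, rfl⟩ := Nat.exists_eq_add_of_le hab
    rw [complexMGF_blockSum]
    exact meanProd_ne_zero hD h (hw z (mem_ball_zero_iff.1 hz)) a l
  · obtain ⟨l₁, rfl⟩ := Nat.exists_eq_add_of_le hab
    obtain ⟨l₂, rfl⟩ := Nat.exists_eq_add_of_le hbc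
    simp only [complexMGF_blockSum]
    exact norm_meanProd_sub_mul_le hD h (hw z (mem_ball_zero_iff.1 hz)) a l₁ l₂

lemma integral_sq_blockSum_succ_le {𝒴 : ℕ → Type*} {f : ∀ j, 𝒴 j → ℝ} {X : ∀ j, Ω → 𝒴 j} {C : ℝ}
    (hfC : ∀ j x, |f j x| ≤ C) (a : ℕ) :
    ∫ ω, blockSum f X a (a + 1) ω ^ 2 ∂μ ≤ C ^ 2 := by
  refine (integral_mono_of_nonneg (ae_of_all _ fun _ ↦ sq_nonneg _) (integrable_const (C ^ 2))
    (ae_of_all _ fun ω ↦ ?_)).trans_eq (by simp)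
  simpa [blockSum] using sq_le_sq' (neg_le_of_abs_le (hfC a (X a ω))) (le_of_abs_le (hfC a (X a ω)))

theorem IsDoeblin.exists_isBddLog_complexMGF_blockSum (hD : IsDoeblin κ n₀ γ)
    (h : IsInhomMarkov μ X κ) (hf : IsBddMeas f) (hmean : ∀ j, ∫ ω, f j (X j ω) ∂μ = 0) :
    ∃ r > 0, ∀ {a b}, a ≤ b → ∃ Λ, IsBddLog Λ (complexMGF (blockSum f X a b) μ) r
      (2 * (∫ ω, blockSum f X a b ω ^ 2 ∂μ + 1)) := by
  obtain ⟨C, -, hfC⟩ := hf.exists_norm_le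
  obtain ⟨r, hr⟩ := hD.exists_isAlmostMultiplicative h hf hmean
  obtain ⟨s, hs0, hs⟩ := hD.exists_norm_complexMGF_blockSum_sub_one_le h hf hmean
    (A := 1 + C ^ 2 + 4 / r ^ 2) (by positivity)
  refine ⟨min r s, lt_min hr.pos hs0, fun hab ↦ hr.exists_isBddLog
    (fun a b ↦ integral_nonneg fun ω ↦ sq_nonneg _) (integral_sq_blockSum_succ_le hfC)
    (min_le_left r s) (fun {a b} hab hV z hz ↦ ?_) hab⟩
  obtain ⟨l, rfl⟩ := Nat.exists_eq_add_of_le hab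
  exact hs a l hV z ((mem_ball_zero_iff.1 hz).trans_le (min_le_right r s))

end BlockLogarithm

section NormalApproximation

open Metric

variable {a r σ : ℝ}

lemma cdf_le_mgf_mul_exp {P : Measure ℝ} [IsProbabilityMeasure P] (ha : 0 ≤ a)
    (hP : Integrable (fun x ↦ Real.exp (-a * x)) P) (t : ℝ) :
    cdf P t ≤ mgf id P (-a) * Real.exp (a * t) := by
  have hchernoff := measure_le_le_exp_mul_mgf (X := id) t (neg_nonpos.2 ha) hP
  rw [neg_neg, mul_comm] at hchernoff
  exact (cdf_eq_real P t).trans_le hchernoff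

lemma one_sub_cdf_le_mgf_mul_exp {P : Measure ℝ} [IsProbabilityMeasure P] (ha : 0 ≤ a)
    (hP : Integrable (fun x ↦ Real.exp (a * x)) P) (t : ℝ) :
    1 - cdf P t ≤ mgf id P a * Real.exp (-(a * t)) := by
  have hchernoff := measure_ge_le_exp_mul_mgf (X := id) t ha hP
  rw [neg_mul, mul_comm] at hchernoff
  rw [cdf_eq_real, ← probReal_compl_eq_one_sub measurableSet_Iic, compl_Iic]
  exact (measureReal_mono Ioi_subset_Ici_self).trans hchernoff

lemma exists_abs_cdf_sub_cdf_le_mul_exp {P Q : Measure ℝ} [IsProbabilityMeasure P]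
    [IsProbabilityMeasure Q] (ha : 0 ≤ a) (hP : ∀ θ, Integrable (fun x ↦ Real.exp (θ * x)) P)
    (hQ : ∀ θ, Integrable (fun x ↦ Real.exp (θ * x)) Q) :
    ∃ D, ∀ t, |cdf P t - cdf Q t| ≤ D * Real.exp (-(a * |t|)) := by
  refine ⟨max (max (mgf id P a) (mgf id Q a)) (max (mgf id P (-a)) (mgf id Q (-a))), fun t ↦ ?_⟩
  rcases le_total 0 t with ht | ht
  · rw [abs_of_nonneg ht, abs_sub_comm, ← sub_sub_sub_cancel_left (cdf P t) (cdf Q t) 1]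
    refine abs_sub_le_of_nonneg_of_le (sub_nonneg.2 (cdf_le_one P t))
      ((one_sub_cdf_le_mgf_mul_exp ha (hP a) t).trans ?_) (sub_nonneg.2 (cdf_le_one Q t))
      ((one_sub_cdf_le_mgf_mul_exp ha (hQ a) t).trans ?_)
    all_goals gcongr; simp
  · rw [abs_of_nonpos ht, mul_neg, neg_neg]
    refine abs_sub_le_of_nonneg_of_le (cdf_nonneg P t)
      ((cdf_le_mgf_mul_exp ha (hP (-a)) t).trans ?_) (cdf_nonneg Q t)
      ((cdf_le_mgf_mul_exp ha (hQ (-a)) t).trans ?_)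
    all_goals gcongr; simp

lemma exists_abs_cdf_sub_gaussian_le_div (ha : 0 < a) {M : ℝ} (hM : 0 < M) (hr : 0 < r) :
    ∃ D, ∃ σ₀ > 0, ∀ (P : Measure ℝ) [IsProbabilityMeasure P] (E : ℂ → ℂ) (σ : ℝ), σ₀ ≤ σ →
      IsNearGaussian P E (M / σ) (r * σ) →
      ∀ t, |cdf P t - cdf (gaussianReal 0 1) t| ≤ D / σ * Real.exp (-(a * |t|)) := by
  obtain ⟨D, hD⟩ := exists_abs_cdf_sub_gaussian_le ha
  set c := min (1 / (16 * M)) (r / 2)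
  have hc : 0 < c := lt_min (by positivity) (by positivity)
  refine ⟨D * (M + 1 / c), max M (4 * (a + 1) / r), lt_max_of_lt_left hM,
    fun P _ E σ hσ hE t ↦ ?_⟩
  have hσM : M ≤ σ := (le_max_left _ _).trans hσ
  have hσ0 : 0 < σ := hM.trans_le hσM
  have hσr : 4 * (a + 1) ≤ σ * r := (div_le_iff₀ hr).1 ((le_max_right _ _).trans hσ)
  have hcM : c * (16 * M) ≤ 1 := (le_div_iff₀ (by positivity)).1 (min_le_left _ _)
  have hcr : c * σ ≤ r / 2 * σ := by gcongr; exact min_le_right _ _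
  have h16 : 16 * (M / σ) * (c * σ) = c * (16 * M) := by field_simp
  refine (hD P E (M / σ) (c * σ) (r * σ) hE (by positivity) ((div_le_one hσ0).2 hσM)
    (by positivity) (h16.trans_le hcM) (by linarith) t).trans_eq ?_
  field_simp

lemma IsBddLog.isNearGaussian_map_div {μ : Measure Ω} {Y : Ω → ℝ} {Λ : ℂ → ℂ} {M : ℝ}
    (hΛ : IsBddLog Λ (complexMGF Y μ) r M) (hgerm : HasQuadraticGerm Λ (σ ^ 2)) (hr : 0 < r)
    (hσ : 0 < σ) (hY : AEMeasurable Y μ) :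
    IsNearGaussian (μ.map fun ω ↦ Y ω / σ) (fun w ↦ Λ (w / σ) - w ^ 2 / 2)
      (2 * M / (r * σ) ^ 3) (r * σ) := by
  have hσ' : (σ : ℂ) ≠ 0 := by exact_mod_cast hσ.ne'
  have hnorm (w : ℂ) : ‖w / σ‖ = ‖w‖ / σ := by
    rw [norm_div, Complex.norm_real, Real.norm_of_nonneg hσ.le]
  have hmem (w : ℂ) (hw : w ∈ ball 0 (r * σ)) : w / σ ∈ ball (0 : ℂ) r := by
    rwa [mem_ball_zero_iff, hnorm, div_lt_iff₀ hσ, ← mem_ball_zero_iff]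
  refine ⟨(hΛ.differentiableOn.comp (by fun_prop) hmem).sub (by fun_prop), fun w hw ↦ ?_,
    fun w hw ↦ ?_⟩
  · have hcube := hgerm.norm_sub_le_mul_cube hr hΛ.differentiableOn hΛ.norm_le (hmem w hw)
    rw [hnorm, div_div, mul_comm σ r, Complex.ofReal_pow, div_pow w,
      mul_div_cancel₀ _ (pow_ne_zero 2 hσ')] at hcube
    exact hcube.trans_eq (by ring)
  · rw [complexMGF_id_map (hY.div_const σ), add_sub_cancel, hΛ.exp_eq _ (hmem w hw)]
    simp only [complexMGF]
    refine integral_congr_ae (ae_of_all _ fun ω ↦ congrArg Complex.exp ?_)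
    push_cast
    ring

variable {μ : Measure Ω} [IsProbabilityMeasure μ] {X : ∀ j, Ω → 𝒳 j}
  {κ : ∀ j n, Kernel (𝒳 j) (𝒳 (j + n))} {n₀ : ℕ} {γ : ℝ} {f : ∀ j, 𝒳 j → ℝ}

theorem IsDoeblin.exists_abs_cdf_blockSum_sub_gaussian_le (hD : IsDoeblin κ n₀ γ)
    (h : IsInhomMarkov μ X κ) (hf : IsBddMeas f) (hmean : ∀ j, ∫ ω, f j (X j ω) ∂μ = 0)
    (ha : 0 < a) :
    ∃ D, ∃ σ₀ > 0, ∀ {b c : ℕ} {σ : ℝ}, b ≤ c → σ₀ ≤ σ → ∫ ω, blockSum f X b c ω ^ 2 ∂μ = σ ^ 2 →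
      ∀ t, |cdf (μ.map fun ω ↦ blockSum f X b c ω / σ) t - cdf (gaussianReal 0 1) t|
        ≤ D / σ * Real.exp (-(a * |t|)) := by
  obtain ⟨C, -, hfC⟩ := hf.exists_norm_le
  obtain ⟨r, hr, hlog⟩ := hD.exists_isBddLog_complexMGF_blockSum h hf hmean
  obtain ⟨D, σ₀, -, hbound⟩ := exists_abs_cdf_sub_gaussian_le_div ha (M := 8 / r ^ 3)
    (by positivity) hr
  refine ⟨D, max σ₀ 1, lt_max_of_lt_right one_pos, fun {b c σ} hbc hσ hV t ↦ ?_⟩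
  have hσ1 : 1 ≤ σ := (le_max_right _ _).trans hσ
  have hσ0 : 0 < σ := one_pos.trans_le hσ1
  have hY := (measurable_blockSum h.meas hf.measurable b c).aemeasurable (μ := μ)
  have := Measure.isProbabilityMeasure_map (hY.div_const σ)
  obtain ⟨Λ, hΛ⟩ := hlog hbc
  rw [hV] at hΛ
  have hgerm : HasQuadraticGerm Λ (σ ^ 2) := hV ▸ hΛ.hasQuadraticGerm hr
    (hasQuadraticGerm_complexMGF_sub_one hY (ae_of_all _ (abs_blockSum_le hfC b c))
      (integral_blockSum_eq_zero h.meas hf hmean b c))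
  refine hbound _ _ σ ((le_max_left _ _).trans hσ)
    ((hΛ.isNearGaussian_map_div hgerm hr hσ0 hY).mono ?_) t
  calc 2 * (2 * (σ ^ 2 + 1)) / (r * σ) ^ 3
      ≤ 2 * (2 * (σ ^ 2 + σ ^ 2)) / (r * σ) ^ 3 := by gcongr; exact one_le_pow₀ hσ1
    _ = 8 / r ^ 3 / σ := by field_simp; norm_num

lemma exists_abs_cdf_blockSum_sub_gaussian_le_mul_exp (hX : ∀ j, Measurable (X j))
    (hf : IsBddMeas f) (ha : 0 ≤ a) (b c : ℕ) (σ : ℝ) :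
    ∃ D, ∀ t, |cdf (μ.map fun ω ↦ blockSum f X b c ω / σ) t - cdf (gaussianReal 0 1) t|
      ≤ D * Real.exp (-(a * |t|)) := by
  have hY := (measurable_blockSum hX hf.measurable b c).aemeasurable (μ := μ).div_const σ
  have := Measure.isProbabilityMeasure_map hY
  refine exists_abs_cdf_sub_cdf_le_mul_exp ha (fun θ ↦ ?_) integrable_exp_mul_gaussianReal
  rw [integrable_map_measure (by fun_prop) hY]
  exact (integrable_exp_mul_blockSum hX hf (θ / σ) b c).congr
    (ae_of_all _ fun ω ↦ congrArg Real.exp (div_mul_comm θ σ _ |>.trans (mul_comm _ _)))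

end NormalApproximation

section Reduction

variable {μ : Measure Ω} [IsProbabilityMeasure μ] {X : ∀ j, Ω → 𝒳 j}
  {κ : ∀ j n, Kernel (𝒳 j) (𝒳 (j + n))} {n₀ : ℕ} {γ : ℝ} {f : ∀ j, 𝒳 j → ℝ}

lemma exists_forall_le_of_eventually {ι : Type*} {u : ℕ → ι → ℝ} {K : ℝ}
    (hev : ∀ᶠ n in atTop, ∀ i, u n i ≤ K) (hbdd : ∀ n, ∃ A, ∀ i, u n i ≤ A) :
    ∃ A, ∀ n i, u n i ≤ A := by
  choose A hA using hbdd
  obtain ⟨N, hN⟩ := eventually_atTop.1 hev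
  obtain ⟨B, hB⟩ := ((Finset.range N).image A).bddAbove
  refine ⟨max K B, fun n i ↦ ?_⟩
  rcases le_or_gt N n with hn | hn
  · exact (hN n hn i).trans (le_max_left _ _)
  · exact (hA n i).trans ((hB (Finset.mem_image_of_mem A (Finset.mem_range.2 hn))).trans
      (le_max_right _ _))

theorem IsDoeblin.exists_mul_exp_mul_abs_cdf_sub_gaussian_le (hD : IsDoeblin κ n₀ γ)
    (h : IsInhomMarkov μ X κ) (hf : IsBddMeas f) (hmean : ∀ j, ∫ ω, f j (X j ω) ∂μ = 0)
    {s : ℕ → ℝ} (hs : Tendsto s atTop atTop) (hs0 : ∀ n, 0 ≤ s n)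
    (hvar : ∀ n, ∫ ω, blockSum f X 0 n ω ^ 2 ∂μ = s n ^ 2) {a : ℝ} (ha : 0 < a) :
    ∃ K, ∀ n t, s n * (Real.exp (a * |t|) *
      |cdf (μ.map fun ω ↦ blockSum f X 0 n ω / s n) t - cdf (gaussianReal 0 1) t|) ≤ K := by
  obtain ⟨D, σ₀, hσ₀, hbound⟩ := hD.exists_abs_cdf_blockSum_sub_gaussian_le h hf hmean ha
  refine exists_forall_le_of_eventually (K := D) ?_ fun n ↦ ?_
  · filter_upwards [hs.eventually_ge_atTop σ₀] with n hn t
    have : 0 < s n := hσ₀.trans_le hn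
    calc _ ≤ s n * (Real.exp (a * |t|) * (D / s n * Real.exp (-(a * |t|)))) := by
          gcongr
          exact hbound n.zero_le hn (hvar n) t
      _ = D := by rw [Real.exp_neg]; field_simp
  · obtain ⟨A, hA⟩ := exists_abs_cdf_blockSum_sub_gaussian_le_mul_exp h.meas hf ha.le 0 n (s n)
      (μ := μ)
    refine ⟨s n * A, fun t ↦ mul_le_mul_of_nonneg_left ?_ (hs0 n)⟩
    calc _ ≤ Real.exp (a * |t|) * (A * Real.exp (-(a * |t|))) := by gcongr; exact hA t
      _ = A := by rw [Real.exp_neg]; field_simp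

/-- The functions `f j`, truncated at level `A` and then centred along the chain. -/
def centredTruncation (μ : Measure Ω) (X : ∀ j, Ω → 𝒳 j) (f : ∀ j, 𝒳 j → ℝ) (A : ℝ) (j : ℕ)
    (x : 𝒳 j) : ℝ :=
  truncation (f j) A x - ∫ ω, truncation (f j) A (X j ω) ∂μ

section CentredTruncation

variable {A : ℝ}

lemma measurable_truncation {α : Type*} [MeasurableSpace α] {g : α → ℝ} (hg : Measurable g)
    (A : ℝ) : Measurable (truncation g A) :=
  (measurable_id.indicator measurableSet_Ioc).comp hg

lemma isBddMeas_centredTruncation (hf : ∀ j, Measurable (f j)) :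
    IsBddMeas (centredTruncation μ X f A) := by
  refine ⟨fun j ↦ (measurable_truncation (hf j) A).sub_const _, |A| + |A|, by positivity,
    fun j x ↦ norm_sub_le_of_le (abs_truncation_le_bound _ _ _) ?_⟩
  simpa using norm_integral_le_of_norm_le_const (μ := μ)
    (f := fun ω ↦ truncation (f j) A (X j ω)) (ae_of_all _ fun ω ↦ abs_truncation_le_bound _ _ _)

lemma integral_centredTruncation (hX : ∀ j, Measurable (X j)) (hf : ∀ j, Measurable (f j))
    (j : ℕ) : ∫ ω, centredTruncation μ X f A j (X j ω) ∂μ = 0 := by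
  have hint : Integrable (fun ω ↦ truncation (f j) A (X j ω)) μ :=
    .of_bound ((measurable_truncation (hf j) A).comp (hX j)).aestronglyMeasurable |A|
      (ae_of_all _ fun ω ↦ abs_truncation_le_bound _ _ _)
  simp [centredTruncation, integral_sub hint]

lemma blockSum_sub_integral_ae_eq (hX : ∀ j, Measurable (X j)) (hf : ∀ j, Measurable (f j))
    (hA : ∀ j, ∀ᵐ ω ∂μ, |f j (X j ω)| < A) (a b : ℕ) :
    (fun ω ↦ blockSum f X a b ω - ∫ ω', blockSum f X a b ω' ∂μ)
      =ᵐ[μ] blockSum (centredTruncation μ X f A) X a b := by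
  have htrunc (j : ℕ) : (fun ω ↦ truncation (f j) A (X j ω)) =ᵐ[μ] fun ω ↦ f j (X j ω) := by
    filter_upwards [hA j] with ω hω using truncation_eq_self hω
  have hint (j : ℕ) : Integrable (fun ω ↦ f j (X j ω)) μ :=
    .of_bound ((hf j).comp (hX j)).aestronglyMeasurable A ((hA j).mono fun ω hω ↦ hω.le)
  filter_upwards [ae_all_iff.2 htrunc] with ω hω
  simp only [blockSum, centredTruncation, hω, integral_congr_ae (htrunc _)]
  rw [integral_finsetSum _ fun j _ ↦ hint j, Finset.sum_sub_distrib]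

lemma integral_sq_blockSum_centredTruncation (hX : ∀ j, Measurable (X j))
    (hf : ∀ j, Measurable (f j)) (hA : ∀ j, ∀ᵐ ω ∂μ, |f j (X j ω)| < A) (a b : ℕ) :
    ∫ ω, blockSum (centredTruncation μ X f A) X a b ω ^ 2 ∂μ = Var[blockSum f X a b; μ] := by
  rw [variance_eq_integral (measurable_blockSum hX hf a b).aemeasurable]
  exact integral_congr_ae ((blockSum_sub_integral_ae_eq hX hf hA a b).symm.fun_comp (· ^ 2))

end CentredTruncation

lemma measure_le_mul_eq_cdf_map_div {Y Z : Ω → ℝ} (hYZ : Y =ᵐ[μ] Z) (hZ : AEMeasurable Z μ)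
    {σ : ℝ} (hσ : 0 < σ) (t : ℝ) :
    (μ {ω | Y ω ≤ t * σ}).toReal = cdf (μ.map fun ω ↦ Z ω / σ) t := by
  have := Measure.isProbabilityMeasure_map (hZ.div_const σ)
  rw [cdf_eq_real, map_measureReal_apply_of_aemeasurable (hZ.div_const σ) measurableSet_Iic,
    measureReal_def]
  refine congrArg ENNReal.toReal (measure_congr ?_)
  filter_upwards [hYZ] with ω hω
  exact propext ((div_le_iff₀ hσ).trans (by rw [← hω]; rfl)).symm

lemma exists_one_add_rpow_le_mul_exp {s : ℝ} (hs : 0 ≤ s) :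
    ∃ W ≥ 0, ∀ x ≥ 0, 1 + x ^ s ≤ W * Real.exp x := by
  refine ⟨2 + ⌈s⌉₊.factorial, by positivity, fun x hx ↦ ?_⟩
  have hpow : x ^ s ≤ 1 + x ^ ⌈s⌉₊ := by
    rcases le_total x 1 with h | h
    · exact (Real.rpow_le_one hx h hs).trans (le_add_of_nonneg_right (by positivity))
    · rw [← Real.rpow_natCast]
      exact (Real.rpow_le_rpow_of_exponent_le h (Nat.le_ceil s)).trans
        (le_add_of_nonneg_left zero_le_one)
  have hfact : x ^ ⌈s⌉₊ ≤ ⌈s⌉₊.factorial * Real.exp x :=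
    (div_le_iff₀' (by positivity)).1 (Real.pow_div_factorial_le_exp x hx _)
  linarith [Real.one_le_exp hx]

lemma exists_mul_one_add_rpow_mul_le {ι : Type*} {σ : ι → ℝ} {D : ι → ℝ → ℝ} (hσ : ∀ i, 0 ≤ σ i)
    (hD : ∀ i t, 0 ≤ D i t)
    (hexp : ∃ K, ∀ i t, σ i * (Real.exp (1 * |t|) * D i t) ≤ K) {s : ℝ} (hs : 0 ≤ s) :
    ∃ K, ∀ i t, σ i * ((1 + |t| ^ s) * D i t) ≤ K := by
  obtain ⟨K, hK⟩ := hexp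
  obtain ⟨W, hW, hle⟩ := exists_one_add_rpow_le_mul_exp hs
  refine ⟨W * K, fun i t ↦ ?_⟩
  have := hσ i
  have := hD i t
  calc σ i * ((1 + |t| ^ s) * D i t) ≤ σ i * (W * Real.exp |t| * D i t) := by
        gcongr
        exact hle |t| (abs_nonneg t)
    _ = W * (σ i * (Real.exp (1 * |t|) * D i t)) := by rw [one_mul]; ring
    _ ≤ W * K := mul_le_mul_of_nonneg_left (hK i t) hW

end Reduction

end BerryEsseen

open BerryEsseen in
theorem weighted_berry_esseen_doeblin_general
    (μ : Measure Ω) [IsProbabilityMeasure μ]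
    (X : ∀ j, Ω → 𝒳 j) (κ : ∀ j n, Kernel (𝒳 j) (𝒳 (j + n)))
    (hMarkov : IsInhomMarkov μ X κ)
    (n₀ : ℕ) (hn₀ : 0 < n₀) (γ : ℝ) (hγ : γ ∈ Set.Ioo (0 : ℝ) 1)
    (m : ∀ j, Measure (𝒳 j)) (hm : ∀ j, IsProbabilityMeasure (m j))
    (hDoeblin : ∀ j (x : 𝒳 j) (Γ : Set (𝒳 (j + n₀))), MeasurableSet Γ →
      ENNReal.ofReal γ * m (j + n₀) Γ ≤ κ j n₀ x Γ)
    (f : ∀ j, 𝒳 j → ℝ) (hfmeas : ∀ j, Measurable (f j))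
    (C : ℝ) (hbdd : ∀ j, ∀ᵐ ω ∂μ, |f j (X j ω)| ≤ C)
    (S : ℕ → Ω → ℝ) (hS : ∀ n ω, S n ω = ∑ j ∈ Finset.range n, f j (X j ω))
    (σs : ℕ → ℝ) (hσ : ∀ n, σs n = Real.sqrt (variance (S n) μ))
    (hσ_top : Tendsto σs atTop atTop)
    (F : ℕ → ℝ → ℝ)
    (hF : ∀ n t, F n t = (μ {ω | S n ω - ∫ ω', S n ω' ∂μ ≤ t * σs n}).toReal) (a : ℝ) :
    ∃ K : ℝ, ∀ (n : ℕ) (t : ℝ),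
      σs n * (Real.exp (a * |t|) * |F n t - stdNormalCDF t|) ≤ K := by
  have hD : IsDoeblin κ n₀ γ :=
    ⟨hn₀, hγ, m, hm, fun j x ↦ Measure.le_iff.2 fun Γ hΓ ↦ hDoeblin j x Γ hΓ⟩
  have hS' : S = fun n ↦ blockSum f X 0 n := by
    ext n ω
    rw [hS, blockSum, Finset.range_eq_Ico]
  subst hS'
  set g := centredTruncation μ X f (C + 1)
  have hg : IsBddMeas g := isBddMeas_centredTruncation hfmeas
  have hbd (j : ℕ) : ∀ᵐ ω ∂μ, |f j (X j ω)| < C + 1 :=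
    (hbdd j).mono fun ω hω ↦ hω.trans_lt (lt_add_one C)
  have hσ0 (n : ℕ) : 0 ≤ σs n := (hσ n).symm ▸ Real.sqrt_nonneg _
  have hvar (n : ℕ) : ∫ ω, blockSum g X 0 n ω ^ 2 ∂μ = σs n ^ 2 := by
    rw [hσ, Real.sq_sqrt (variance_nonneg _ _)]
    exact integral_sq_blockSum_centredTruncation hMarkov.meas hfmeas hbd 0 n
  obtain ⟨K, hK⟩ := hD.exists_mul_exp_mul_abs_cdf_sub_gaussian_le hMarkov hg
    (integral_centredTruncation hMarkov.meas hfmeas) hσ_top hσ0 hvar (lt_max_of_lt_right one_pos)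
  refine ⟨K, fun n t ↦ le_trans ?_ (hK n t)⟩
  rcases (hσ0 n).eq_or_lt with h | h
  · simp [← h]
  · rw [hF, measure_le_mul_eq_cdf_map_div
      (blockSum_sub_integral_ae_eq hMarkov.meas hfmeas hbd 0 n)
      (measurable_blockSum hMarkov.meas hg.measurable 0 n).aemeasurable h, stdNormalCDF,
      ← measureReal_def, ← cdf_eq_real]
    gcongr
    exact le_max_left a 1

/-- **Theorem (weighted Berry–Esseen bound, Doeblin case).**
If `σ_n → ∞`, then for every `1 ≤ s < ∞` there is a constant `C_s` such that
`sup_t (1 + |t|^s) |F_n(t) − Φ(t)| ≤ C_s σ_n⁻¹` for all `n`, where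
`F_n(t) = ℙ(S_n − E[S_n] ≤ t σ_n)`.  (The bound is stated in the equivalent form
`σ_n (1 + |t|^s) |F_n(t) − Φ(t)| ≤ C_s`.) -/
theorem weighted_berry_esseen_doeblin
    (μ : Measure Ω) [IsProbabilityMeasure μ]
    (X : ∀ j, Ω → 𝒳 j) (κ : ∀ j n, Kernel (𝒳 j) (𝒳 (j + n)))
    (hMarkov : IsInhomMarkov μ X κ)
    (n₀ : ℕ) (hn₀ : 0 < n₀) (γ : ℝ) (hγ : γ ∈ Set.Ioo (0 : ℝ) 1)
    (m : ∀ j, Measure (𝒳 j)) (hm : ∀ j, IsProbabilityMeasure (m j))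
    (hDoeblin : ∀ j (x : 𝒳 j) (Γ : Set (𝒳 (j + n₀))), MeasurableSet Γ →
      ENNReal.ofReal γ * m (j + n₀) Γ ≤ κ j n₀ x Γ)
    (f : ∀ j, 𝒳 j → ℝ) (hfmeas : ∀ j, Measurable (f j))
    (C : ℝ) (hbdd : ∀ j, ∀ᵐ ω ∂μ, |f j (X j ω)| ≤ C)
    (S : ℕ → Ω → ℝ) (hS : ∀ n ω, S n ω = ∑ j ∈ Finset.range n, f j (X j ω))
    (σs : ℕ → ℝ) (hσ : ∀ n, σs n = Real.sqrt (variance (S n) μ))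
    (hσ_top : Tendsto σs atTop atTop)
    (F : ℕ → ℝ → ℝ)
    (hF : ∀ n t, F n t = (μ {ω | S n ω - ∫ ω', S n ω' ∂μ ≤ t * σs n}).toReal) :
    ∀ s : ℝ, 1 ≤ s → ∃ Cs : ℝ, ∀ n : ℕ, ∀ t : ℝ,
      σs n * ((1 + |t| ^ s) * |F n t - stdNormalCDF t|) ≤ Cs := by
  exact fun s hs ↦ BerryEsseen.exists_mul_one_add_rpow_mul_le
    (fun n ↦ (hσ n).symm ▸ Real.sqrt_nonneg _) (fun n t ↦ abs_nonneg _)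
    (weighted_berry_esseen_doeblin_general μ X κ hMarkov n₀ hn₀ γ hγ m hm hDoeblin f hfmeas C hbdd
      S hS σs hσ hσ_top F hF 1) (zero_le_one.trans hs)

end
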